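/- arXiv:1906.05485 — 3 statements merged into one kernel-verified Lean document; each statement's English description precedes it below -/
import Mathlib

section
/- Let Z > 0, let a < b be reals, and let w : ℝ × [1,∞) → ℂ, written w(x; λ), be smooth, supported in [a,b] in the x-variable for every λ ≥ 1, and satisfying |λ^j ∂_x^i ∂_λ^j w(x;λ)| ≤ C_{i,j}·Z for all i, j ≥ 0, all x, and all λ ≥ 1. Let f : ℝ → ℝ be smooth on an open neighborhood of [a,b] and suppose there is a point x₀ ∈ (a,b) with f(x₀) = f'(x₀) = 0, f''(x₀) ≠ 0, and f'(x) ≠ 0 for all x ∈ [a,b] with x ≠ x₀. Then for every integer j ≥ 0 there is a constant C, depending only on j, f, a, b and finitely many of the C_{i,j}, such that |d^j/dλ^j ∫_a^b e(λ f(x)) w(x; λ) dx| ≤ C·Z/λ^{1/2+j} for all λ ≥ 1. -/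
/-- `e(t) = exp(2πit)`. -/
noncomputable def e (t : ℝ) : ℂ := Complex.exp (2 * (Real.pi : ℂ) * Complex.I * t)

/-!
Both `f'` and `x - x₀` vanish exactly to first order at `x₀` and nowhere else on `[a, b]`, so there
are smooth `R` and `H` with `f' R = x - x₀` and `f' H = f` there.

For `j = 0`, the weight `φ = (1 + λ (x - x₀)²)⁻¹` splits an amplitude as
`g = φ g + λ f' · (x - x₀) φ R g`. Integrating the second term by parts cancels the factor `λ`, and
all that remains is bounded by a multiple of `φ + λ^(-1/2)`, whose integral is `O(λ^(-1/2))`.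

Each `λ`-derivative falling on `e(λ f)` produces a factor `f = f' H`; integrating by parts against
`f'` gains `λ⁻¹` and lowers the power of `f` by one. Each `λ`-derivative falling on `w` gains `λ⁻¹`
by hypothesis.
-/

open Set Filter Topology MeasureTheory
open scoped ContDiff Manifold

namespace StationaryPhase

/-! ### Directional derivatives -/

section DirDeriv

variable {E F : Type*} [NormedAddCommGroup E] [NormedSpace ℝ E]
  [NormedAddCommGroup F] [NormedSpace ℝ F] {U : Set E} {G H : E → F}

/-- The derivative `∂_v G` in the constant direction `v`, as an operator on functions, so that mixed
partial derivatives of any order are iterates. -/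
noncomputable def dirDeriv (v : E) (G : E → F) (p : E) : F := fderiv ℝ G p v

lemma contDiffOn_dirDeriv (hU : IsOpen U) (hG : ContDiffOn ℝ ∞ G U) (v : E) :
    ContDiffOn ℝ ∞ (dirDeriv v G) U :=
  (hG.fderiv_of_isOpen hU (by simp)).clm_apply contDiffOn_const

lemma contDiffOn_iterate_dirDeriv (hU : IsOpen U) (hG : ContDiffOn ℝ ∞ G U) (v : E) (n : ℕ) :
    ContDiffOn ℝ ∞ ((dirDeriv v)^[n] G) U := by
  induction n with
  | zero => exact hG
  | succ n ih =>
    rw [Function.iterate_succ_apply']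
    exact contDiffOn_dirDeriv hU ih v

lemma eqOn_dirDeriv (hU : IsOpen U) (hGH : EqOn G H U) (v : E) :
    EqOn (dirDeriv v G) (dirDeriv v H) U := fun p hp => by
  rw [dirDeriv, dirDeriv, (hGH.eventuallyEq_of_mem (hU.mem_nhds hp)).fderiv_eq]

lemma dirDeriv_comm {p : E} (hG : ContDiffAt ℝ 2 G p) (u v : E) :
    dirDeriv u (dirDeriv v G) p = dirDeriv v (dirDeriv u G) p := by
  have hd : DifferentiableAt ℝ (fderiv ℝ G) p :=
    (hG.fderiv_right (m := 1) (by norm_num)).differentiableAt one_ne_zero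
  have second_fderiv (u v : E) : dirDeriv u (dirDeriv v G) p = fderiv ℝ (fderiv ℝ G) p u v := by
    have h := (hd.hasFDerivAt.clm_apply (hasFDerivAt_const v p)).fderiv
    change fderiv ℝ (fun q => fderiv ℝ G q v) p u = _
    rw [h]
    simp
  rw [second_fderiv, second_fderiv]
  exact hG.isSymmSndFDerivAt (by simp) u v

lemma eqOn_iterate_dirDeriv_dirDeriv (hU : IsOpen U) (hG : ContDiffOn ℝ ∞ G U) (u v : E)
    (n : ℕ) : EqOn ((dirDeriv u)^[n] (dirDeriv v G)) (dirDeriv v ((dirDeriv u)^[n] G)) U := by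
  induction n with
  | zero => exact fun _ _ => rfl
  | succ n ih =>
    simp only [Function.iterate_succ_apply']
    refine (eqOn_dirDeriv hU ih u).trans fun p hp => dirDeriv_comm ?_ u v
    exact ((contDiffOn_iterate_dirDeriv hU hG u n).contDiffAt (hU.mem_nhds hp)).of_le
      (WithTop.coe_le_coe.2 (le_top (a := (2 : ℕ∞))))

lemma eqOn_iterate_dirDeriv_comm (hU : IsOpen U) (hG : ContDiffOn ℝ ∞ G U) (u v : E) (n m : ℕ) :
    EqOn ((dirDeriv u)^[n] ((dirDeriv v)^[m] G)) ((dirDeriv v)^[m] ((dirDeriv u)^[n] G)) U := by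
  induction m with
  | zero => exact fun _ _ => rfl
  | succ m ih =>
    simp only [Function.iterate_succ_apply']
    exact (eqOn_iterate_dirDeriv_dirDeriv hU (contDiffOn_iterate_dirDeriv hU hG v m) u v n).trans
      (eqOn_dirDeriv hU ih v)

lemma iteratedDeriv_comp_line (hU : IsOpen U) (hG : ContDiffOn ℝ ∞ G U) {γ : ℝ → E} {v : E}
    (hγ : ∀ t, HasDerivAt γ v t) (n : ℕ) {t : ℝ} (ht : γ t ∈ U) :
    iteratedDeriv n (fun s => G (γ s)) t = (dirDeriv v)^[n] G (γ t) := by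
  have hγc : Continuous γ := continuous_iff_continuousAt.2 fun t => (hγ t).continuousAt
  induction n generalizing t with
  | zero => simp
  | succ n ih =>
    have heq : iteratedDeriv n (fun s => G (γ s)) =ᶠ[𝓝 t] fun s => (dirDeriv v)^[n] G (γ s) := by
      filter_upwards [(hU.preimage hγc).mem_nhds ht] with s hs using ih hs
    have hd : DifferentiableAt ℝ ((dirDeriv v)^[n] G) (γ t) :=
      ((contDiffOn_iterate_dirDeriv hU hG v n).contDiffAt (hU.mem_nhds ht)).differentiableAt
        (by simp)
    rw [iteratedDeriv_succ, Function.iterate_succ_apply', heq.deriv_eq]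
    exact (hd.hasFDerivAt.comp_hasDerivAt t (hγ t)).deriv

end DirDeriv

section Partial

variable {F : Type*} [NormedAddCommGroup F] [NormedSpace ℝ F] {U : Set (ℝ × ℝ)} {G : ℝ × ℝ → F}

lemma iteratedDeriv_fst_eq (hU : IsOpen U) (hG : ContDiffOn ℝ ∞ G U) (n : ℕ) {x l : ℝ}
    (h : (x, l) ∈ U) :
    iteratedDeriv n (fun x => G (x, l)) x = (dirDeriv (1, 0))^[n] G (x, l) :=
  iteratedDeriv_comp_line hU hG (γ := fun x => (x, l))
    (fun x => (hasDerivAt_id x).prodMk (hasDerivAt_const x l)) n h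

lemma iteratedDeriv_snd_eq (hU : IsOpen U) (hG : ContDiffOn ℝ ∞ G U) (n : ℕ) {x l : ℝ}
    (h : (x, l) ∈ U) :
    iteratedDeriv n (fun l => G (x, l)) l = (dirDeriv (0, 1))^[n] G (x, l) :=
  iteratedDeriv_comp_line hU hG (γ := fun l => (x, l))
    (fun l => (hasDerivAt_const l x).prodMk (hasDerivAt_id l)) n h

lemma contDiffOn_iteratedDeriv_snd (hU : IsOpen U) (hG : ContDiffOn ℝ ∞ G U) (n : ℕ) :
    ContDiffOn ℝ ∞ (fun p : ℝ × ℝ => iteratedDeriv n (fun l => G (p.1, l)) p.2) U :=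
  (contDiffOn_iterate_dirDeriv hU hG (0, 1) n).congr fun _ hp => iteratedDeriv_snd_eq hU hG n hp

lemma iteratedDeriv_comm (hU : IsOpen U) (hG : ContDiffOn ℝ ∞ G U) (i j : ℕ) {x l : ℝ}
    (h : (x, l) ∈ U) :
    iteratedDeriv i (fun x => iteratedDeriv j (fun l => G (x, l)) l) x =
      iteratedDeriv j (fun l => iteratedDeriv i (fun x => G (x, l)) x) l := by
  have hfst : (fun x => iteratedDeriv j (fun l => G (x, l)) l) =ᶠ[𝓝 x]
      fun x => (dirDeriv (0, 1))^[j] G (x, l) := by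
    filter_upwards [(hU.preimage (Continuous.prodMk_left l)).mem_nhds h] with y hy
    exact iteratedDeriv_snd_eq hU hG j hy
  have hsnd : (fun l => iteratedDeriv i (fun x => G (x, l)) x) =ᶠ[𝓝 l]
      fun l => (dirDeriv (1, 0))^[i] G (x, l) := by
    filter_upwards [(hU.preimage (Continuous.prodMk_right x)).mem_nhds h] with m hm
    exact iteratedDeriv_fst_eq hU hG i hm
  rw [hfst.iteratedDeriv_eq, hsnd.iteratedDeriv_eq,
    iteratedDeriv_fst_eq hU (contDiffOn_iterate_dirDeriv hU hG _ j) i h,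
    iteratedDeriv_snd_eq hU (contDiffOn_iterate_dirDeriv hU hG _ i) j h]
  exact eqOn_iterate_dirDeriv_comm hU hG _ _ i j h

/-! ### Parametric integrals -/

lemma eventually_uIcc_prod_singleton_subset (hU : IsOpen U) {a b l : ℝ}
    (hl : uIcc a b ×ˢ {l} ⊆ U) : ∀ᶠ m in 𝓝 l, uIcc a b ×ˢ {m} ⊆ U := by
  obtain ⟨A, B, -, hB, hA, hlB, hAB⟩ :=
    generalized_tube_lemma isCompact_uIcc isCompact_singleton hU hl
  filter_upwards [hB.mem_nhds (hlB rfl)] with m hm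
  exact (prod_mono hA (singleton_subset_iff.2 hm)).trans hAB

lemma hasDerivAt_intervalIntegral (hU : IsOpen U) (hG : ContDiffOn ℝ 1 G U) {a b l : ℝ}
    (hl : uIcc a b ×ˢ {l} ⊆ U) :
    HasDerivAt (fun l => ∫ x in a..b, G (x, l)) (∫ x in a..b, deriv (fun l => G (x, l)) l) l := by
  have hderiv : ∀ p ∈ U, HasDerivAt (fun l => G (p.1, l)) (fderiv ℝ G p (0, 1)) p.2 := fun p hp =>
    ((hG.contDiffAt (hU.mem_nhds hp)).differentiableAt one_ne_zero).hasFDerivAt.comp_hasDerivAt p.2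
      ((hasDerivAt_const p.2 p.1).prodMk (hasDerivAt_id p.2))
  have hcont : ContinuousOn (fun p : ℝ × ℝ => deriv (fun l => G (p.1, l)) p.2) U :=
    ((hG.continuousOn_fderiv_of_isOpen hU le_rfl).clm_apply continuousOn_const).congr
      fun p hp => (hderiv p hp).deriv
  obtain ⟨K, hKl, hKU, hK⟩ := local_compact_nhds (eventually_uIcc_prod_singleton_subset hU hl)
  have hmem {x m : ℝ} (hx : x ∈ uIcc a b) (hm : m ∈ K) : (x, m) ∈ U := hKU hm ⟨hx, rfl⟩
  obtain ⟨C, hC⟩ := (isCompact_uIcc.prod hK).exists_bound_of_continuousOn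
    (hcont.mono fun p hp => hmem hp.1 hp.2)
  have hslice {Φ : ℝ × ℝ → F} (hΦ : ContinuousOn Φ U) {m : ℝ} (hm : m ∈ K) :
      ContinuousOn (fun x => Φ (x, m)) (uIcc a b) :=
    hΦ.comp (by fun_prop) fun x hx => hmem hx hm
  have hmeas {g : ℝ → F} (hg : ContinuousOn g (uIcc a b)) :
      AEStronglyMeasurable g (volume.restrict (uIoc a b)) :=
    (hg.mono uIoc_subset_uIcc).aestronglyMeasurable measurableSet_uIoc
  have hlK : l ∈ K := mem_of_mem_nhds hKl
  refine (intervalIntegral.hasDerivAt_integral_of_dominated_loc_of_deriv_le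
    (F := fun l x => G (x, l)) (F' := fun l x => deriv (fun l => G (x, l)) l) (bound := fun _ => C)
    hKl ?_ (hslice hG.continuousOn hlK).intervalIntegrable (hmeas (hslice hcont hlK)) ?_
    intervalIntegrable_const ?_).2
  · filter_upwards [hKl] with m hm using hmeas (hslice hG.continuousOn hm)
  · exact .of_forall fun x hx m hm => hC (x, m) ⟨uIoc_subset_uIcc hx, hm⟩
  · exact .of_forall fun x hx m hm =>
      (hderiv (x, m) (hmem (uIoc_subset_uIcc hx) hm)).differentiableAt.hasDerivAt

lemma iteratedDeriv_intervalIntegral (hU : IsOpen U) (hG : ContDiffOn ℝ ∞ G U) {a b l : ℝ}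
    (hl : uIcc a b ×ˢ {l} ⊆ U) (n : ℕ) :
    iteratedDeriv n (fun l => ∫ x in a..b, G (x, l)) l =
      ∫ x in a..b, iteratedDeriv n (fun l => G (x, l)) l := by
  induction n generalizing l with
  | zero => simp
  | succ n ih =>
    have heq : iteratedDeriv n (fun l => ∫ x in a..b, G (x, l)) =ᶠ[𝓝 l]
        fun l => ∫ x in a..b, iteratedDeriv n (fun l => G (x, l)) l := by
      filter_upwards [eventually_uIcc_prod_singleton_subset hU hl] with m hm using ih hm
    have hsmooth := (contDiffOn_iteratedDeriv_snd hU hG n).of_le (mod_cast le_top : 1 ≤ ∞)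
    simp only [iteratedDeriv_succ, heq.deriv_eq, (hasDerivAt_intervalIntegral hU hsmooth hl).deriv]

lemma contDiff_intervalIntegral (hG : ContDiff ℝ ∞ G) (a b : ℝ) :
    ContDiff ℝ ∞ (fun l => ∫ x in a..b, G (x, l)) := by
  refine contDiff_of_differentiable_iteratedDeriv fun n _ l => ?_
  have hsmooth := (contDiffOn_iteratedDeriv_snd isOpen_univ hG.contDiffOn n).of_le
    (mod_cast le_top : 1 ≤ ∞)
  have heq : iteratedDeriv n (fun l => ∫ x in a..b, G (x, l)) =
      fun l => ∫ x in a..b, iteratedDeriv n (fun l => G (x, l)) l :=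
    funext fun _ => iteratedDeriv_intervalIntegral isOpen_univ hG.contDiffOn (subset_univ _) n
  rw [heq]
  exact (hasDerivAt_intervalIntegral isOpen_univ hsmooth (subset_univ _)).differentiableAt

end Partial

/-! ### Smooth division and smooth extension -/

section Smooth

variable {E F : Type*} [NormedAddCommGroup E] [NormedSpace ℝ E]
  [NormedAddCommGroup F] [NormedSpace ℝ F]

lemma dslope_eq_integral_deriv [CompleteSpace F] {φ : ℝ → F} (hφ : ContDiff ℝ 1 φ) (x₀ x : ℝ) :
    dslope φ x₀ x = ∫ t in (0 : ℝ)..1, deriv φ (x₀ + t * (x - x₀)) := by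
  rcases eq_or_ne x x₀ with rfl | hx
  · simp
  have hderiv (t : ℝ) : HasDerivAt (fun t => φ (x₀ + t * (x - x₀)))
      ((x - x₀) • deriv φ (x₀ + t * (x - x₀))) t := by
    have hline : HasDerivAt (fun t => x₀ + t * (x - x₀)) (x - x₀) t := by
      simpa using ((hasDerivAt_id t).mul_const (x - x₀)).const_add x₀
    exact ((hφ.differentiable one_ne_zero _).hasDerivAt).scomp t hline
  have hcont : Continuous fun t => (x - x₀) • deriv φ (x₀ + t * (x - x₀)) :=
    ((hφ.continuous_deriv le_rfl).comp (by fun_prop)).const_smul _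
  have hftc := intervalIntegral.integral_eq_sub_of_hasDerivAt (fun t _ => hderiv t)
    (hcont.intervalIntegrable 0 1)
  rw [intervalIntegral.integral_smul] at hftc
  rw [dslope_of_ne _ hx, slope_def_module, inv_smul_eq_iff₀ (sub_ne_zero.2 hx), hftc]
  simp

lemma contDiff_dslope [CompleteSpace F] {φ : ℝ → F} (hφ : ContDiff ℝ ∞ φ) (x₀ : ℝ) :
    ContDiff ℝ ∞ (dslope φ x₀) := by
  rw [funext (dslope_eq_integral_deriv (hφ.of_le (mod_cast le_top)) x₀)]
  exact contDiff_intervalIntegral (G := fun p => deriv φ (x₀ + p.1 * (p.2 - x₀)))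
    ((contDiff_infty_iff_deriv.1 hφ).2.comp (by fun_prop)) 0 1

lemma exists_contDiff_eventuallyEq_nhdsSet [FiniteDimensional ℝ E] {n : ℕ∞} {K U : Set E}
    (hK : IsClosed K) (hU : IsOpen U) (hKU : K ⊆ U) {φ : E → F} (hφ : ContDiffOn ℝ n φ U) :
    ∃ φ' : E → F, ContDiff ℝ n φ' ∧ φ' =ᶠ[𝓝ˢ K] φ := by
  obtain ⟨χ, hχ0, hχ1, -⟩ := exists_contMDiffMap_zero_one_nhds_of_isClosed 𝓘(ℝ, E) (n := n)
    hU.isClosed_compl hK (disjoint_compl_left_iff_subset.2 hKU)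
  refine ⟨fun x => χ x • φ x, contDiff_iff_contDiffAt.2 fun x => ?_, ?_⟩
  · by_cases hx : x ∈ U
    · exact χ.contMDiff.contDiff.contDiffAt.smul (hφ.contDiffAt (hU.mem_nhds hx))
    · have hzero : (fun x => χ x • φ x) =ᶠ[𝓝 x] 0 := by
        filter_upwards [hχ0.filter_mono (nhds_le_nhdsSet hx)] with y hy
        simp [hy]
      exact contDiffAt_const.congr_of_eventuallyEq hzero
  · filter_upwards [hχ1] with x hx
    rw [hx, one_smul]

lemma exists_contDiff_deriv_mul_eq_sub {f : ℝ → ℝ} (hf : ContDiff ℝ ∞ f) {K : Set ℝ}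
    (hK : IsClosed K) {x₀ : ℝ} (hf'x₀ : deriv f x₀ = 0) (hf''x₀ : deriv (deriv f) x₀ ≠ 0)
    (hf' : ∀ x ∈ K, x ≠ x₀ → deriv f x ≠ 0) :
    ∃ R : ℝ → ℝ, ContDiff ℝ ∞ R ∧ ∀ x ∈ K, deriv f x * R x = x - x₀ := by
  set p := dslope (deriv f) x₀
  have hp : ContDiff ℝ ∞ p := contDiff_dslope (contDiff_infty_iff_deriv.1 hf).2 x₀
  have hfp (x : ℝ) : (x - x₀) * p x = deriv f x := sub_smul_dslope_of_zero hf'x₀ x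
  have hpK : K ⊆ {x | p x ≠ 0} := fun x hx => by
    rcases eq_or_ne x x₀ with rfl | hne
    · simpa [p] using hf''x₀
    · exact right_ne_zero_of_mul (hfp x ▸ hf' x hx hne)
  obtain ⟨R, hR, hRp⟩ := exists_contDiff_eventuallyEq_nhdsSet hK
    (isOpen_ne_fun hp.continuous continuous_const) hpK (hp.contDiffOn.inv fun _ hx => hx)
  refine ⟨R, hR, fun x hx => ?_⟩
  rw [hRp.self_of_nhdsSet hx, Pi.inv_apply, ← hfp, mul_assoc, mul_inv_cancel₀ (hpK hx), mul_one]

end Smooth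

/-! ### Bounds on derivatives -/

section Bounds

variable {F : Type*} [NormedAddCommGroup F] [NormedSpace ℝ F] {K : Set ℝ} {n : ℕ} {M N : ℝ}
  {g h : ℝ → F}

/-- All derivatives of `g` of order at most `n` are bounded by `M` on `K`, i.e. the `C^n` norm of
`g` on `K` is at most `M`. -/
def IteratedDerivBoundOn (n : ℕ) (g : ℝ → F) (K : Set ℝ) (M : ℝ) : Prop :=
  ∀ i ≤ n, ∀ x ∈ K, ‖iteratedDeriv i g x‖ ≤ M

lemma exists_iteratedDerivBoundOn (hK : IsCompact K) (hg : ContDiff ℝ n g) :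
    ∃ M, 0 ≤ M ∧ IteratedDerivBoundOn n g K M := by
  have hbound (i : ℕ) (hi : i ≤ n) : ∃ M, ∀ x ∈ K, ‖iteratedDeriv i g x‖ ≤ M :=
    hK.exists_bound_of_continuousOn (hg.continuous_iteratedDeriv i (mod_cast hi)).continuousOn
  choose! B hB using hbound
  refine ⟨∑ i ∈ Finset.range (n + 1), |B i|, by positivity, fun i hi x hx => ?_⟩
  calc ‖iteratedDeriv i g x‖ ≤ |B i| := (hB i hi x hx).trans (le_abs_self _)
    _ ≤ ∑ i ∈ Finset.range (n + 1), |B i| :=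
      Finset.single_le_sum (fun i _ => abs_nonneg (B i)) (Finset.mem_range_succ_iff.2 hi)

namespace IteratedDerivBoundOn

lemma norm_le (hg : IteratedDerivBoundOn n g K M) {x : ℝ} (hx : x ∈ K) : ‖g x‖ ≤ M := by
  simpa using hg 0 n.zero_le x hx

lemma norm_deriv_le (hg : IteratedDerivBoundOn (n + 1) g K M) {x : ℝ} (hx : x ∈ K) :
    ‖deriv g x‖ ≤ M := by
  simpa using hg 1 (by lia) x hx

lemma of_le {m : ℕ} (hg : IteratedDerivBoundOn n g K M) (hmn : m ≤ n) :
    IteratedDerivBoundOn m g K M := fun i hi => hg i (hi.trans hmn)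

lemma deriv (hg : IteratedDerivBoundOn (n + 1) g K M) : IteratedDerivBoundOn n (deriv g) K M :=
  fun i hi => by
    rw [← iteratedDeriv_succ']
    exact hg (i + 1) (by lia)

lemma add (hg : IteratedDerivBoundOn n g K M) (hh : IteratedDerivBoundOn n h K N)
    (hgd : ContDiff ℝ n g) (hhd : ContDiff ℝ n h) :
    IteratedDerivBoundOn n (g + h) K (M + N) := fun i hi x hx => by
  have hin : (i : ℕ∞ω) ≤ n := mod_cast hi
  rw [iteratedDeriv_add (hgd.of_le hin).contDiffAt (hhd.of_le hin).contDiffAt]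
  exact norm_add_le_of_le (hg i hi x hx) (hh i hi x hx)

lemma const_smul (hg : IteratedDerivBoundOn n g K M) (c : ℝ) :
    IteratedDerivBoundOn n (c • g) K (|c| * M) := fun i hi x hx => by
  rw [iteratedDeriv_const_smul_field, norm_smul, Real.norm_eq_abs]
  gcongr
  exact hg i hi x hx

lemma smul {A : ℝ} {R : ℝ → ℝ} (hR : IteratedDerivBoundOn n R K A)
    (hg : IteratedDerivBoundOn n g K M) (hA : 0 ≤ A) (hRd : ContDiff ℝ n R)
    (hgd : ContDiff ℝ n g) : IteratedDerivBoundOn n (R • g) K (2 ^ n * A * M) := by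
  intro i hi x hx
  have hM : 0 ≤ M := (norm_nonneg _).trans (hg.norm_le hx)
  rw [← norm_iteratedFDeriv_eq_norm_iteratedDeriv]
  calc ‖iteratedFDeriv ℝ i (R • g) x‖
      ≤ ∑ k ∈ Finset.range (i + 1), (i.choose k : ℝ) * ‖iteratedFDeriv ℝ k R x‖ *
          ‖iteratedFDeriv ℝ (i - k) g x‖ :=
        norm_iteratedFDeriv_smul_le hRd hgd x (mod_cast hi)
    _ ≤ ∑ k ∈ Finset.range (i + 1), (i.choose k : ℝ) * A * M := by
        gcongr with k hk
        · rw [norm_iteratedFDeriv_eq_norm_iteratedDeriv]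
          exact hR k (by grind) x hx
        · rw [norm_iteratedFDeriv_eq_norm_iteratedDeriv]
          exact hg (i - k) (by lia) x hx
    _ = 2 ^ i * A * M := by
        rw [← Finset.sum_mul, ← Finset.sum_mul, ← Nat.cast_sum, Nat.sum_range_choose]
        simp
    _ ≤ 2 ^ n * A * M := by gcongr; norm_num

end IteratedDerivBoundOn

end Bounds

/-! ### Oscillatory integrals -/

lemma e_eq_fourierChar (t : ℝ) : e t = Real.fourierChar t := by
  rw [e, Real.fourierChar_apply]
  push_cast
  ring_nf

lemma norm_e (t : ℝ) : ‖e t‖ = 1 := by rw [e_eq_fourierChar, Circle.norm_coe]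

lemma hasDerivAt_e (t : ℝ) : HasDerivAt e (2 * Real.pi * Complex.I * e t) t := by
  simpa only [← e_eq_fourierChar] using Real.hasDerivAt_fourierChar t

lemma contDiff_e {n : ℕ∞ω} : ContDiff ℝ n e :=
  (contDiff_const.mul Complex.ofRealCLM.contDiff).cexp

lemma iteratedDeriv_e_mul (c : ℝ) (n : ℕ) (l : ℝ) :
    iteratedDeriv n (fun l => e (l * c)) l = (2 * Real.pi * Complex.I * c) ^ n * e (l * c) := by
  induction n generalizing l with
  | zero => simp
  | succ n ih =>
    have hderiv : HasDerivAt (fun l => e (l * c)) (c • (2 * Real.pi * Complex.I * e (l * c))) l :=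
      (hasDerivAt_e (l * c)).scomp (h := fun l => l * c) l (hasDerivAt_mul_const c)
    rw [iteratedDeriv_succ, funext ih, deriv_const_mul _ hderiv.differentiableAt, hderiv.deriv,
      Complex.real_smul]
    ring

lemma one_le_norm_two_pi_I : 1 ≤ ‖2 * Real.pi * Complex.I‖ := by
  rw [norm_mul, norm_mul, Complex.norm_I, Complex.norm_real, Complex.norm_ofNat,
    Real.norm_of_nonneg Real.pi_pos.le, mul_one]
  linarith [Real.pi_gt_three]

/-- The oscillatory integral `∫_a^b e(λ f(x)) g(x) dx` with phase `f` and amplitude `g`. -/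
noncomputable def oscIntegral (f : ℝ → ℝ) (a b : ℝ) (g : ℝ → ℂ) (lam : ℝ) : ℂ :=
  ∫ x in a..b, e (lam * f x) * g x

section OscIntegral

variable {f : ℝ → ℝ} {a b lam : ℝ} {g h u : ℝ → ℂ}

lemma oscIntegral_congr (hgh : EqOn g h (uIcc a b)) :
    oscIntegral f a b g lam = oscIntegral f a b h lam :=
  intervalIntegral.integral_congr fun x hx => by simp only [hgh hx]

lemma oscIntegral_add (hf : Continuous f) (hg : Continuous g) (hh : Continuous h) :
    oscIntegral f a b (g + h) lam = oscIntegral f a b g lam + oscIntegral f a b h lam := by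
  have he : Continuous fun x => e (lam * f x) := (contDiff_e (n := 0)).continuous.comp (by fun_prop)
  simp only [oscIntegral, Pi.add_apply, mul_add]
  exact intervalIntegral.integral_add ((he.mul hg).intervalIntegrable a b)
    ((he.mul hh).intervalIntegrable a b)

lemma oscIntegral_const_smul (c : ℂ) :
    oscIntegral f a b (c • g) lam = c * oscIntegral f a b g lam := by
  simp only [oscIntegral, Pi.smul_apply, smul_eq_mul, mul_left_comm _ c,
    intervalIntegral.integral_const_mul]

lemma norm_oscIntegral_le (hab : a ≤ b) {B : ℝ → ℝ} (hB : IntervalIntegrable B volume a b)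
    (hgB : ∀ x ∈ Icc a b, ‖g x‖ ≤ B x) : ‖oscIntegral f a b g lam‖ ≤ ∫ x in a..b, B x := by
  refine intervalIntegral.norm_integral_le_of_norm_le hab (.of_forall fun x hx => ?_) hB
  rw [norm_mul, norm_e, one_mul]
  exact hgB x (Ioc_subset_Icc_self hx)

lemma oscIntegral_deriv (hf : ContDiff ℝ 1 f) (hu : ContDiff ℝ 1 u) (hua : u a = 0)
    (hub : u b = 0) :
    oscIntegral f a b (deriv u) lam =
      -(2 * Real.pi * Complex.I * lam) * oscIntegral f a b (deriv f • u) lam := by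
  have hderiv (x : ℝ) : HasDerivAt (fun x => e (lam * f x))
      ((lam * deriv f x) • (2 * Real.pi * Complex.I * e (lam * f x))) x :=
    (hasDerivAt_e _).scomp x (((hf.differentiable one_ne_zero x).hasDerivAt).const_mul lam)
  have hcont : Continuous fun x =>
      (lam * deriv f x) • (2 * Real.pi * Complex.I * e (lam * f x)) := by
    have := hf.continuous_deriv le_rfl
    have := hf.continuous
    have := (contDiff_e (n := 0)).continuous
    fun_prop
  rw [oscIntegral, intervalIntegral.integral_mul_deriv_eq_deriv_mul (fun x _ => hderiv x)
    (fun x _ => (hu.differentiable one_ne_zero x).hasDerivAt) (hcont.intervalIntegrable a b)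
    ((hu.continuous_deriv le_rfl).intervalIntegrable a b), hua, hub, ← oscIntegral_const_smul,
    oscIntegral, mul_zero, mul_zero, sub_self, zero_sub, ← intervalIntegral.integral_neg]
  congr 1 with x
  simp only [Pi.smul_apply, Pi.smul_apply', smul_eq_mul, Complex.real_smul]
  push_cast
  ring

end OscIntegral

/-! ### The stationary phase estimate of order zero -/

/-- The smooth cutoff `(1 + λ y²)⁻¹` to the region `|y| ≲ λ^(-1/2)` around a stationary point. -/
noncomputable def lorentz (lam y : ℝ) : ℝ := (1 + lam * y ^ 2)⁻¹

section Lorentz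

variable {lam : ℝ}

lemma lorentz_pos (hlam : 0 ≤ lam) (y : ℝ) : 0 < lorentz lam y := by
  unfold lorentz
  positivity

lemma lorentz_add_mul_sq_mul_lorentz (hlam : 0 ≤ lam) (y : ℝ) :
    lorentz lam y + lam * y ^ 2 * lorentz lam y = 1 := by
  have : 1 + lam * y ^ 2 ≠ 0 := by positivity
  unfold lorentz
  field

lemma contDiff_lorentz (hlam : 0 ≤ lam) {n : ℕ∞ω} : ContDiff ℝ n (lorentz lam) := by
  unfold lorentz
  exact ContDiff.inv (by fun_prop) fun y => by positivity

lemma abs_mul_lorentz_le (hlam : 0 < lam) (y : ℝ) : |y * lorentz lam y| ≤ 1 / √lam := by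
  have hsq : √lam * √lam = lam := Real.mul_self_sqrt hlam.le
  rw [abs_mul, abs_of_pos (lorentz_pos hlam.le y), lorentz, ← div_eq_mul_inv,
    div_le_div_iff₀ (by positivity) (by positivity), ← sq_abs y]
  nlinarith [sq_nonneg (√lam * |y| - 1), sq_nonneg (√lam * |y|)]

lemma abs_deriv_mul_lorentz_le (hlam : 0 ≤ lam) (y : ℝ) :
    |deriv (fun y => y * lorentz lam y) y| ≤ lorentz lam y := by
  have hden : 1 + lam * y ^ 2 ≠ 0 := by positivity
  have hderiv : HasDerivAt (fun y => y * lorentz lam y)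
      ((1 - lam * y ^ 2) * lorentz lam y * lorentz lam y) y := by
    have hsq : HasDerivAt (fun y => 1 + lam * y ^ 2) (lam * (2 * y)) y := by
      simpa using ((hasDerivAt_pow 2 y).const_mul lam).const_add 1
    refine ((hasDerivAt_id' y).fun_mul (hsq.fun_inv hden)).congr_deriv ?_
    unfold lorentz
    field
  have hnum : |(1 - lam * y ^ 2) * lorentz lam y| ≤ 1 := by
    have := lorentz_add_mul_sq_mul_lorentz hlam y
    have := lorentz_pos hlam y
    rw [abs_le]
    constructor <;> nlinarith [mul_nonneg (mul_nonneg hlam (sq_nonneg y)) this.le]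
  rw [hderiv.deriv, abs_mul, abs_of_pos (lorentz_pos hlam y)]
  exact mul_le_of_le_one_left (lorentz_pos hlam y).le hnum

lemma integral_lorentz_sub_le (hlam : 0 < lam) (a b x₀ : ℝ) :
    ∫ x in a..b, lorentz lam (x - x₀) ≤ Real.pi / √lam := by
  have hsubst : ∀ x, lorentz lam (x - x₀) = (1 + (√lam * x - √lam * x₀) ^ 2)⁻¹ := fun x => by
    rw [lorentz, ← mul_sub, mul_pow, Real.sq_sqrt hlam.le]
  rw [le_div_iff₀' (Real.sqrt_pos.2 hlam)]
  simp only [hsubst]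
  rw [intervalIntegral.mul_integral_comp_mul_sub (f := fun y => (1 + y ^ 2)⁻¹),
    integral_inv_one_add_sq]
  linarith [Real.arctan_lt_pi_div_two (√lam * b - √lam * x₀),
    Real.neg_pi_div_two_lt_arctan (√lam * a - √lam * x₀)]

end Lorentz

section BaseEstimate

variable {f : ℝ → ℝ} {a b x₀ lam M : ℝ} {g G : ℝ → ℂ}

-- With `φ = lorentz λ (x - x₀)` one has `g = φ g + λ (x - x₀)² φ g`, where the last term equals
-- `λ (deriv f) (x - x₀) φ G` and is a derivative up to integration by parts.
lemma oscIntegral_eq_lorentz_smul_sub (hab : a ≤ b) (hlam : 0 ≤ lam) (hf : ContDiff ℝ 1 f)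
    (hg : Continuous g) (hG : ContDiff ℝ 1 G) (hGa : G a = 0) (hGb : G b = 0)
    (hfG : ∀ x ∈ Icc a b, deriv f x • G x = (x - x₀) • g x) :
    oscIntegral f a b g lam =
      oscIntegral f a b ((fun x => lorentz lam (x - x₀)) • g) lam - (2 * Real.pi * Complex.I)⁻¹ *
        oscIntegral f a b (deriv ((fun x => (x - x₀) * lorentz lam (x - x₀)) • G)) lam := by
  set φ : ℝ → ℝ := fun x => lorentz lam (x - x₀)
  set u : ℝ → ℂ := (fun x => (x - x₀) * φ x) • G with hu
  have hφ : ContDiff ℝ 1 φ := (contDiff_lorentz hlam).comp (contDiff_id.sub contDiff_const)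
  have hud : ContDiff ℝ 1 u := ((contDiff_id.sub contDiff_const).mul hφ).smul hG
  have hsplit : EqOn g (φ • g + (lam : ℂ) • deriv f • u) (uIcc a b) := fun x hx => by
    have hpart : φ x + lam * (x - x₀) ^ 2 * φ x = 1 := lorentz_add_mul_sq_mul_lorentz hlam _
    have hfu : deriv f x • u x = ((x - x₀) ^ 2 * φ x) • g x := by
      rw [hu, Pi.smul_apply', smul_comm, hfG x (uIcc_of_le hab ▸ hx), smul_smul, sq, mul_right_comm]
    simp only [Pi.add_apply, Pi.smul_apply, Pi.smul_apply', hfu, smul_eq_mul, Complex.real_smul]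
    have hpart' := congrArg ((↑) : ℝ → ℂ) hpart
    push_cast at hpart' ⊢
    linear_combination (-g x) * hpart'
  rw [oscIntegral_congr hsplit, oscIntegral_add hf.continuous (hφ.continuous.smul hg)
    (((hf.continuous_deriv le_rfl).smul hud.continuous).const_smul _), oscIntegral_const_smul,
    oscIntegral_deriv hf hud (by simp [hu, hGa]) (by simp [hu, hGb])]
  field

lemma norm_deriv_mul_lorentz_smul_le (hlam : 0 < lam) {x : ℝ} (hG : DifferentiableAt ℝ G x)
    (hGM : ‖G x‖ ≤ M) (hG'M : ‖deriv G x‖ ≤ M) :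
    ‖deriv ((fun x => (x - x₀) * lorentz lam (x - x₀)) • G) x‖ ≤
      lorentz lam (x - x₀) * M + 1 / √lam * M := by
  set ψ : ℝ → ℝ := fun y => y * lorentz lam y
  have hψd : DifferentiableAt ℝ ψ (x - x₀) :=
    (contDiff_id.mul (contDiff_lorentz hlam.le (n := 1))).differentiable one_ne_zero _
  have hderiv := (hψd.hasDerivAt.comp_sub_const x x₀).smul hG.hasDerivAt
  rw [hderiv.deriv, add_comm]
  refine norm_add_le_of_le ?_ ?_ <;> rw [norm_smul, Real.norm_eq_abs]
  · gcongr
    · exact (lorentz_pos hlam.le _).le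
    · exact abs_deriv_mul_lorentz_le hlam.le _
  · gcongr
    exact abs_mul_lorentz_le hlam _

lemma norm_oscIntegral_le_div_sqrt (hab : a ≤ b) (hlam : 0 < lam) (hf : ContDiff ℝ 1 f)
    (hg : Continuous g) (hG : ContDiff ℝ 1 G) (hGa : G a = 0) (hGb : G b = 0)
    (hfG : ∀ x ∈ Icc a b, deriv f x • G x = (x - x₀) • g x) (hgM : ∀ x ∈ Icc a b, ‖g x‖ ≤ M)
    (hGM : IteratedDerivBoundOn 1 G (Icc a b) M) :
    ‖oscIntegral f a b g lam‖ ≤ (2 * Real.pi + (b - a)) * M / √lam := by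
  have hM : 0 ≤ M := (norm_nonneg _).trans (hgM a (left_mem_Icc.2 hab))
  have hφ : IntervalIntegrable (fun x => lorentz lam (x - x₀) * M) volume a b :=
    (((contDiff_lorentz hlam.le (n := 0)).continuous.comp
      (continuous_id.sub continuous_const)).mul continuous_const).intervalIntegrable a b
  have hnear : ‖oscIntegral f a b ((fun x => lorentz lam (x - x₀)) • g) lam‖ ≤
      ∫ x in a..b, lorentz lam (x - x₀) * M := norm_oscIntegral_le hab hφ fun x hx => by
    rw [Pi.smul_apply', norm_smul, Real.norm_of_nonneg (lorentz_pos hlam.le _).le]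
    gcongr
    · exact (lorentz_pos hlam.le _).le
    · exact hgM x hx
  have hfar : ‖oscIntegral f a b (deriv ((fun x => (x - x₀) * lorentz lam (x - x₀)) • G)) lam‖ ≤
      ∫ x in a..b, (lorentz lam (x - x₀) * M + 1 / √lam * M) :=
    norm_oscIntegral_le hab (hφ.add intervalIntegrable_const) fun x hx =>
      norm_deriv_mul_lorentz_smul_le hlam (hG.differentiable one_ne_zero x) (hGM.norm_le hx)
        (hGM.norm_deriv_le hx)
  have hconst : ‖(2 * Real.pi * Complex.I)⁻¹‖ ≤ 1 := by
    rw [norm_inv]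
    exact inv_le_one_of_one_le₀ one_le_norm_two_pi_I
  rw [intervalIntegral.integral_add hφ intervalIntegrable_const,
    intervalIntegral.integral_const, smul_eq_mul] at hfar
  rw [intervalIntegral.integral_mul_const] at hnear hfar
  rw [oscIntegral_eq_lorentz_smul_sub hab hlam.le hf hg hG hGa hGb hfG]
  calc _ ≤ (∫ x in a..b, lorentz lam (x - x₀)) * M + 1 *
        ((∫ x in a..b, lorentz lam (x - x₀)) * M + (b - a) * (1 / √lam * M)) :=
        norm_sub_le_of_le hnear (norm_mul_le_of_le hconst hfar)
    _ ≤ Real.pi / √lam * M + 1 * (Real.pi / √lam * M + (b - a) * (1 / √lam * M)) := by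
        gcongr <;> exact integral_lorentz_sub_le hlam a b x₀
    _ = (2 * Real.pi + (b - a)) * M / √lam := by ring

end BaseEstimate

/-! ### Amplitudes with powers of the phase -/

section Support

variable {F : Type*} [NormedAddCommGroup F] {g : ℝ → F} {a b : ℝ}

lemma eq_zero_of_support_subset_Icc (hg : Continuous g) (hsupp : g.support ⊆ Icc a b) :
    g a = 0 ∧ g b = 0 := by
  have hIoo : g.support ⊆ Ioo a b := by
    rw [← interior_Icc]
    exact interior_maximal hsupp hg.isOpen_support
  exact ⟨Function.notMem_support.1 fun h => left_notMem_Ioo (hIoo h),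
    Function.notMem_support.1 fun h => right_notMem_Ioo (hIoo h)⟩

lemma support_deriv_subset_Icc [NormedSpace ℝ F] (hsupp : g.support ⊆ Icc a b) :
    (deriv g).support ⊆ Icc a b :=
  support_deriv_subset.trans (closure_minimal hsupp isClosed_Icc)

end Support

section PhasePowers

variable {f H R : ℝ → ℝ} {a b x₀ : ℝ}

lemma deriv_pow_smul_smul (hf : ContDiff ℝ 1 f) (hH : ContDiff ℝ 1 H) {g : ℝ → ℂ}
    (hg : ContDiff ℝ 1 g) {x : ℝ} (hfH : deriv f x * H x = f x) (k : ℕ) :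
    deriv (f ^ k • H • g) x =
      f x ^ k • ((k : ℝ) • g x + deriv (H • g) x) := by
  have hpow : deriv (f ^ k) x * H x = k * f x ^ k := by
    rw [deriv_pow (hf.differentiable one_ne_zero x)]
    cases k with
    | zero => simp
    | succ k => rw [mul_assoc, hfH, Nat.add_sub_cancel, mul_assoc, ← pow_succ]
  have hfk : ContDiff ℝ 1 (f ^ k) := hf.pow k
  rw [deriv_smul (hfk.differentiable one_ne_zero x)
    ((hH.smul hg).differentiable one_ne_zero x), Pi.pow_apply, Pi.smul_apply', smul_smul, hpow]
  module

lemma oscIntegral_pow_succ_smul (hab : a ≤ b) (hf : ContDiff ℝ 1 f) (hH : ContDiff ℝ 1 H)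
    (hfH : ∀ x ∈ Icc a b, deriv f x * H x = f x) {g : ℝ → ℂ} (hg : ContDiff ℝ 1 g)
    (hsupp : g.support ⊆ Icc a b) (k : ℕ) (lam : ℝ) :
    oscIntegral f a b (f ^ k • ((k : ℝ) • g + deriv (H • g))) lam =
      -(2 * Real.pi * Complex.I * lam) *
        oscIntegral f a b (f ^ (k + 1) • g) lam := by
  obtain ⟨hga, hgb⟩ := eq_zero_of_support_subset_Icc hg.continuous hsupp
  have hderiv : EqOn (f ^ k • ((k : ℝ) • g + deriv (H • g)))
      (deriv (f ^ k • H • g)) (uIcc a b) := fun x hx =>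
    (deriv_pow_smul_smul hf hH hg (hfH x (uIcc_of_le hab ▸ hx)) k).symm
  have hphase : EqOn (deriv f • f ^ k • H • g)
      (f ^ (k + 1) • g) (uIcc a b) := fun x hx => by
    simp only [Pi.smul_apply', Pi.mul_apply, Pi.pow_apply, smul_smul]
    rw [pow_succ, ← hfH x (uIcc_of_le hab ▸ hx), mul_left_comm]
  have hfk : ContDiff ℝ 1 (f ^ k) := hf.pow k
  rw [oscIntegral_congr hderiv, oscIntegral_deriv hf (hfk.smul (hH.smul hg))
    (by simp [hga]) (by simp [hgb]), oscIntegral_congr hphase]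

lemma mul_norm_oscIntegral_pow_succ_smul_le (hab : a ≤ b) (hf : ContDiff ℝ 1 f)
    (hH : ContDiff ℝ 1 H) (hfH : ∀ x ∈ Icc a b, deriv f x * H x = f x) {g : ℝ → ℂ}
    (hg : ContDiff ℝ 1 g) (hsupp : g.support ⊆ Icc a b) (k : ℕ) {lam : ℝ} (hlam : 0 ≤ lam) :
    lam * ‖oscIntegral f a b (f ^ (k + 1) • g) lam‖ ≤
      ‖oscIntegral f a b (f ^ k • ((k : ℝ) • g + deriv (H • g))) lam‖ := by
  rw [oscIntegral_pow_succ_smul hab hf hH hfH hg hsupp, norm_mul, norm_neg, norm_mul,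
    Complex.norm_real, Real.norm_of_nonneg hlam]
  gcongr
  exact le_mul_of_one_le_left hlam one_le_norm_two_pi_I

lemma exists_norm_oscIntegral_le (hab : a ≤ b) (hf : ContDiff ℝ 1 f) (hR : ContDiff ℝ 1 R)
    (hfR : ∀ x ∈ Icc a b, deriv f x * R x = x - x₀) :
    ∃ C, 0 ≤ C ∧ ∀ (g : ℝ → ℂ) (M lam : ℝ), ContDiff ℝ 1 g → g.support ⊆ Icc a b →
      IteratedDerivBoundOn 1 g (Icc a b) M → 0 < lam →
      ‖oscIntegral f a b g lam‖ ≤ C * M / √lam := by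
  obtain ⟨A, hA, hRA⟩ := exists_iteratedDerivBoundOn isCompact_Icc hR (K := Icc a b)
  refine ⟨(2 * Real.pi + (b - a)) * (1 + 2 * A), by nlinarith [Real.pi_pos],
    fun g M lam hg hsupp hgM hlam => ?_⟩
  have hM : 0 ≤ M := (norm_nonneg _).trans (hgM.norm_le (left_mem_Icc.2 hab))
  obtain ⟨hga, hgb⟩ := eq_zero_of_support_subset_Icc hg.continuous hsupp
  have hRg : IteratedDerivBoundOn 1 (R • g) (Icc a b) ((1 + 2 * A) * M) :=
    fun i hi x hx => (hRA.smul hgM hA hR hg i hi x hx).trans (by linarith)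
  rw [mul_assoc (2 * Real.pi + (b - a))]
  refine norm_oscIntegral_le_div_sqrt hab hlam hf hg.continuous (hR.smul hg) (x₀ := x₀)
    (by simp [hga]) (by simp [hgb]) (fun x hx => ?_) (fun x hx => ?_) hRg
  · rw [Pi.smul_apply', smul_smul, hfR x hx]
  · exact (hgM.norm_le hx).trans (by nlinarith)

theorem exists_norm_oscIntegral_pow_smul_le (hab : a ≤ b) (hf : ContDiff ℝ 1 f)
    (hR : ContDiff ℝ 1 R) (hfR : ∀ x ∈ Icc a b, deriv f x * R x = x - x₀)
    (hH : ContDiff ℝ ∞ H) (hfH : ∀ x ∈ Icc a b, deriv f x * H x = f x) (k : ℕ) :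
    ∃ C, 0 ≤ C ∧ ∀ (g : ℝ → ℂ) (M lam : ℝ), ContDiff ℝ (k + 1 : ℕ) g → g.support ⊆ Icc a b →
      IteratedDerivBoundOn (k + 1) g (Icc a b) M → 0 < lam →
      ‖oscIntegral f a b (f ^ k • g) lam‖ ≤ C * M / (lam ^ k * √lam) := by
  induction k with
  | zero => simpa using exists_norm_oscIntegral_le hab hf hR hfR
  | succ k ih =>
    obtain ⟨C, hC, ih⟩ := ih
    have hHn : ContDiff ℝ (k + 1 + 1 : ℕ) H := hH.of_le (mod_cast le_top)
    obtain ⟨A, hA, hHA⟩ := exists_iteratedDerivBoundOn isCompact_Icc hHn (K := Icc a b)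
    refine ⟨C * (k + 2 ^ (k + 2) * A), by positivity, fun g M lam hg hsupp hgM hlam => ?_⟩
    have hg1 : ContDiff ℝ (k + 1 : ℕ) g := hg.of_le (mod_cast Nat.le_succ _)
    have hHg : ContDiff ℝ (k + 1 : ℕ) (deriv (H • g)) :=
      ContDiff.deriv' (mod_cast hHn.smul hg)
    have hbound : IteratedDerivBoundOn (k + 1)
        ((k : ℝ) • g + deriv (H • g)) (Icc a b)
        ((k + 2 ^ (k + 2) * A) * M) := by
      have := ((hgM.of_le (Nat.le_succ _)).const_smul k).add (hHA.smul hgM hA hHn hg).deriv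
        (contDiff_const.smul hg1) hHg
      rwa [Nat.abs_cast, ← add_mul] at this
    have hsupp' : ((k : ℝ) • g + deriv (H • g)).support ⊆ Icc a b :=
      (Function.support_add _ _).trans <| union_subset
        ((Function.support_const_smul_subset _ _).trans hsupp)
        (support_deriv_subset_Icc ((Function.support_smul_subset_right _ _).trans hsupp))
    have hg' : ContDiff ℝ (k + 1 : ℕ) ((k : ℝ) • g + deriv (H • g)) :=
      (contDiff_const.smul hg1).add hHg
    have hrec : lam * ‖oscIntegral f a b (f ^ (k + 1) • g) lam‖ ≤
        C * ((k + 2 ^ (k + 2) * A) * M) / (lam ^ k * √lam) :=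
      (mul_norm_oscIntegral_pow_succ_smul_le hab hf (hH.of_le (mod_cast le_top)) hfH
        (hg.of_le (mod_cast Nat.le_add_left _ _)) hsupp k hlam.le).trans
        (ih _ _ lam hg' hsupp' hbound hlam)
    rw [le_div_iff₀ (by positivity)] at hrec ⊢
    linear_combination hrec

end PhasePowers

/-! ### Differentiation in the oscillation parameter -/

lemma iteratedDeriv_oscIntegral {f : ℝ → ℝ} (hf : ContDiff ℝ ∞ f) {w : ℝ → ℝ → ℂ}
    {U : Set (ℝ × ℝ)} (hU : IsOpen U) (hw : ContDiffOn ℝ ∞ (Function.uncurry w) U) {a b lam : ℝ}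
    (hlam : uIcc a b ×ˢ {lam} ⊆ U) (j : ℕ) :
    iteratedDeriv j (fun l => oscIntegral f a b (w · l) l) lam =
      ∑ i ∈ Finset.range (j + 1), j.choose i * (2 * Real.pi * Complex.I) ^ i *
        oscIntegral f a b (f ^ i • fun x => iteratedDeriv (j - i) (w x) lam) lam := by
  have he : ContDiff ℝ ∞ fun p : ℝ × ℝ => e (p.2 * f p.1) := contDiff_e.comp (by fun_prop)
  have hleibniz : ∀ x ∈ uIcc a b, iteratedDeriv j (fun l => e (l * f x) * w x l) lam =
      ∑ i ∈ Finset.range (j + 1), j.choose i * (2 * Real.pi * Complex.I) ^ i *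
        (e (lam * f x) * (f ^ i • fun x => iteratedDeriv (j - i) (w x) lam) x) := fun x hx => by
    have hxU : (x, lam) ∈ U := hlam ⟨hx, rfl⟩
    have hwx : ContDiffAt ℝ ∞ (w x) lam :=
      (hw.contDiffAt (hU.mem_nhds hxU)).comp lam (f := fun l => (x, l)) (by fun_prop)
    have hex : ContDiff ℝ j fun l => e (l * f x) := contDiff_e.comp (by fun_prop)
    rw [iteratedDeriv_fun_mul hex.contDiffAt (hwx.of_le (mod_cast le_top))]
    refine Finset.sum_congr rfl fun i _ => ?_
    rw [iteratedDeriv_e_mul, Pi.smul_apply', Pi.pow_apply, Complex.real_smul]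
    push_cast
    ring
  have hcont (i : ℕ) : ContinuousOn (fun x =>
      e (lam * f x) * (f ^ i • fun x => iteratedDeriv (j - i) (w x) lam) x) (uIcc a b) := by
    have hwi : ContinuousOn (fun x => iteratedDeriv (j - i) (w x) lam) (uIcc a b) :=
      (contDiffOn_iteratedDeriv_snd hU hw (j - i)).continuousOn.comp (f := fun x => (x, lam))
        (by fun_prop) fun x hx => hlam ⟨hx, rfl⟩
    have hex : Continuous fun x => e (lam * f x) := he.continuous.comp (f := (·, lam)) (by fun_prop)
    exact hex.continuousOn.mul ((hf.continuous.pow i).continuousOn.smul hwi)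
  simp only [oscIntegral]
  rw [iteratedDeriv_intervalIntegral (G := fun p => e (p.2 * f p.1) * w p.1 p.2) hU
    (he.contDiffOn.mul hw) hlam, intervalIntegral.integral_congr hleibniz,
    intervalIntegral.integral_finsetSum fun i _ =>
      ((hcont i).intervalIntegrable).const_mul _]
  simp only [intervalIntegral.integral_const_mul]

/-- A family of amplitudes `w(·; λ)`, smooth on the open neighbourhood `U` of `ℝ × [1, ∞)`,
supported in `[a, b]` and inert in the sense that `|λ^j ∂_x^i ∂_λ^j w(x; λ)| ≤ C i j * Z`. -/
structure IsInertFamily (a b : ℝ) (C : ℕ → ℕ → ℝ) (Z : ℝ) (U : Set (ℝ × ℝ)) (w : ℝ → ℝ → ℂ) :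
    Prop where
  pos : 0 < Z
  isOpen : IsOpen U
  subset : univ ×ˢ Ici 1 ⊆ U
  contDiffOn : ContDiffOn ℝ ∞ (Function.uncurry w) U
  support_subset : ∀ lam, 1 ≤ lam → (fun x => w x lam).support ⊆ Icc a b
  bound : ∀ i j x lam, 1 ≤ lam →
    lam ^ j * ‖iteratedDeriv j (fun l => iteratedDeriv i (fun t => w t l) x) lam‖ ≤ C i j * Z

namespace IsInertFamily

variable {a b : ℝ} {C : ℕ → ℕ → ℝ} {Z : ℝ} {U : Set (ℝ × ℝ)} {w : ℝ → ℝ → ℂ} {lam : ℝ}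

lemma mem (hw : IsInertFamily a b C Z U w) (hlam : 1 ≤ lam) (x : ℝ) : (x, lam) ∈ U :=
  hw.subset ⟨mem_univ x, hlam⟩

lemma contDiff_iteratedDeriv (hw : IsInertFamily a b C Z U w) (hlam : 1 ≤ lam) (m : ℕ) :
    ContDiff ℝ ∞ fun x => iteratedDeriv m (w x) lam :=
  (contDiffOn_iteratedDeriv_snd hw.isOpen hw.contDiffOn m).comp_contDiff
    (contDiff_prodMk_left lam) (hw.mem hlam)

lemma support_iteratedDeriv_subset (hw : IsInertFamily a b C Z U w) (hlam : 1 ≤ lam) (m : ℕ) :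
    (fun x => iteratedDeriv m (w x) lam).support ⊆ Icc a b := by
  refine Function.support_subset_iff'.2 fun x hx => ?_
  have hzero : EqOn (w x) 0 (Ici 1) := fun l hl =>
    Function.notMem_support.1 fun h => hx (hw.support_subset l hl h)
  have hsmooth : ContDiffAt ℝ m (w x) lam :=
    ((hw.contDiffOn.contDiffAt (hw.isOpen.mem_nhds (hw.mem hlam x))).of_le
      (mod_cast le_top)).comp lam (f := fun l => (x, l)) (by fun_prop)
  rw [← iteratedDerivWithin_eq_iteratedDeriv (uniqueDiffOn_Ici 1) hsmooth hlam,
    iteratedDerivWithin_congr hzero hlam]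
  simp

lemma iteratedDerivBoundOn (hw : IsInertFamily a b C Z U w) (hlam : 1 ≤ lam) (n m : ℕ)
    (K : Set ℝ) :
    IteratedDerivBoundOn n (fun x => iteratedDeriv m (w x) lam) K
      ((∑ i ∈ Finset.range (n + 1), |C i m|) * Z / lam ^ m) := fun i hi x _ => by
  have hZ := hw.pos.le
  have hC : C i m ≤ ∑ i ∈ Finset.range (n + 1), |C i m| :=
    (le_abs_self _).trans (Finset.single_le_sum (f := fun i => |C i m|)
      (fun _ _ => abs_nonneg _) (Finset.mem_range_succ_iff.2 hi))
  have hcomm := iteratedDeriv_comm hw.isOpen hw.contDiffOn i m (hw.mem hlam x)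
  simp only [Function.uncurry_apply_pair] at hcomm
  rw [le_div_iff₀' (by positivity), hcomm]
  exact (hw.bound i m x lam hlam).trans (by gcongr)

end IsInertFamily

section Main

variable {f : ℝ → ℝ} {a b x₀ : ℝ}

lemma exists_norm_oscIntegral_pow_smul_iteratedDeriv_le (hab : a ≤ b) (hf : ContDiff ℝ ∞ f)
    (hfx₀ : f x₀ = 0) (hf'x₀ : deriv f x₀ = 0) (hf''x₀ : deriv (deriv f) x₀ ≠ 0)
    (hf' : ∀ x ∈ Icc a b, x ≠ x₀ → deriv f x ≠ 0) (Cw : ℕ → ℕ → ℝ) (k m : ℕ) :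
    ∃ C, 0 ≤ C ∧ ∀ Z U w lam, IsInertFamily a b Cw Z U w → 1 ≤ lam →
      ‖oscIntegral f a b (f ^ k • fun x => iteratedDeriv m (w x) lam) lam‖ ≤
        C * Z / (lam ^ (k + m) * √lam) := by
  obtain ⟨R, hR, hfR⟩ := exists_contDiff_deriv_mul_eq_sub hf isClosed_Icc hf'x₀ hf''x₀ hf'
  have hfH : ∀ x ∈ Icc a b, deriv f x * (R * dslope f x₀) x = f x := fun x hx => by
    rw [Pi.mul_apply, ← mul_assoc, hfR x hx]
    exact sub_smul_dslope_of_zero hfx₀ x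
  obtain ⟨C, hC, hbound⟩ := exists_norm_oscIntegral_pow_smul_le hab (hf.of_le (mod_cast le_top))
    (hR.of_le (mod_cast le_top)) hfR (hR.mul (contDiff_dslope hf x₀)) hfH k
  refine ⟨C * ∑ i ∈ Finset.range (k + 1 + 1), |Cw i m|, by positivity,
    fun Z U w lam hw hlam => ?_⟩
  refine (hbound _ _ lam ((hw.contDiff_iteratedDeriv hlam m).of_le (mod_cast le_top))
    (hw.support_iteratedDeriv_subset hlam m) (hw.iteratedDerivBoundOn hlam (k + 1) m _)
    (by positivity)).trans_eq ?_
  have : lam ≠ 0 := by positivity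
  field

theorem exists_norm_iteratedDeriv_oscIntegral_le (hab : a ≤ b) (hf : ContDiff ℝ ∞ f)
    (hfx₀ : f x₀ = 0) (hf'x₀ : deriv f x₀ = 0) (hf''x₀ : deriv (deriv f) x₀ ≠ 0)
    (hf' : ∀ x ∈ Icc a b, x ≠ x₀ → deriv f x ≠ 0) (Cw : ℕ → ℕ → ℝ) (j : ℕ) :
    ∃ C, 0 < C ∧ ∀ Z U w lam, IsInertFamily a b Cw Z U w → 1 ≤ lam →
      ‖iteratedDeriv j (fun l => oscIntegral f a b (w · l) l) lam‖ ≤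
        C * Z / lam ^ ((1 : ℝ) / 2 + j) := by
  choose C hC hterm using exists_norm_oscIntegral_pow_smul_iteratedDeriv_le hab hf hfx₀ hf'x₀
    hf''x₀ hf' Cw
  set c : ℕ → ℂ := fun i => j.choose i * (2 * Real.pi * Complex.I) ^ i
  have hsum : 0 ≤ ∑ i ∈ Finset.range (j + 1), ‖c i‖ * C i (j - i) :=
    Finset.sum_nonneg fun i _ => mul_nonneg (norm_nonneg _) (hC _ _)
  refine ⟨∑ i ∈ Finset.range (j + 1), ‖c i‖ * C i (j - i) + 1, by positivity,
    fun Z U w lam hw hlam => ?_⟩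
  have hZ := hw.pos.le
  have hpow : lam ^ ((1 : ℝ) / 2 + j) = lam ^ j * √lam := by
    rw [Real.rpow_add (by positivity), Real.rpow_natCast, Real.sqrt_eq_rpow, mul_comm]
  have hlamU : uIcc a b ×ˢ {lam} ⊆ U :=
    (prod_mono (subset_univ _) (singleton_subset_iff.2 hlam)).trans hw.subset
  rw [iteratedDeriv_oscIntegral hf hw.isOpen hw.contDiffOn hlamU, hpow]
  calc _ ≤ ∑ i ∈ Finset.range (j + 1), ‖c i‖ * (C i (j - i) * Z / (lam ^ j * √lam)) := by
        refine norm_sum_le_of_le _ fun i hi => norm_mul_le_of_le le_rfl ?_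
        have hij : i + (j - i) = j := Nat.add_sub_cancel' (Finset.mem_range_succ_iff.1 hi)
        simpa only [hij] using hterm i (j - i) Z U w lam hw hlam
    _ = (∑ i ∈ Finset.range (j + 1), ‖c i‖ * C i (j - i)) * Z / (lam ^ j * √lam) := by
        simp only [Finset.sum_mul, Finset.sum_div, mul_assoc, mul_div_assoc]
    _ ≤ _ := by
        gcongr
        linarith

end Main

end StationaryPhase

/-- Stationary phase with differentiation in the oscillation parameter
(Sogge, Theorem 1.1.1): if `f` has a single nondegenerate stationary point
`x₀ ∈ (a,b)` with `f(x₀) = f'(x₀) = 0`, and the family of weights `w(·;λ)` is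
supported in `[a,b]` with `|λ^j ∂_x^i ∂_λ^j w| ≤ C_{i,j} Z`, then each
`λ`-derivative of order `j` of `∫ e(λf(x)) w(x;λ) dx` is `≤ C Z λ^{-(1/2+j)}`,
where `C` depends only on `j`, `f`, `a`, `b` and the constants `C_{i,j}`. -/
theorem stmt3 (a b : ℝ) (hab : a < b) (f : ℝ → ℝ) (Ω : Set ℝ) (hΩ : IsOpen Ω)
    (hsub : Set.Icc a b ⊆ Ω) (hf : ContDiffOn ℝ (⊤ : ℕ∞) f Ω)
    (x₀ : ℝ) (hx₀ : x₀ ∈ Set.Ioo a b) (hfx₀ : f x₀ = 0) (hf'x₀ : deriv f x₀ = 0)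
    (hf''x₀ : deriv (deriv f) x₀ ≠ 0)
    (hf' : ∀ x ∈ Set.Icc a b, x ≠ x₀ → deriv f x ≠ 0)
    (Cw : ℕ → ℕ → ℝ) (j : ℕ) :
    ∃ C : ℝ, 0 < C ∧
      ∀ (Z : ℝ) (w : ℝ → ℝ → ℂ) (Ω' : Set (ℝ × ℝ)),
        0 < Z → IsOpen Ω' → (Set.univ ×ˢ Set.Ici (1 : ℝ)) ⊆ Ω' →
        ContDiffOn ℝ (⊤ : ℕ∞) (Function.uncurry w) Ω' →
        (∀ lam : ℝ, 1 ≤ lam → Function.support (fun x => w x lam) ⊆ Set.Icc a b) →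
        (∀ i jj : ℕ, ∀ x : ℝ, ∀ lam : ℝ, 1 ≤ lam →
          lam ^ jj * ‖iteratedDeriv jj (fun l => iteratedDeriv i (fun t => w t l) x) lam‖
            ≤ Cw i jj * Z) →
        ∀ lam : ℝ, 1 ≤ lam →
          ‖iteratedDeriv j (fun l => ∫ x in a..b, e (l * f x) * w x l) lam‖
            ≤ C * Z / lam ^ ((1 : ℝ) / 2 + j) := by
  obtain ⟨h, hh, hhf⟩ :=
    StationaryPhase.exists_contDiff_eventuallyEq_nhdsSet isClosed_Icc hΩ hsub hf
  have hnear {x : ℝ} (hx : x ∈ Icc a b) : h =ᶠ[𝓝 x] f := hhf.filter_mono (nhds_le_nhdsSet hx)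
  have hx₀' : x₀ ∈ Icc a b := Ioo_subset_Icc_self hx₀
  obtain ⟨C, hC, hbound⟩ := StationaryPhase.exists_norm_iteratedDeriv_oscIntegral_le hab.le hh
    ((hnear hx₀').eq_of_nhds.trans hfx₀) ((hnear hx₀').deriv_eq.trans hf'x₀)
    ((hnear hx₀').deriv.deriv_eq.trans_ne hf''x₀)
    (fun x hx hne => (hnear hx).deriv_eq.trans_ne (hf' x hx hne)) Cw j
  refine ⟨C, hC, fun Z w U hZ hU hsubU hw hsupp hwC lam hlam => ?_⟩
  have hosc : (fun l => ∫ x in a..b, e (l * f x) * w x l) =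
      fun l => StationaryPhase.oscIntegral h a b (w · l) l := funext fun l =>
    intervalIntegral.integral_congr fun x hx => by
      simp only [(hnear (uIcc_of_le hab.le ▸ hx)).eq_of_nhds]
  rw [hosc]
  exact hbound Z U w lam ⟨hZ, hU, hsubU, hw, hsupp, hwC⟩ hlam
end

section
/- Let ν, μ be complex numbers with −Re ν < Re μ < 1/2 and let a > 0. Then the improper integral lim_{δ→0⁺, R→∞} ∫_δ^R exp(iax) J_ν(ax) x^{μ−1} dx converges and equals exp(πi(ν+μ)/2) · Γ(ν+μ) · Γ(1/2 − μ) / (√π · (2a)^μ · Γ(ν − μ + 1)). -/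
/-- The Bessel function of the first kind of complex order `ν`, for real
argument `x`, defined by its power series
`J_ν(x) = Σ_{n≥0} (−1)^n (x/2)^{ν+2n} / (n! Γ(ν+n+1))`. -/
noncomputable def besselJC (ν : ℂ) (x : ℝ) : ℂ :=
  ∑' n : ℕ, ((-1 : ℂ) ^ n * ((x : ℂ) / 2) ^ (ν + 2 * n)) /
    ((n.factorial : ℂ) * Complex.Gamma (ν + n + 1))

/-!
Write `β = ν + 1/2`. Poisson's integral expresses `J_ν(x)` as a constant times `x ^ ν * P(x)`, where
`P(x) = ∫₀¹ (s (1 - s)) ^ (β - 1) exp (i x (2 s - 1)) ds`; expanding the exponential, this is a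
computation of the moments of the weight, which satisfy a two-term recurrence.

The function `u = x ^ β P(x)` solves `u'' + u = β (β - 1) x⁻² u`, and the energy
`(|u|² + |u'|²) exp (|β (β - 1)| / x)` of such a perturbed oscillator decreases. Hence
`P(x) = O(x ^ (-Re β))`, so the integral converges absolutely when `Re μ < 1/2`.

To evaluate it, insert a factor `exp (-ε x)`, exchange the integrals over `x` and `s`, and apply
Euler's integral `∫₀^∞ x ^ (α - 1) exp (-r x) dx = r ^ (-α) Γ(α)` with `α = ν + μ` and
`r = ε - 2 i s`. As `ε → 0⁺` what remains is the Beta integral of `s ^ (-α) (s (1 - s)) ^ (β - 1)`.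
-/

open MeasureTheory Set Filter Topology Asymptotics Complex
open scoped Real Nat

section Preliminaries

lemma tendsto_intervalIntegral_nhdsGT_prod_atTop {E : Type*} [NormedAddCommGroup E]
    [NormedSpace ℝ E] {f : ℝ → E} {a : ℝ} (hf : IntegrableOn f (Ioi a)) :
    Tendsto (fun p : ℝ × ℝ => ∫ x in p.1..p.2, f x) (𝓝[>] a ×ˢ atTop)
      (𝓝 (∫ x in Ioi a, f x)) := by
  have hleft : Tendsto Prod.fst (𝓝[>] a ×ˢ (atTop : Filter ℝ)) (𝓝 a) :=
    tendsto_fst.mono_right nhdsWithin_le_nhds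
  have hcover := (aecover_Ioi_of_Ioi (μ := volume) hleft).inter (aecover_Iic tendsto_snd)
  refine (hcover.integral_tendsto_of_countably_generated hf).congr' ?_
  have hmem : ∀ᶠ y in 𝓝[>] a, y ∈ Ioo a (a + 1) := Ioo_mem_nhdsGT (lt_add_one a)
  filter_upwards [hmem.prod_mk (eventually_ge_atTop (a + 1))] with p hp
  have hsub : Ioc p.1 p.2 ⊆ Ioi a := fun x hx => hp.1.1.trans hx.1
  rw [intervalIntegral.integral_of_le (hp.1.2.le.trans hp.2), Ioi_inter_Iic,
    Measure.restrict_restrict measurableSet_Ioc, inter_eq_left.2 hsub]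

lemma hasMellin_congr {E : Type*} [NormedAddCommGroup E] [NormedSpace ℂ E] {f g : ℝ → E} {s : ℂ}
    {m : E} (hfg : EqOn f g (Ioi 0)) : HasMellin f s m ↔ HasMellin g s m := by
  have hkernel : EqOn (fun x : ℝ => (x : ℂ) ^ (s - 1) • f x) (fun x => (x : ℂ) ^ (s - 1) • g x)
      (Ioi 0) := fun x hx => congrArg (_ • ·) (hfg hx)
  rw [HasMellin, HasMellin, MellinConvergent, MellinConvergent,
    integrableOn_congr_fun hkernel measurableSet_Ioi, mellin, mellin,
    setIntegral_congr_fun measurableSet_Ioi hkernel]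

lemma eqOn_re_pos_of_forall_ofReal_pos {E : Type*} [NormedAddCommGroup E] [NormedSpace ℂ E]
    [CompleteSpace E] {f g : ℂ → E} (hf : DifferentiableOn ℂ f {z | 0 < z.re})
    (hg : DifferentiableOn ℂ g {z | 0 < z.re}) (hfg : ∀ r : ℝ, 0 < r → f r = g r) :
    EqOn f g {z | 0 < z.re} := by
  have hopen : IsOpen {z : ℂ | 0 < z.re} := isOpen_lt continuous_const continuous_re
  have hreal : Tendsto ((↑) : ℝ → ℂ) (𝓝[≠] 1) (𝓝[≠] 1) := by
    simpa using continuous_ofReal.continuousWithinAt.tendsto_nhdsWithin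
      (x := (1 : ℝ)) (s := {1}ᶜ) (t := {1}ᶜ) fun x hx => by simpa using hx
  refine (hf.analyticOnNhd hopen).eqOn_of_preconnected_of_frequently_eq (hg.analyticOnNhd hopen)
    (convex_halfSpace_re_gt 0).isPreconnected (z₀ := 1) (by simp) (hreal.frequently ?_)
  have hpos : ∀ᶠ r in 𝓝[≠] (1 : ℝ), 0 < r := nhdsWithin_le_nhds (Ioi_mem_nhds one_pos)
  exact hpos.frequently.mono hfg

lemma norm_cpow_le_rpow_mul_exp_pi_mul_abs_im (z w : ℂ) :
    ‖z ^ w‖ ≤ ‖z‖ ^ w.re * Real.exp (π * |w.im|) := by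
  refine (norm_cpow_le z w).trans ?_
  rw [div_eq_mul_inv, ← Real.exp_neg]
  gcongr
  calc -(z.arg * w.im) ≤ |z.arg| * |w.im| := (neg_le_abs _).trans_eq (abs_mul _ _)
    _ ≤ π * |w.im| := by gcongr; exact abs_arg_le_pi z

lemma ofReal_mul_I_cpow {r : ℝ} (hr : 0 < r) (w : ℂ) :
    (r * I) ^ w = exp (π * I * w / 2) * r ^ w := by
  have hr' : (r : ℂ) ≠ 0 := ofReal_ne_zero.2 hr.ne'
  rw [cpow_def_of_ne_zero (mul_ne_zero hr' I_ne_zero), cpow_def_of_ne_zero hr',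
    log_ofReal_mul hr I_ne_zero, log_I, ofReal_log hr.le, ← exp_add]
  ring_nf

lemma cpow_eq_cpow_sub_one_mul {z : ℂ} (hz : z ≠ 0) (w : ℂ) : z ^ w = z ^ (w - 1) * z := by
  rw [cpow_sub _ _ hz, cpow_one, div_mul_cancel₀ _ hz]

lemma continuousOn_ofReal_cpow_const (w : ℂ) : ContinuousOn (fun x : ℝ => (x : ℂ) ^ w) (Ioi 0) :=
  fun x hx => (continuousAt_ofReal_cpow_const x w (.inr (ne_of_gt hx))).continuousWithinAt

end Preliminaries

section PerturbedOscillator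

variable {E : Type*} [NormedAddCommGroup E] [InnerProductSpace ℝ E] {u v w : ℝ → E} {c : ℝ}

lemma antitoneOn_oscillator_energy (hc : 0 ≤ c) (hu : ∀ x > 0, HasDerivAt u (v x) x)
    (hv : ∀ x > 0, HasDerivAt v (w x) x) (hw : ∀ x > 0, ‖w x + u x‖ ≤ c / x ^ 2 * ‖u x‖) :
    AntitoneOn (fun x => (‖u x‖ ^ 2 + ‖v x‖ ^ 2) * Real.exp (c / x)) (Ioi 0) := by
  -- `exp (c / x)` has logarithmic derivative `-c / x ^ 2`, which absorbs the perturbation.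
  have hderiv : ∀ x > 0, HasDerivAt (fun x => (‖u x‖ ^ 2 + ‖v x‖ ^ 2) * Real.exp (c / x))
      ((2 * inner ℝ (v x) (w x + u x) - c / x ^ 2 * (‖u x‖ ^ 2 + ‖v x‖ ^ 2)) *
        Real.exp (c / x)) x := by
    intro x hx
    have hexp : HasDerivAt (fun x : ℝ => Real.exp (c / x))
        (Real.exp (c / x) * (c * -(x ^ 2)⁻¹)) x := by
      simpa only [div_eq_mul_inv] using ((hasDerivAt_inv hx.ne').const_mul c).exp
    refine (((hu x hx).norm_sq.add (hv x hx).norm_sq).mul hexp).congr_deriv ?_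
    simp only [Pi.add_apply]
    rw [inner_add_right, real_inner_comm (u x) (v x)]
    ring
  have hderiv_nonpos : ∀ x > 0,
      (2 * inner ℝ (v x) (w x + u x) - c / x ^ 2 * (‖u x‖ ^ 2 + ‖v x‖ ^ 2)) *
        Real.exp (c / x) ≤ 0 := by
    intro x hx
    refine mul_nonpos_of_nonpos_of_nonneg (sub_nonpos.2 ?_) (Real.exp_nonneg _)
    calc 2 * inner ℝ (v x) (w x + u x) ≤ 2 * (‖v x‖ * (c / x ^ 2 * ‖u x‖)) := by
          gcongr
          exact (real_inner_le_norm _ _).trans (by gcongr; exact hw x hx)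
      _ = c / x ^ 2 * (2 * ‖u x‖ * ‖v x‖) := by ring
      _ ≤ c / x ^ 2 * (‖u x‖ ^ 2 + ‖v x‖ ^ 2) := by gcongr; exact two_mul_le_add_sq _ _
  exact antitoneOn_of_hasDerivWithinAt_nonpos (convex_Ioi 0)
    (fun x hx => (hderiv x hx).continuousAt.continuousWithinAt)
    (fun x hx => (hderiv x (interior_subset hx)).hasDerivWithinAt)
    (fun x hx => hderiv_nonpos x (interior_subset hx))

lemma isBigO_one_of_perturbed_oscillator (hc : 0 ≤ c) (hu : ∀ x > 0, HasDerivAt u (v x) x)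
    (hv : ∀ x > 0, HasDerivAt v (w x) x) (hw : ∀ x > 0, ‖w x + u x‖ ≤ c / x ^ 2 * ‖u x‖) :
    u =O[atTop] (fun _ => (1 : ℝ)) := by
  refine .of_bound (√((‖u 1‖ ^ 2 + ‖v 1‖ ^ 2) * Real.exp (c / 1))) ?_
  filter_upwards [eventually_ge_atTop 1] with x hx
  have hx0 : 0 < x := one_pos.trans_le hx
  rw [norm_one, mul_one]
  refine Real.le_sqrt_of_sq_le ?_
  calc ‖u x‖ ^ 2 ≤ ‖u x‖ ^ 2 + ‖v x‖ ^ 2 := le_add_of_nonneg_right (sq_nonneg _)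
    _ ≤ (‖u x‖ ^ 2 + ‖v x‖ ^ 2) * Real.exp (c / x) :=
      le_mul_of_one_le_right (by positivity) (Real.one_le_exp (by positivity))
    _ ≤ _ := antitoneOn_oscillator_energy hc hu hv hw (mem_Ioi.2 one_pos) hx0 hx

end PerturbedOscillator

section LaplaceMellin

lemma integrableOn_rpow_mul_exp_neg_mul {p b : ℝ} (hp : -1 < p) (hb : 0 < b) :
    IntegrableOn (fun t : ℝ => t ^ p * Real.exp (-(b * t))) (Ioi 0) := by
  simpa using integrableOn_rpow_mul_exp_neg_mul_rpow hp one_pos hb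

lemma aestronglyMeasurable_cpow_mul_exp_neg_mul (w r : ℂ) :
    AEStronglyMeasurable (fun t : ℝ => (t : ℂ) ^ w * exp (-(r * t))) (volume.restrict (Ioi 0)) :=
  ((continuousOn_ofReal_cpow_const w).mul (by fun_prop)).aestronglyMeasurable measurableSet_Ioi

lemma norm_cpow_mul_exp_neg_mul (w r : ℂ) {t : ℝ} (ht : 0 < t) :
    ‖(t : ℂ) ^ w * exp (-(r * t))‖ = t ^ w.re * Real.exp (-(r.re * t)) := by
  simp [norm_cpow_eq_rpow_re_of_pos ht, norm_exp]

variable {α r : ℂ}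

lemma integrableOn_cpow_mul_exp_neg_mul (hα : 0 < α.re) (hr : 0 < r.re) :
    IntegrableOn (fun t : ℝ => (t : ℂ) ^ (α - 1) * exp (-(r * t))) (Ioi 0) := by
  refine (integrableOn_rpow_mul_exp_neg_mul (p := (α - 1).re) (by simpa using hα) hr).mono'
    (aestronglyMeasurable_cpow_mul_exp_neg_mul _ _) ?_
  filter_upwards [ae_restrict_mem measurableSet_Ioi] with t ht
  exact (norm_cpow_mul_exp_neg_mul _ _ ht).le

lemma differentiableAt_integral_cpow_mul_exp_neg_mul (hα : 0 < α.re) (hr : 0 < r.re) :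
    DifferentiableAt ℂ (fun z : ℂ => ∫ t in Ioi (0 : ℝ), (t : ℂ) ^ (α - 1) * exp (-(z * t))) r := by
  have hnhds : {z : ℂ | r.re / 2 < z.re} ∈ 𝓝 r :=
    (isOpen_lt continuous_const continuous_re).mem_nhds (half_lt_self hr)
  refine (hasDerivAt_integral_of_dominated_loc_of_deriv_le (μ := volume.restrict (Ioi 0))
    (F := fun z t => (t : ℂ) ^ (α - 1) * exp (-(z * t)))
    (F' := fun z t => (t : ℂ) ^ (α - 1) * exp (-(z * t)) * -t)
    (bound := fun t => t ^ α.re * Real.exp (-(r.re / 2 * t))) hnhds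
    (.of_forall fun z => aestronglyMeasurable_cpow_mul_exp_neg_mul _ _)
    (integrableOn_cpow_mul_exp_neg_mul hα hr)
    ((aestronglyMeasurable_cpow_mul_exp_neg_mul _ _).mul (by fun_prop)) ?_
    (integrableOn_rpow_mul_exp_neg_mul (by linarith) (half_pos hr)) ?_).2.differentiableAt
  · filter_upwards [ae_restrict_mem measurableSet_Ioi] with t (ht : 0 < t) z hz
    calc ‖(t : ℂ) ^ (α - 1) * exp (-(z * t)) * -t‖
        = t ^ (α.re - 1) * t * Real.exp (-(z.re * t)) := by
          rw [norm_mul, norm_cpow_mul_exp_neg_mul _ _ ht, norm_neg, norm_real,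
            Real.norm_of_nonneg ht.le, sub_re, one_re]
          ring
      _ = t ^ α.re * Real.exp (-(z.re * t)) := by
          rw [← Real.rpow_add_one ht.ne', sub_add_cancel]
      _ ≤ t ^ α.re * Real.exp (-(r.re / 2 * t)) := by
          have : r.re / 2 < z.re := hz
          gcongr
  · filter_upwards with t z _
    simpa [mul_assoc] using
      (((hasDerivAt_id z).mul_const (t : ℂ)).neg.cexp).const_mul ((t : ℂ) ^ (α - 1))

lemma integral_cpow_mul_exp_neg_mul_Ioi_of_re_pos (hα : 0 < α.re) (hr : 0 < r.re) :
    ∫ t in Ioi (0 : ℝ), (t : ℂ) ^ (α - 1) * exp (-(r * t)) = (1 / r) ^ α * Gamma α := by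
  refine eqOn_re_pos_of_forall_ofReal_pos
    (f := fun r => ∫ t in Ioi (0 : ℝ), (t : ℂ) ^ (α - 1) * exp (-(r * t)))
    (g := fun r => (1 / r) ^ α * Gamma α)
    (fun z hz => (differentiableAt_integral_cpow_mul_exp_neg_mul hα hz).differentiableWithinAt)
    (fun z (hz : 0 < z.re) => ?_) (fun r hr => integral_cpow_mul_exp_neg_mul_Ioi hα hr) hr
  have hz0 : z ≠ 0 := by rintro rfl; simp at hz
  have hslit : 1 / z ∈ slitPlane := by
    rw [one_div]
    exact .inl (by rw [inv_re]; exact div_pos hz (normSq_pos.2 hz0))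
  exact ((DifferentiableAt.cpow_const (by fun_prop (disch := assumption)) hslit).mul_const
    _).differentiableWithinAt

lemma tendsto_mellin_exp_neg_mul_nhdsGT_zero {f : ℝ → ℂ} (hf : MellinConvergent f α) :
    Tendsto (fun ε : ℝ => mellin (fun t => exp (-(ε * t)) * f t) α) (𝓝[>] 0)
      (𝓝 (mellin f α)) := by
  simp only [mellin, smul_eq_mul, mul_left_comm _ (exp _)]
  refine tendsto_integral_filter_of_dominated_convergence
    (fun t => ‖(t : ℂ) ^ (α - 1) * f t‖) (.of_forall fun ε => ?_) ?_ hf.norm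
    (.of_forall fun t => ?_)
  · exact (Continuous.aestronglyMeasurable (by fun_prop)).mul hf.aestronglyMeasurable
  · filter_upwards [self_mem_nhdsWithin] with ε (hε : 0 < ε)
    filter_upwards [ae_restrict_mem measurableSet_Ioi] with t (ht : 0 < t)
    rw [norm_mul]
    refine mul_le_of_le_one_left (norm_nonneg _) ?_
    rw [norm_exp, Real.exp_le_one_iff]
    simp only [neg_re, re_ofReal_mul, ofReal_re, Left.neg_nonpos_iff]
    positivity
  · have hcont : Continuous fun ε : ℝ => exp (-(ε * t)) * ((t : ℂ) ^ (α - 1) * f t) := by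
      fun_prop
    simpa using (hcont.tendsto 0).mono_left nhdsWithin_le_nhds

end LaplaceMellin

section FiniteFourier

/-- The Fourier integral over `[-1, 1]` of a density `ρ`, with the frequency `2 s - 1` parametrised
by `s ∈ [0, 1]` so that weights of Beta type keep their usual form. -/
noncomputable def finiteFourier (ρ : ℝ → ℂ) (x : ℝ) : ℂ :=
  ∫ s in (0 : ℝ)..1, ρ s * exp (I * x * (2 * s - 1))

variable {ρ : ℝ → ℂ}

lemma norm_exp_I_mul_mul_two_mul_sub_one (x s : ℝ) : ‖exp (I * x * (2 * s - 1))‖ = 1 := by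
  simp [norm_exp]

lemma hasDerivAt_finiteFourier (hρ : IntervalIntegrable ρ volume 0 1) (x : ℝ) :
    HasDerivAt (finiteFourier ρ) (finiteFourier (fun s => ρ s * (I * (2 * s - 1))) x) x := by
  have hρ' : IntervalIntegrable (fun s => ρ s * (I * (2 * s - 1))) volume 0 1 :=
    hρ.mul_continuousOn (by fun_prop)
  have hint : ∀ {ψ : ℝ → ℂ}, IntervalIntegrable ψ volume 0 1 → ∀ y : ℝ,
      IntervalIntegrable (fun s => ψ s * exp (I * y * (2 * s - 1))) volume 0 1 :=
    fun hψ y => hψ.mul_continuousOn (by fun_prop)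
  refine (intervalIntegral.hasDerivAt_integral_of_dominated_loc_of_deriv_le
    (F := fun (y : ℝ) s => ρ s * exp (I * y * (2 * s - 1)))
    (F' := fun (y : ℝ) s => ρ s * (I * (2 * s - 1)) * exp (I * y * (2 * s - 1)))
    (bound := fun s => ‖ρ s * (I * (2 * s - 1))‖) univ_mem
    (.of_forall fun y => (hint hρ y).def'.aestronglyMeasurable) (hint hρ x)
    (hint hρ' x).def'.aestronglyMeasurable ?_ hρ'.norm ?_).2
  · refine .of_forall fun s _ y _ => ?_
    rw [norm_mul, norm_exp_I_mul_mul_two_mul_sub_one, mul_one]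
  · refine .of_forall fun s _ y _ => ?_
    have hphase : HasDerivAt (fun y : ℝ => I * y * (2 * s - 1)) (I * (2 * s - 1)) y := by
      simpa using ((hasDerivAt_id y).ofReal_comp.const_mul I).mul_const (2 * (s : ℂ) - 1)
    exact (hphase.cexp.const_mul (ρ s)).congr_deriv (by ring)

lemma norm_two_mul_sub_one_le_one {s : ℝ} (hs : s ∈ Ioc 0 1) : ‖2 * (s : ℂ) - 1‖ ≤ 1 := by
  have : 2 * (s : ℂ) - 1 = (2 * s - 1 : ℝ) := by push_cast; ring
  rw [this, norm_real, Real.norm_eq_abs, abs_le]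
  constructor <;> linarith [hs.1, hs.2]

lemma hasSum_finiteFourier (hρ : IntervalIntegrable ρ volume 0 1) (x : ℝ) :
    HasSum (fun k : ℕ => (I * x) ^ k / k ! * ∫ s in (0 : ℝ)..1, ρ s * (2 * s - 1) ^ k)
      (finiteFourier ρ x) := by
  simp_rw [← intervalIntegral.integral_const_mul]
  refine intervalIntegral.hasSum_integral_of_dominated_convergence
    (fun k s => ‖ρ s‖ * (|x| ^ k / k !)) (fun k => ?_) (fun k => .of_forall fun s hs => ?_)
    (.of_forall fun s _ => (Real.summable_pow_div_factorial |x|).mul_left _) ?_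
    (.of_forall fun s _ => ?_)
  · have hmoment : IntervalIntegrable (fun s => ρ s * (2 * s - 1) ^ k) volume 0 1 :=
      hρ.mul_continuousOn (by fun_prop)
    exact (hmoment.const_mul _).def'.aestronglyMeasurable
  · rw [uIoc_of_le zero_le_one] at hs
    calc ‖(I * x) ^ k / k ! * (ρ s * (2 * s - 1) ^ k)‖
        = ‖ρ s‖ * (|x| ^ k / k !) * ‖2 * (s : ℂ) - 1‖ ^ k := by simp; ring
      _ ≤ ‖ρ s‖ * (|x| ^ k / k !) :=
        mul_le_of_le_one_right (by positivity)
          (pow_le_one₀ (norm_nonneg _) (norm_two_mul_sub_one_le_one hs))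
  · simp only [tsum_mul_left]
    exact hρ.norm.mul_const _
  · have hexp := (NormedSpace.expSeries_div_hasSum_exp (I * x * (2 * s - 1))).mul_left (ρ s)
    rw [← exp_eq_exp_ℂ] at hexp
    refine hexp.congr_fun fun k => ?_
    rw [mul_pow (I * (x : ℂ))]
    ring

end FiniteFourier

section MellinFiniteFourier

variable {ρ : ℝ → ℂ} {α : ℂ} {ε : ℝ}

lemma integrable_prod_mul_cpow_mul_exp_neg_mul (hρ : IntegrableOn ρ (Ioc 0 1))
    (hα : 0 < α.re) (hε : 0 < ε) :
    Integrable (fun p : ℝ × ℝ => ρ p.2 * ((p.1 : ℂ) ^ (α - 1) * exp (-((ε - 2 * I * p.2) * p.1))))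
      ((volume.restrict (Ioi 0)).prod (volume.restrict (Ioc 0 1))) := by
  have hprod := (integrableOn_cpow_mul_exp_neg_mul hα (r := ε) (by simpa using hε)).mul_prod hρ
  have hphase := hprod.mul_bdd (c := 1) (g := fun p : ℝ × ℝ => exp (2 * I * p.2 * p.1))
    (Continuous.aestronglyMeasurable (by fun_prop)) (.of_forall fun p => by simp [norm_exp])
  refine hphase.congr (.of_forall fun p => ?_)
  have hsplit : exp (-((ε - 2 * I * p.2) * p.1)) = exp (-(ε * p.1)) * exp (2 * I * p.2 * p.1) := by
    rw [← exp_add]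
    ring_nf
  simp only [hsplit]
  ring

lemma mellin_exp_neg_mul_exp_mul_finiteFourier (hρ : IntervalIntegrable ρ volume 0 1)
    (hα : 0 < α.re) (hε : 0 < ε) :
    mellin (fun x => exp (-(ε * x)) * (exp (I * x) * finiteFourier ρ x)) α =
      Gamma α * ∫ s in (0 : ℝ)..1, ρ s * (1 / (ε - 2 * I * s)) ^ α := by
  have hkernel : ∀ x : ℝ,
      (x : ℂ) ^ (α - 1) * (exp (-(ε * x)) * (exp (I * x) * finiteFourier ρ x)) =
        ∫ s in Ioc (0 : ℝ) 1, ρ s * ((x : ℂ) ^ (α - 1) * exp (-((ε - 2 * I * s) * x))) := by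
    intro x
    rw [finiteFourier, intervalIntegral.integral_of_le zero_le_one, ← integral_const_mul,
      ← integral_const_mul, ← integral_const_mul]
    congr with s
    have hsplit : exp (-((ε - 2 * I * s) * x)) =
        exp (-(ε * x)) * exp (I * x) * exp (I * x * (2 * s - 1)) := by
      rw [← exp_add, ← exp_add]
      ring_nf
    rw [hsplit]
    ring
  rw [intervalIntegrable_iff_integrableOn_Ioc_of_le zero_le_one] at hρ
  simp only [mellin, smul_eq_mul, hkernel]
  rw [integral_integral_swap (integrable_prod_mul_cpow_mul_exp_neg_mul hρ hα hε),
    intervalIntegral.integral_of_le zero_le_one, ← integral_const_mul]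
  congr with s
  rw [integral_const_mul, integral_cpow_mul_exp_neg_mul_Ioi_of_re_pos hα (by simpa using hε)]
  ring

lemma norm_one_div_sub_cpow_le (hα : 0 ≤ α.re) (ε : ℝ) {s : ℝ} (hs : 0 < s) :
    ‖(1 / (ε - 2 * I * s) : ℂ) ^ α‖ ≤ 2 ^ (-α.re) * Real.exp (π * |α.im|) * ‖(s : ℂ) ^ (-α)‖ := by
  have hle : 2 * s ≤ ‖(ε - 2 * I * s : ℂ)‖ := by
    simpa [abs_of_pos hs] using abs_im_le_norm (ε - 2 * I * s : ℂ)
  calc ‖(1 / (ε - 2 * I * s) : ℂ) ^ α‖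
      ≤ ‖(1 / (ε - 2 * I * s) : ℂ)‖ ^ α.re * Real.exp (π * |α.im|) :=
        norm_cpow_le_rpow_mul_exp_pi_mul_abs_im _ _
    _ ≤ (1 / (2 * s)) ^ α.re * Real.exp (π * |α.im|) := by
        rw [norm_div, norm_one]
        gcongr
    _ = 2 ^ (-α.re) * Real.exp (π * |α.im|) * ‖(s : ℂ) ^ (-α)‖ := by
        rw [norm_cpow_eq_rpow_re_of_pos hs, neg_re, one_div, Real.inv_rpow (by positivity),
          ← Real.rpow_neg (by positivity), Real.mul_rpow zero_le_two hs.le]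
        ring

lemma tendsto_one_div_sub_cpow (α : ℂ) {s : ℝ} (hs : 0 < s) :
    Tendsto (fun ε : ℝ => (1 / (ε - 2 * I * s) : ℂ) ^ α) (𝓝 0)
      (𝓝 (exp (π * I * α / 2) * 2 ^ (-α) * s ^ (-α))) := by
  have hs0 : (s : ℂ) ≠ 0 := ofReal_ne_zero.2 hs.ne'
  have hbase : (1 / ((0 : ℝ) - 2 * I * s) : ℂ) = ((2 * s)⁻¹ : ℝ) * I := by
    rw [eq_comm, eq_div_iff (by simp [hs0])]
    push_cast
    field_simp
    linear_combination -2 * (s : ℂ) * I_sq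
  have hlimit : (((2 * s)⁻¹ : ℝ) * I) ^ α = exp (π * I * α / 2) * 2 ^ (-α) * s ^ (-α) := by
    have harg : ((2 * s : ℝ) : ℂ).arg ≠ π := by
      rw [arg_ofReal_of_nonneg (by positivity)]
      exact Real.pi_ne_zero.symm
    rw [ofReal_mul_I_cpow (by positivity), ofReal_inv, inv_cpow _ _ harg, ← cpow_neg, ofReal_mul,
      mul_cpow_ofReal_nonneg zero_le_two hs.le, ofReal_ofNat, ← mul_assoc]
  rw [← hlimit, ← hbase]
  refine ContinuousAt.cpow (f := fun ε : ℝ => (1 / (ε - 2 * I * s) : ℂ)) ?_ continuousAt_const ?_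
  · exact continuousAt_const.div (by fun_prop) (by simp [hs0])
  · rw [hbase]
    exact .inr (by simp [hs.ne'])

lemma tendsto_integral_mul_one_div_sub_cpow (hρ : IntervalIntegrable ρ volume 0 1)
    (hρα : IntervalIntegrable (fun s => ρ s * (s : ℂ) ^ (-α)) volume 0 1) (hα : 0 ≤ α.re) :
    Tendsto (fun ε : ℝ => ∫ s in (0 : ℝ)..1, ρ s * (1 / (ε - 2 * I * s)) ^ α) (𝓝 0)
      (𝓝 (exp (π * I * α / 2) * 2 ^ (-α) * ∫ s in (0 : ℝ)..1, ρ s * s ^ (-α))) := by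
  rw [← intervalIntegral.integral_const_mul]
  refine intervalIntegral.tendsto_integral_filter_of_dominated_convergence
    (fun s => 2 ^ (-α.re) * Real.exp (π * |α.im|) * ‖ρ s * (s : ℂ) ^ (-α)‖)
    (.of_forall fun ε => hρ.def'.aestronglyMeasurable.mul
      (Measurable.aestronglyMeasurable (by fun_prop)))
    (.of_forall fun ε => .of_forall fun s hs => ?_) (hρα.norm.const_mul _)
    (.of_forall fun s hs => ?_)
  all_goals rw [uIoc_of_le zero_le_one] at hs
  · rw [norm_mul, norm_mul, mul_left_comm]
    gcongr
    exact norm_one_div_sub_cpow_le hα ε hs.1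
  · rw [mul_left_comm]
    exact (tendsto_one_div_sub_cpow α hs.1).const_mul _

lemma mellin_exp_mul_finiteFourier (hρ : IntervalIntegrable ρ volume 0 1)
    (hρα : IntervalIntegrable (fun s => ρ s * (s : ℂ) ^ (-α)) volume 0 1) (hα : 0 < α.re)
    (hconv : MellinConvergent (fun x => exp (I * x) * finiteFourier ρ x) α) :
    mellin (fun x => exp (I * x) * finiteFourier ρ x) α =
      Gamma α * (exp (π * I * α / 2) * 2 ^ (-α) * ∫ s in (0 : ℝ)..1, ρ s * s ^ (-α)) := by
  have hregularised : ∀ᶠ ε : ℝ in 𝓝[>] 0,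
      mellin (fun x => exp (-(ε * x)) * (exp (I * x) * finiteFourier ρ x)) α =
        Gamma α * ∫ s in (0 : ℝ)..1, ρ s * (1 / (ε - 2 * I * s)) ^ α :=
    eventually_mem_nhdsWithin.mono fun ε hε => mellin_exp_neg_mul_exp_mul_finiteFourier hρ hα hε
  exact tendsto_nhds_unique ((tendsto_mellin_exp_neg_mul_nhdsGT_zero hconv).congr' hregularised)
    (((tendsto_integral_mul_one_div_sub_cpow hρ hρα hα.le).mono_left
      nhdsWithin_le_nhds).const_mul _)

end MellinFiniteFourier

section Ultraspherical

/-- The weight `(s (1 - s)) ^ (β - 1)` on `(0, 1)`: the integrand of the Beta integral `B(β, β)`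
and, up to the substitution `t = 2 s - 1`, the weight of the ultraspherical polynomials. -/
noncomputable def ultrasphericalWeight (β : ℂ) (s : ℝ) : ℂ :=
  (s : ℂ) ^ (β - 1) * (1 - (s : ℂ)) ^ (β - 1)

/-- The `k`-th moment of the ultraspherical weight about the midpoint, in the variable `2 s - 1`. -/
noncomputable def ultrasphericalMoment (β : ℂ) (k : ℕ) : ℂ :=
  ∫ s in (0 : ℝ)..1, ultrasphericalWeight β s * (2 * s - 1) ^ k

variable {β : ℂ}

lemma intervalIntegrable_ultrasphericalWeight (hβ : 0 < β.re) :
    IntervalIntegrable (ultrasphericalWeight β) volume 0 1 :=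
  betaIntegral_convergent hβ hβ

lemma intervalIntegrable_ultrasphericalWeight_mul (hβ : 0 < β.re) {g : ℝ → ℂ} (hg : Continuous g) :
    IntervalIntegrable (fun s => ultrasphericalWeight β s * g s) volume 0 1 :=
  (intervalIntegrable_ultrasphericalWeight hβ).mul_continuousOn hg.continuousOn

lemma ultrasphericalWeight_one_sub (β : ℂ) (s : ℝ) :
    ultrasphericalWeight β (1 - s) = ultrasphericalWeight β s := by
  simp [ultrasphericalWeight, mul_comm]

lemma hasDerivAt_cpow_mul_one_sub_cpow (β : ℂ) {s : ℝ} (hs : s ∈ Ioo 0 1) :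
    HasDerivAt (fun s : ℝ => (s : ℂ) ^ β * (1 - (s : ℂ)) ^ β)
      (ultrasphericalWeight β s * (β * (1 - 2 * s))) s := by
  have hs0 : (s : ℂ) ≠ 0 := ofReal_ne_zero.2 hs.1.ne'
  have hs1 : (1 - s : ℂ) ≠ 0 := mod_cast (sub_pos.2 hs.2).ne'
  have hleft : HasDerivAt (fun s : ℂ => s ^ β) (β * (s : ℂ) ^ (β - 1)) s := by
    simpa using (hasDerivAt_id (s : ℂ)).cpow_const (c := β) (.inl hs.1)
  have hright : HasDerivAt (fun s : ℂ => (1 - s) ^ β) (-(β * (1 - (s : ℂ)) ^ (β - 1))) s := by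
    simpa using ((hasDerivAt_id (s : ℂ)).const_sub 1).cpow_const (c := β)
      (.inl (by simpa using hs.2))
  refine (hleft.mul hright).comp_ofReal.congr_deriv ?_
  rw [ultrasphericalWeight, cpow_eq_cpow_sub_one_mul hs0 β,
    cpow_eq_cpow_sub_one_mul hs1 β]
  ring

lemma integral_ultrasphericalWeight_mul_by_parts (hβ : 0 < β.re) {g g' : ℝ → ℂ}
    (hg : ∀ s, HasDerivAt g (g' s) s) (hg' : Continuous g') :
    ∫ s in (0 : ℝ)..1,
      ultrasphericalWeight β s * (β * (1 - 2 * s) * g s + s * (1 - s) * g' s) = 0 := by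
  have hβ0 : β ≠ 0 := by rintro rfl; simp at hβ
  have hgc : Continuous g := continuous_iff_continuousAt.2 fun s => (hg s).continuousAt
  have hleft : Continuous fun s : ℝ => (s : ℂ) ^ β := continuous_ofReal_cpow_const hβ
  have hright : Continuous fun s : ℝ => (1 - (s : ℂ)) ^ β := by
    simpa [Function.comp_def] using hleft.comp (continuous_sub_left (1 : ℝ))
  rw [intervalIntegral.integral_eq_sub_of_hasDerivAt_of_le
    (f := fun s : ℝ => (s : ℂ) ^ β * (1 - (s : ℂ)) ^ β * g s) zero_le_one
    ((hleft.mul hright).mul hgc).continuousOn (fun s hs => ?_)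
    (intervalIntegrable_ultrasphericalWeight_mul hβ (by fun_prop))]
  · simp [zero_cpow hβ0]
  · refine ((hasDerivAt_cpow_mul_one_sub_cpow β hs).mul (hg s)).congr_deriv ?_
    have hs0 : (s : ℂ) ≠ 0 := ofReal_ne_zero.2 hs.1.ne'
    have hs1 : (1 - s : ℂ) ≠ 0 := mod_cast (sub_pos.2 hs.2).ne'
    have hpow : (s : ℂ) ^ β * (1 - (s : ℂ)) ^ β = ultrasphericalWeight β s * (s * (1 - s)) := by
      rw [ultrasphericalWeight, mul_mul_mul_comm, ← cpow_eq_cpow_sub_one_mul hs0,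
        ← cpow_eq_cpow_sub_one_mul hs1]
    rw [hpow]
    ring

lemma ultrasphericalMoment_add_two (hβ : 0 < β.re) (k : ℕ) :
    (k + 1 + 2 * β) * ultrasphericalMoment β (k + 2) = (k + 1) * ultrasphericalMoment β k := by
  have hderiv (s : ℝ) : HasDerivAt (fun s : ℝ => (2 * (s : ℂ) - 1) ^ (k + 1))
      ((k + 1) * (2 * (s : ℂ) - 1) ^ k * 2) s := by
    simpa using ((((hasDerivAt_id (s : ℂ)).const_mul 2).sub_const 1).pow (k + 1)).comp_ofReal
  have hparts := integral_ultrasphericalWeight_mul_by_parts hβ hderiv (by fun_prop)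
  have hint (j : ℕ) : IntervalIntegrable
      (fun s => ultrasphericalWeight β s * (2 * (s : ℂ) - 1) ^ j) volume 0 1 :=
    intervalIntegrable_ultrasphericalWeight_mul hβ (by fun_prop)
  have hscaled := congrArg (2 * ·) hparts
  rw [mul_zero] at hscaled
  refine (sub_eq_zero.1 (Eq.trans ?_ hscaled)).symm
  rw [ultrasphericalMoment, ultrasphericalMoment,
    ← intervalIntegral.integral_const_mul, ← intervalIntegral.integral_const_mul,
    ← intervalIntegral.integral_const_mul,
    ← intervalIntegral.integral_sub ((hint k).const_mul _) ((hint (k + 2)).const_mul _)]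
  congr with s
  ring

lemma ultrasphericalMoment_of_odd (β : ℂ) {k : ℕ} (hk : Odd k) : ultrasphericalMoment β k = 0 := by
  have hreflect : ultrasphericalMoment β k = -ultrasphericalMoment β k := by
    have hsubst := intervalIntegral.integral_comp_sub_left (a := 0) (b := 1)
      (fun s : ℝ => ultrasphericalWeight β s * (2 * (s : ℂ) - 1) ^ k) 1
    rw [sub_self, sub_zero] at hsubst
    rw [ultrasphericalMoment, ← intervalIntegral.integral_neg, ← hsubst]
    congr with s
    rw [ultrasphericalWeight_one_sub, ← mul_neg, ← hk.neg_pow]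
    push_cast
    ring
  exact self_eq_neg.1 hreflect

lemma ultrasphericalMoment_zero_mul_Gamma (hβ : 0 < β.re) :
    ultrasphericalMoment β 0 * Gamma (β + 1 / 2) = Gamma β * 2 ^ (1 - 2 * β) * √π := by
  have hmoment : ultrasphericalMoment β 0 = betaIntegral β β := by
    simp [ultrasphericalMoment, betaIntegral, ultrasphericalWeight]
  have hGamma : Gamma (2 * β) ≠ 0 := Gamma_ne_zero_of_re_pos (by simpa using hβ)
  have hbeta := Gamma_mul_Gamma_eq_betaIntegral hβ hβ
  rw [← two_mul, ← hmoment] at hbeta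
  refine mul_left_cancel₀ hGamma ?_
  linear_combination -Gamma (β + 1 / 2) * hbeta + Gamma β * Gamma_mul_Gamma_add_half β

lemma re_add_half_add_natCast_pos (hβ : 0 < β.re) (n : ℕ) : 0 < (β + 1 / 2 + n).re := by
  norm_num
  positivity

lemma ultrasphericalMoment_two_mul (hβ : 0 < β.re) (n : ℕ) :
    ultrasphericalMoment β (2 * n) * (4 ^ n * n ! * Gamma (β + 1 / 2 + n)) =
      (2 * n)! * (Gamma β * 2 ^ (1 - 2 * β) * √π) := by
  induction n with
  | zero => simpa using ultrasphericalMoment_zero_mul_Gamma hβ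
  | succ n ih =>
    have hne : β + 1 / 2 + n ≠ 0 := ne_of_apply_ne re (re_add_half_add_natCast_pos hβ n).ne'
    have hrec := ultrasphericalMoment_add_two hβ (2 * n)
    rw [mul_add_one, Nat.cast_succ, ← add_assoc, Gamma_add_one _ hne]
    simp only [Nat.factorial_succ]
    push_cast at hrec ⊢
    linear_combination 2 * (n + 1) * 4 ^ n * n ! * Gamma (β + 1 / 2 + n) * hrec +
      (2 * n + 1) * (2 * n + 2) * ih

end Ultraspherical

section PoissonIntegral

/-- Poisson's integral `∫ (s (1 - s)) ^ (β - 1) exp (i x (2 s - 1)) ds` over `[0, 1]`, which is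
`J_(β - 1/2)(x)` up to a constant and a power of `x`. -/
noncomputable def poissonIntegral (β : ℂ) : ℝ → ℂ :=
  finiteFourier (ultrasphericalWeight β)

variable {β : ℂ}

lemma deriv_poissonIntegral (hβ : 0 < β.re) :
    deriv (poissonIntegral β) =
      finiteFourier fun s => ultrasphericalWeight β s * (I * (2 * s - 1)) :=
  funext fun x =>
    (hasDerivAt_finiteFourier (intervalIntegrable_ultrasphericalWeight hβ) x).deriv

lemma deriv_deriv_poissonIntegral (hβ : 0 < β.re) :
    deriv (deriv (poissonIntegral β)) =
      finiteFourier fun s => ultrasphericalWeight β s * (I * (2 * s - 1)) * (I * (2 * s - 1)) := by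
  rw [deriv_poissonIntegral hβ]
  exact funext fun x => (hasDerivAt_finiteFourier
    (intervalIntegrable_ultrasphericalWeight_mul hβ (by fun_prop)) x).deriv

lemma differentiable_poissonIntegral (hβ : 0 < β.re) : Differentiable ℝ (poissonIntegral β) :=
  fun x => (hasDerivAt_finiteFourier
    (intervalIntegrable_ultrasphericalWeight hβ) x).differentiableAt

lemma differentiable_deriv_poissonIntegral (hβ : 0 < β.re) :
    Differentiable ℝ (deriv (poissonIntegral β)) := by
  rw [deriv_poissonIntegral hβ]
  exact fun x => (hasDerivAt_finiteFourier
    (intervalIntegrable_ultrasphericalWeight_mul hβ (by fun_prop)) x).differentiableAt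

lemma poissonIntegral_ode (hβ : 0 < β.re) (x : ℝ) :
    x * (deriv (deriv (poissonIntegral β)) x + poissonIntegral β x) +
      2 * β * deriv (poissonIntegral β) x = 0 := by
  have hderiv (s : ℝ) : HasDerivAt (fun s : ℝ => exp (I * x * (2 * s - 1)))
      (exp (I * x * (2 * s - 1)) * (I * x * 2)) s := by
    simpa using ((((hasDerivAt_id (s : ℂ)).const_mul 2).sub_const 1).const_mul
      (I * x)).cexp.comp_ofReal
  have hparts := integral_ultrasphericalWeight_mul_by_parts hβ hderiv (by fun_prop)
  have hint {ρ : ℝ → ℂ} (hρ : Continuous ρ) : IntervalIntegrable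
      (fun s => ultrasphericalWeight β s * ρ s * exp (I * x * (2 * s - 1))) volume 0 1 :=
    (intervalIntegrable_ultrasphericalWeight_mul hβ hρ).mul_continuousOn (by fun_prop)
  have h₀ := hint continuous_const (ρ := fun _ => 1)
  have h₁ := hint (ρ := fun s => I * (2 * s - 1)) (by fun_prop)
  have h₂ := hint (ρ := fun s => I * (2 * s - 1) * (I * (2 * s - 1))) (by fun_prop)
  simp only [mul_one, ← mul_assoc] at h₀ h₁ h₂
  have hscaled := congrArg (-2 * I * ·) hparts
  rw [mul_zero] at hscaled
  rw [deriv_deriv_poissonIntegral hβ, deriv_poissonIntegral hβ, ← hscaled]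
  simp only [poissonIntegral, finiteFourier, ← mul_assoc]
  rw [← intervalIntegral.integral_add h₂ h₀, ← intervalIntegral.integral_const_mul,
    ← intervalIntegral.integral_const_mul, ← intervalIntegral.integral_const_mul,
    ← intervalIntegral.integral_add ((h₂.add h₀).const_mul _) (h₁.const_mul _)]
  congr with s
  linear_combination (x * ultrasphericalWeight β s * exp (I * x * (2 * s - 1))) * I_sq

lemma isBigO_cpow_mul_poissonIntegral (hβ : 0 < β.re) :
    (fun x : ℝ => (x : ℂ) ^ β * poissonIntegral β x) =O[atTop] fun _ => (1 : ℝ) := by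
  set P := poissonIntegral β
  have hP (x : ℝ) : HasDerivAt P (deriv P x) x := (differentiable_poissonIntegral hβ x).hasDerivAt
  have hP' (x : ℝ) : HasDerivAt (deriv P) (deriv (deriv P) x) x :=
    (differentiable_deriv_poissonIntegral hβ x).hasDerivAt
  have hpow {x : ℝ} (hx : 0 < x) :
      HasDerivAt (fun x : ℝ => (x : ℂ) ^ β) ((x : ℂ) ^ β * (β / x)) x := by
    have hx0 : (x : ℂ) ≠ 0 := ofReal_ne_zero.2 hx.ne'
    refine ((hasDerivAt_id (x : ℂ)).cpow_const (c := β) (.inl hx)).comp_ofReal.congr_deriv ?_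
    simp only [id_eq, cpow_eq_cpow_sub_one_mul hx0 β]
    field_simp
  refine isBigO_one_of_perturbed_oscillator (c := ‖β * (β - 1)‖)
    (v := fun x => (x : ℂ) ^ β * (β / x * P x + deriv P x))
    (w := fun x => (β * (β - 1) / (x : ℂ) ^ 2 - 1) * ((x : ℂ) ^ β * P x)) (norm_nonneg _)
    (fun x hx => ((hpow hx).mul (hP x)).congr_deriv (by ring)) (fun x hx => ?_)
    (fun x hx => le_of_eq ?_)
  · have hx0 : (x : ℂ) ≠ 0 := ofReal_ne_zero.2 hx.ne'
    have hquot : HasDerivAt (fun x : ℝ => β / (x : ℂ)) (-β / (x : ℂ) ^ 2) x := by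
      simpa [div_eq_mul_inv] using ((hasDerivAt_inv hx0).const_mul β).comp_ofReal
    refine ((hpow hx).mul ((hquot.mul (hP x)).add (hP' x))).congr_deriv ?_
    simp only [Pi.add_apply, Pi.mul_apply]
    field_simp
    linear_combination (x : ℂ) ^ β * x * poissonIntegral_ode hβ x
  · rw [sub_mul, one_mul, sub_add_cancel, norm_mul, norm_div, norm_pow, norm_real,
      Real.norm_of_nonneg hx.le]

lemma poissonIntegral_isBigO_rpow (hβ : 0 < β.re) :
    poissonIntegral β =O[atTop] fun x => x ^ (-β.re) := by
  have hbound := (isBigO_refl (fun x : ℝ => x ^ (-β.re)) atTop).mul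
    (isBigO_cpow_mul_poissonIntegral hβ).norm_left
  simp only [mul_one] at hbound
  refine .of_norm_left (hbound.congr' ?_ .rfl)
  filter_upwards [eventually_gt_atTop 0] with x hx
  rw [norm_mul, norm_cpow_eq_rpow_re_of_pos hx, ← mul_assoc, ← Real.rpow_add hx, neg_add_cancel,
    Real.rpow_zero, one_mul]

lemma mellinConvergent_exp_mul_poissonIntegral {α : ℂ} (hα : 0 < α.re) (hαβ : α.re < β.re) :
    MellinConvergent (fun x => exp (I * x) * poissonIntegral β x) α := by
  have hβ : 0 < β.re := hα.trans hαβ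
  have hcont : Continuous fun x : ℝ => exp (I * x) * poissonIntegral β x :=
    (by fun_prop : Continuous fun x : ℝ => exp (I * x)).mul
      (differentiable_poissonIntegral hβ).continuous
  have htop : (fun x : ℝ => exp (I * x) * poissonIntegral β x) =O[atTop] fun x => x ^ (-β.re) := by
    refine .of_norm_left ?_
    simpa [norm_exp] using (poissonIntegral_isBigO_rpow hβ).norm_left
  have hzero : (fun x : ℝ => exp (I * x) * poissonIntegral β x) =O[𝓝[>] 0]
      fun x => x ^ (-0 : ℝ) := by
    simpa using (hcont.tendsto 0).isBigO_one ℝ |>.mono nhdsWithin_le_nhds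
  exact mellinConvergent_of_isBigO_rpow (hcont.locallyIntegrable.locallyIntegrableOn _) htop hαβ
    hzero hα

lemma hasMellin_exp_mul_poissonIntegral {α : ℂ} (hα : 0 < α.re) (hαβ : α.re < β.re) :
    HasMellin (fun x => exp (I * x) * poissonIntegral β x) α
      (Gamma α * (exp (π * I * α / 2) * 2 ^ (-α) * betaIntegral (β - α) β)) := by
  have hβ : 0 < β.re := hα.trans hαβ
  have hconv := mellinConvergent_exp_mul_poissonIntegral hα hαβ
  have hbeta : EqOn (fun s : ℝ => (s : ℂ) ^ (β - α - 1) * (1 - (s : ℂ)) ^ (β - 1))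
      (fun s => ultrasphericalWeight β s * (s : ℂ) ^ (-α)) (uIoc 0 1) := by
    intro s hs
    have hs0 : (s : ℂ) ≠ 0 := by
      rw [uIoc_of_le zero_le_one] at hs
      exact ofReal_ne_zero.2 hs.1.ne'
    simp only [ultrasphericalWeight]
    rw [mul_right_comm, ← cpow_add _ _ hs0, ← sub_eq_add_neg, sub_right_comm]
  have hint := (betaIntegral_convergent (u := β - α) (by simpa using hαβ) hβ).congr hbeta
  refine ⟨hconv, ?_⟩
  rw [poissonIntegral, mellin_exp_mul_finiteFourier (intervalIntegrable_ultrasphericalWeight hβ)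
    hint hα hconv, betaIntegral,
    intervalIntegral.integral_congr_ae (.of_forall fun s hs => hbeta hs)]

lemma hasSum_poissonIntegral (hβ : 0 < β.re) (x : ℝ) :
    HasSum (fun n : ℕ => (-1) ^ n * ((x : ℂ) / 2) ^ (2 * n) / (n ! * Gamma (β + 1 / 2 + n)) *
      (Gamma β * 2 ^ (1 - 2 * β) * √π)) (poissonIntegral β x) := by
  have heven : HasSum ((fun k : ℕ => (I * x) ^ k / k ! * ultrasphericalMoment β k) ∘ (2 * ·))
      (poissonIntegral β x) := by
    refine (Function.Injective.hasSum_iff (mul_right_injective₀ two_ne_zero) fun k hk => ?_).2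
      (hasSum_finiteFourier (intervalIntegrable_ultrasphericalWeight hβ) x)
    have hodd : Odd k := Nat.not_even_iff_odd.1 fun h => hk (h.two_dvd.imp fun _ => Eq.symm)
    rw [ultrasphericalMoment_of_odd β hodd, mul_zero]
  refine heven.congr_fun fun n => ?_
  have hGamma : Gamma (β + 1 / 2 + n) ≠ 0 :=
    Gamma_ne_zero_of_re_pos (re_add_half_add_natCast_pos hβ n)
  have hfact : (n ! : ℂ) ≠ 0 := mod_cast n.factorial_ne_zero
  have hfact' : ((2 * n)! : ℂ) ≠ 0 := mod_cast (2 * n).factorial_ne_zero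
  have hI : (I * x) ^ (2 * n) = (-1) ^ n * (4 ^ n * (x / 2) ^ (2 * n)) := by
    rw [pow_mul, pow_mul, ← mul_pow, ← mul_pow, mul_pow, I_sq]
    ring
  rw [Function.comp_apply, hI, div_mul_eq_mul_div, div_mul_eq_mul_div,
    div_eq_div_iff (mul_ne_zero hfact hGamma) hfact']
  linear_combination -(-1) ^ n * ((x : ℂ) / 2) ^ (2 * n) * ultrasphericalMoment_two_mul hβ n

lemma sqrt_pi_mul_Gamma_mul_besselJC {ν : ℂ} (hν : -1 / 2 < ν.re) {x : ℝ} (hx : 0 < x) :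
    √π * Gamma (ν + 1 / 2) * besselJC ν x = (2 * x : ℝ) ^ ν * poissonIntegral (ν + 1 / 2) x := by
  have hβ : 0 < (ν + 1 / 2).re := by
    simp
    linarith
  have hx2 : (x : ℂ) / 2 ≠ 0 := by simp [hx.ne']
  have hpow : ((x : ℂ) / 2) ^ ν = (2 * x : ℝ) ^ ν * 2 ^ (1 - 2 * (ν + 1 / 2)) := by
    have hdiv := div_cpow_ofReal_nonneg hx.le zero_le_two ν
    rw [ofReal_ofNat] at hdiv
    have hexponent : 1 - 2 * (ν + 1 / 2) = -ν + -ν := by ring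
    have htwo : (2 : ℂ) ^ ν ≠ 0 := by simp [cpow_eq_zero_iff]
    rw [hdiv, ofReal_mul, mul_cpow_ofReal_nonneg zero_le_two hx.le, ofReal_ofNat, hexponent,
      cpow_add _ _ two_ne_zero, cpow_neg]
    field_simp
  rw [← (hasSum_poissonIntegral hβ x).tsum_eq, besselJC, ← tsum_mul_left, ← tsum_mul_left]
  congr with n
  have hshift : ν + 1 / 2 + 1 / 2 + n = ν + n + 1 := by ring
  have hpow_nat : ((x : ℂ) / 2) ^ (2 * n : ℂ) = (x / 2) ^ (2 * n) := by
    exact_mod_cast cpow_natCast ((x : ℂ) / 2) (2 * n)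
  rw [cpow_add _ _ hx2, hpow, hpow_nat, hshift]
  ring

end PoissonIntegral

section BesselMellin

variable {ν μ : ℂ}

lemma besselJC_eq_mul_cpow_mul_poissonIntegral (hν : -1 / 2 < ν.re) {x : ℝ} (hx : 0 < x) :
    besselJC ν x =
      2 ^ ν / (√π * Gamma (ν + 1 / 2)) * ((x : ℂ) ^ ν * poissonIntegral (ν + 1 / 2) x) := by
  have hGamma : Gamma (ν + 1 / 2) ≠ 0 := Gamma_ne_zero_of_re_pos (by simp; linarith)
  have hsqrt : (√π : ℂ) ≠ 0 := by simp [Real.sqrt_ne_zero', Real.pi_pos]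
  have hpoisson := sqrt_pi_mul_Gamma_mul_besselJC hν hx
  rw [ofReal_mul, mul_cpow_ofReal_nonneg zero_le_two hx.le, ofReal_ofNat] at hpoisson
  rw [div_mul_eq_mul_div, eq_div_iff (mul_ne_zero hsqrt hGamma)]
  linear_combination hpoisson

lemma hasMellin_exp_mul_besselJC (hνμ : -ν.re < μ.re) (hμ : μ.re < 1 / 2) :
    HasMellin (fun x => exp (I * x) * besselJC ν x) μ
      (exp (π * I * (ν + μ) / 2) * Gamma (ν + μ) * Gamma (1 / 2 - μ) /
        (√π * 2 ^ μ * Gamma (ν - μ + 1))) := by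
  have hβ : 0 < (ν + 1 / 2).re := by simp; linarith
  have hν : -1 / 2 < ν.re := by linarith
  have hpoisson : EqOn (fun x : ℝ => exp (I * x) * besselJC ν x)
      (fun x => (2 ^ ν / (√π * Gamma (ν + 1 / 2)) : ℂ) •
        (x : ℂ) ^ ν • (exp (I * x) * poissonIntegral (ν + 1 / 2) x)) (Ioi 0) := fun x hx => by
    simp only [besselJC_eq_mul_cpow_mul_poissonIntegral hν hx, smul_eq_mul]
    ring
  obtain ⟨hconv, hvalue⟩ := hasMellin_exp_mul_poissonIntegral (α := μ + ν) (β := ν + 1 / 2)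
    (by simp; linarith) (by simp; linarith)
  refine (hasMellin_congr hpoisson).2 ⟨(MellinConvergent.cpow_smul.2 hconv).const_smul _, ?_⟩
  have hsub : ν + 1 / 2 - (μ + ν) = 1 / 2 - μ := by ring
  have hadd : 1 / 2 - μ + (ν + 1 / 2) = ν - μ + 1 := by ring
  have hGamma : Gamma (ν + 1 / 2) ≠ 0 := Gamma_ne_zero_of_re_pos hβ
  have htwo : (2 : ℂ) ^ ν ≠ 0 := by simp [cpow_eq_zero_iff]
  rw [mellin_const_smul, mellin_cpow_smul, hvalue, hsub,
    betaIntegral_eq_Gamma_mul_div _ _ (by simpa using hμ) hβ, hadd, add_comm μ ν, smul_eq_mul,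
    cpow_neg, cpow_add _ _ two_ne_zero]
  generalize Gamma (ν + 1 / 2) = G at hGamma
  field_simp

end BesselMellin

/-- For `−Re ν < Re μ < 1/2` and `a > 0`, the improper integral
`∫_0^∞ exp(iax) J_ν(ax) x^{μ−1} dx` (taken as a limit over `δ → 0⁺, R → ∞` of
`∫_δ^R`) converges to
`exp(πi(ν+μ)/2) Γ(ν+μ) Γ(1/2−μ) / (√π (2a)^μ Γ(ν−μ+1))`. -/
theorem stmt4 (ν μ : ℂ) (a : ℝ) (ha : 0 < a)
    (h1 : -ν.re < μ.re) (h2 : μ.re < 1 / 2) :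
    Filter.Tendsto
      (fun p : ℝ × ℝ => ∫ x in p.1..p.2,
        Complex.exp (Complex.I * (a : ℂ) * (x : ℂ)) * besselJC ν (a * x) * (x : ℂ) ^ (μ - 1))
      ((nhdsWithin (0 : ℝ) (Set.Ioi 0)) ×ˢ Filter.atTop)
      (nhds (Complex.exp ((Real.pi : ℂ) * Complex.I * (ν + μ) / 2) * Complex.Gamma (ν + μ) *
        Complex.Gamma (1 / 2 - μ) /
        ((Real.sqrt Real.pi : ℂ) * ((2 * a : ℝ) : ℂ) ^ μ * Complex.Gamma (ν - μ + 1)))) := by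
  obtain ⟨hconv, hvalue⟩ := hasMellin_exp_mul_besselJC h1 h2
  have hscaled := mellin_comp_mul_left (fun x => exp (I * x) * besselJC ν x) μ ha
  have hlim := tendsto_intervalIntegral_nhdsGT_prod_atTop
    ((MellinConvergent.comp_mul_left ha).2 hconv)
  rw [← mellin, hscaled, hvalue] at hlim
  convert hlim using 2
  · congr with x
    simp only [ofReal_mul, smul_eq_mul]
    ring_nf
  · rw [ofReal_mul, mul_cpow_ofReal_nonneg zero_le_two ha.le, ofReal_ofNat, smul_eq_mul, cpow_neg]
    ring
end

section
/- Let k ≥ 1 be an integer and let U : ℝ → ℝ be a fixed smooth function compactly supported in [1,2]. Then there is a constant C, depending only on k and U, such that for all a > 0 and X > 1 with a²X > 1, |I_k(a,a;X) − (1+i)·i^{k−1}·Ũ(3/4)·X/(4π·(a²X)^{1/4})| ≤ C·X/(a²X)^{3/4}. -/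
/-- The Bessel function of the first kind of integer order `m`:
`J_m(x) = Σ_{n≥0} (−1)^n (x/2)^{m+2n} / (n! (m+n)!)`. -/
noncomputable def besselJ (m : ℕ) (x : ℝ) : ℝ :=
  ∑' n : ℕ, (-1 : ℝ) ^ n * (x / 2) ^ (m + 2 * n) / ((n.factorial : ℝ) * ((m + n).factorial : ℝ))

/-- The Bessel integral `I_k(a,b;X) = ∫_0^∞ U(x/X) e(2a√x) J_{k−1}(4πb√x) dx`. -/
noncomputable def Ik (U : ℝ → ℝ) (k : ℕ) (a b X : ℝ) : ℂ :=
  ∫ x in Set.Ioi (0 : ℝ),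
    (U (x / X) : ℂ) * e (2 * a * Real.sqrt x) *
      (besselJ (k - 1) (4 * Real.pi * b * Real.sqrt x) : ℂ)

/-- The Mellin transform `Ũ(s) = ∫_0^∞ U(x) x^{s−1} dx` (for real `s`). -/
noncomputable def mellinU (U : ℝ → ℝ) (s : ℝ) : ℝ :=
  ∫ x in Set.Ioi (0 : ℝ), U x * x ^ (s - 1)

/-!
Everything rests on `J_m(z) = Re ((-i)^m (1 - i) e^{iz} / √(πz)) + O(z^{-3/2})` for `z > 0`. For
`m = 0, 1` the integral `J₀ + i J₁ = π⁻¹ ∫₀^π (1 + cos x) e^{iz cos x} dx` becomes, by half-angle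
formulas, an integral with phase `sin²` over a quarter period; comparing it with a truncated
complex Gaussian integral gives the leading term, and the endpoint contributions cancel. The
three-term recurrence then reaches every order.

After rescaling, the diagonal integral involves `e^{iz} J_m(z)` at `z = 4π √(a²X) √y`. The real part
is half the sum of two conjugate waves: one cancels `e^{iz}` and leaves the Mellin transform at
`3 / 4`, the other acquires the phase `2z` and gains a factor `z⁻¹` on integrating by parts.
-/

section

open Complex MeasureTheory Set Filter Asymptotics
open scoped Real Topology Interval

/-! ### Integration by parts for oscillating factors -/

theorem norm_integral_mul_le_of_norm_antideriv_le {a b M : ℝ} (hab : a ≤ b)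
    {g g' V v : ℝ → ℂ} (hg : ∀ x ∈ Icc a b, HasDerivAt g (g' x) x)
    (hg' : ContinuousOn g' (Icc a b)) (hV : ∀ x ∈ Icc a b, HasDerivAt V (v x) x)
    (hv : ContinuousOn v (Icc a b)) (hM : ∀ x ∈ Icc a b, ‖V x‖ ≤ M) :
    ‖∫ x in a..b, g x * v x‖ ≤ (‖g b‖ + ‖g a‖ + ∫ x in a..b, ‖g' x‖) * M := by
  rw [← uIcc_of_le hab] at hg hg' hV hv
  rw [intervalIntegral.integral_mul_deriv_eq_deriv_mul hg hV hg'.intervalIntegrable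
    hv.intervalIntegrable]
  have hboundary : ∀ x ∈ Icc a b, ‖g x * V x‖ ≤ ‖g x‖ * M := fun x hx => by
    rw [norm_mul]
    gcongr
    exact hM x hx
  have hrest : ‖∫ x in a..b, g' x * V x‖ ≤ (∫ x in a..b, ‖g' x‖) * M := by
    rw [← intervalIntegral.integral_mul_const]
    refine intervalIntegral.norm_integral_le_of_norm_le hab (Eventually.of_forall fun x hx => ?_)
      (hg'.norm.intervalIntegrable.mul_const M)
    rw [norm_mul]
    gcongr
    exact hM x (Ioc_subset_Icc_self hx)
  calc ‖g b * V b - g a * V a - ∫ x in a..b, g' x * V x‖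
      ≤ ‖g b * V b‖ + ‖g a * V a‖ + ‖∫ x in a..b, g' x * V x‖ :=
        (norm_sub_le _ _).trans (add_le_add_left (norm_sub_le _ _) _)
    _ ≤ ‖g b‖ * M + ‖g a‖ * M + (∫ x in a..b, ‖g' x‖) * M := by
        gcongr
        exacts [hboundary b (right_mem_Icc.2 hab), hboundary a (left_mem_Icc.2 hab)]
    _ = (‖g b‖ + ‖g a‖ + ∫ x in a..b, ‖g' x‖) * M := by ring

theorem hasDerivAt_cexp_mul_I_div {l : ℝ} (hl : l ≠ 0) {ψ : ℝ → ℝ} {ψ' x : ℝ}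
    (hψ : HasDerivAt ψ ψ' x) :
    HasDerivAt (fun x => cexp ((l * ψ x : ℝ) * I) / (l * I)) (ψ' * cexp ((l * ψ x : ℝ) * I)) x := by
  have hl' : (l : ℂ) ≠ 0 := ofReal_ne_zero.2 hl
  convert! (((hψ.const_mul l).ofReal_comp.mul_const I).cexp).div_const (l * I : ℂ) using 1
  push_cast
  field_simp

theorem norm_integral_mul_deriv_mul_cexp_le {a b l : ℝ} (hab : a ≤ b) (hl : 0 < l)
    {g g' : ℝ → ℂ} {ψ ψ' : ℝ → ℝ} (hg : ∀ x ∈ Icc a b, HasDerivAt g (g' x) x)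
    (hg' : ContinuousOn g' (Icc a b)) (hψ : ∀ x ∈ Icc a b, HasDerivAt ψ (ψ' x) x)
    (hψ' : ContinuousOn ψ' (Icc a b)) :
    ‖∫ x in a..b, g x * (ψ' x * cexp ((l * ψ x : ℝ) * I))‖ ≤
      (‖g b‖ + ‖g a‖ + ∫ x in a..b, ‖g' x‖) * l⁻¹ := by
  have hψc : ContinuousOn ψ (Icc a b) := HasDerivAt.continuousOn hψ
  refine norm_integral_mul_le_of_norm_antideriv_le hab hg hg'
    (fun x hx => hasDerivAt_cexp_mul_I_div hl.ne' (hψ x hx)) (by fun_prop) fun x _ => ?_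
  rw [norm_div, norm_exp_ofReal_mul_I, norm_mul, norm_real, norm_I, mul_one,
    Real.norm_of_nonneg hl.le, one_div]

/-! ### Truncated complex Gaussian integrals -/

section Gaussian

variable {w : ℂ}

theorem norm_cexp_neg_mul_sq_le_one (hw : 0 ≤ w.re) (s : ℝ) : ‖cexp (-w * s ^ 2)‖ ≤ 1 := by
  have hre : (-w * (s : ℂ) ^ 2).re = -(w.re * s ^ 2) := by
    rw [← ofReal_pow, re_mul_ofReal, neg_re, neg_mul]
  rw [norm_exp, hre, Real.exp_le_one_iff, neg_nonpos]
  positivity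

theorem integrableOn_inv_pow_mul_cexp_neg_mul_sq (hw : 0 < w.re) (n : ℕ) :
    IntegrableOn (fun s : ℝ => ((s : ℂ) ^ n)⁻¹ * cexp (-w * s ^ 2)) (Ioi 1) := by
  refine (integrable_cexp_neg_mul_sq hw).integrableOn.bdd_mul
    (Measurable.aestronglyMeasurable (by fun_prop)) (c := 1) ?_
  filter_upwards [ae_restrict_mem measurableSet_Ioi] with s hs
  rw [norm_inv, norm_pow, norm_real, Real.norm_of_nonneg (zero_le_one.trans (mem_Ioi.1 hs).le)]
  exact inv_le_one_of_one_le₀ (one_le_pow₀ (mem_Ioi.1 hs).le)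

theorem norm_integral_Ioi_inv_pow_mul_cexp_neg_mul_sq_le (hw : 0 ≤ w.re) (n : ℕ) :
    ‖∫ s in Ioi (1 : ℝ), ((s : ℂ) ^ (n + 2))⁻¹ * cexp (-w * s ^ 2)‖ ≤ 1 / (n + 1) := by
  have hexp : (-(n + 2 : ℝ)) < -1 := by linarith [n.cast_nonneg (α := ℝ)]
  calc _ ≤ ∫ s in Ioi (1 : ℝ), s ^ (-(n + 2 : ℝ)) := by
        refine norm_integral_le_of_norm_le (integrableOn_Ioi_rpow_of_lt hexp one_pos) ?_
        filter_upwards [ae_restrict_mem measurableSet_Ioi] with s hs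
        have hs0 : 0 ≤ s := zero_le_one.trans (mem_Ioi.1 hs).le
        rw [norm_mul, norm_inv, norm_pow, norm_real, Real.norm_of_nonneg hs0, Real.rpow_neg hs0]
        rw [show (n + 2 : ℝ) = ((n + 2 : ℕ) : ℝ) by push_cast; rfl, Real.rpow_natCast]
        exact mul_le_of_le_one_right (by positivity) (norm_cexp_neg_mul_sq_le_one hw s)
    _ = 1 / (n + 1) := by
        rw [integral_Ioi_rpow_of_lt hexp one_pos, Real.one_rpow, ← neg_div_neg_eq, neg_neg]
        ring

theorem integral_Ioi_inv_pow_mul_cexp_neg_mul_sq (hw : 0 < w.re) (n : ℕ) :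
    ∫ s in Ioi (1 : ℝ), ((s : ℂ) ^ n)⁻¹ * cexp (-w * s ^ 2) =
      cexp (-w) / (2 * w) -
        (n + 1) / (2 * w) * ∫ s in Ioi (1 : ℝ), ((s : ℂ) ^ (n + 2))⁻¹ * cexp (-w * s ^ 2) := by
  have hw0 : w ≠ 0 := by rintro rfl; simp at hw
  have hintegrable := integrableOn_inv_pow_mul_cexp_neg_mul_sq hw
  let P : ℝ → ℂ := fun s => -1 / (2 * w) * (((s : ℂ) ^ (n + 1))⁻¹ * cexp (-w * s ^ 2))
  have hderiv : ∀ s ∈ Ici (1 : ℝ), HasDerivAt P (((s : ℂ) ^ n)⁻¹ * cexp (-w * s ^ 2) +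
      (n + 1) / (2 * w) * (((s : ℂ) ^ (n + 2))⁻¹ * cexp (-w * s ^ 2))) s := fun s hs => by
    have hs0 : (s : ℂ) ≠ 0 := ofReal_ne_zero.2 (zero_lt_one.trans_le hs).ne'
    have hid : HasDerivAt (fun s : ℝ => (s : ℂ)) 1 s := ofRealCLM.hasDerivAt
    convert! (((hid.pow (n + 1)).inv (pow_ne_zero _ hs0)).mul
      (((hid.pow 2).const_mul (-w)).cexp)).const_mul (-1 / (2 * w)) using 1
    simp only [Pi.pow_apply, Nat.add_sub_cancel, Pi.inv_apply]
    push_cast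
    field_simp
    ring
  have hlim : Tendsto P atTop (𝓝 0) := by
    have hinv : Tendsto (fun s : ℝ => (s ^ (n + 1))⁻¹) atTop (𝓝 0) :=
      (tendsto_pow_atTop n.succ_ne_zero).inv_tendsto_atTop
    rw [← mul_zero (-1 / (2 * w))]
    refine (squeeze_zero_norm' ?_ hinv).const_mul _
    filter_upwards [eventually_ge_atTop 0] with s hs
    rw [norm_mul, norm_inv, norm_pow, norm_real, Real.norm_of_nonneg hs]
    exact mul_le_of_le_one_right (by positivity) (norm_cexp_neg_mul_sq_le_one hw.le s)
  have hFTC := integral_Ioi_of_hasDerivAt_of_tendsto' hderiv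
    ((hintegrable n).add ((hintegrable (n + 2)).const_mul _)) hlim
  rw [integral_add (hintegrable n) ((hintegrable (n + 2)).const_mul _), integral_const_mul] at hFTC
  have hP1 : P 1 = -(cexp (-w) / (2 * w)) := by
    simp only [P, ofReal_one, one_pow, inv_one, mul_one, one_mul]
    ring
  linear_combination hFTC - hP1

theorem norm_integral_Ioi_cexp_neg_mul_sq_sub_le (hw : 0 < w.re) :
    ‖(∫ s in Ioi (1 : ℝ), cexp (-w * s ^ 2)) - cexp (-w) / (2 * w)‖ ≤ 1 / (2 * ‖w‖ ^ 2) := by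
  have hw0 : w ≠ 0 := by rintro rfl; simp at hw
  have hexp : ‖cexp (-w)‖ ≤ 1 := by simpa using norm_cexp_neg_mul_sq_le_one hw.le 1
  have hparts₀ := integral_Ioi_inv_pow_mul_cexp_neg_mul_sq hw 0
  have hparts₂ := integral_Ioi_inv_pow_mul_cexp_neg_mul_sq hw 2
  simp only [pow_zero, inv_one, one_mul, Nat.cast_zero, zero_add] at hparts₀
  simp only [Nat.reduceAdd, Nat.cast_ofNat] at hparts₂
  set R := ∫ s in Ioi (1 : ℝ), ((s : ℂ) ^ 4)⁻¹ * cexp (-w * s ^ 2)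
  have hR : ‖R‖ ≤ 1 / 3 := by
    convert norm_integral_Ioi_inv_pow_mul_cexp_neg_mul_sq_le hw.le 2 using 1
    norm_num
  have hexpansion : (∫ s in Ioi (1 : ℝ), cexp (-w * s ^ 2)) - cexp (-w) / (2 * w) =
      (3 * R - cexp (-w)) / (4 * w ^ 2) := by
    rw [hparts₀, hparts₂]
    field_simp
    ring
  rw [hexpansion, norm_div, norm_mul, norm_pow, norm_ofNat]
  calc ‖3 * R - cexp (-w)‖ / (4 * ‖w‖ ^ 2) ≤ 2 / (4 * ‖w‖ ^ 2) := by
        gcongr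
        refine (norm_sub_le _ _).trans ?_
        rw [norm_mul, norm_ofNat]
        linarith
    _ = 1 / (2 * ‖w‖ ^ 2) := by ring

theorem norm_integral_cexp_neg_mul_sq_sub_le_of_re_pos (hw : 0 < w.re) :
    ‖(∫ s in (0 : ℝ)..1, cexp (-w * s ^ 2)) - ((π / w) ^ (1 / 2 : ℂ) / 2 - cexp (-w) / (2 * w))‖ ≤
      1 / (2 * ‖w‖ ^ 2) := by
  have hintegrable : Integrable (fun s : ℝ => cexp (-w * s ^ 2)) := integrable_cexp_neg_mul_sq hw
  have hsplit := intervalIntegral.integral_interval_add_Ioi (a := 0) (b := 1)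
    hintegrable.integrableOn hintegrable.integrableOn
  rw [integral_gaussian_complex_Ioi hw] at hsplit
  rw [← hsplit, sub_sub_eq_add_sub, add_sub_add_left_eq_sub, norm_sub_rev]
  exact norm_integral_Ioi_cexp_neg_mul_sq_sub_le hw

theorem pi_div_mem_slitPlane (hw : 0 ≤ w.re) (hw0 : w ≠ 0) : (π / w : ℂ) ∈ slitPlane := by
  have hnorm : 0 < normSq w := normSq_pos.2 hw0
  rw [mem_slitPlane_iff, div_re, div_im]
  rcases hw.lt_or_eq with h | h
  · left
    simp only [ofReal_re, ofReal_im, zero_mul, zero_div, add_zero]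
    positivity
  · right
    have him : w.im ≠ 0 := fun h' => hw0 (Complex.ext h.symm h')
    simp [him, hw0, Real.pi_ne_zero]

/-- The boundary case `re w = 0` is reached by continuity, since the Gaussian is then not
integrable on the half-line. -/
theorem norm_integral_cexp_neg_mul_sq_sub_le (hw : 0 ≤ w.re) (hw0 : w ≠ 0) :
    ‖(∫ s in (0 : ℝ)..1, cexp (-w * s ^ 2)) - ((π / w) ^ (1 / 2 : ℂ) / 2 - cexp (-w) / (2 * w))‖ ≤
      1 / (2 * ‖w‖ ^ 2) := by
  have hintegral : Continuous fun v : ℂ => ∫ s in (0 : ℝ)..1, cexp (-v * s ^ 2) :=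
    intervalIntegral.continuous_parametric_intervalIntegral_of_continuous' (by fun_prop) 0 1
  have hroot : ContinuousAt (fun v : ℂ => (π / v) ^ (1 / 2 : ℂ)) w :=
    (continuousAt_const.div continuousAt_id hw0).cpow continuousAt_const
      (pi_div_mem_slitPlane hw hw0)
  have hboundary : ContinuousAt (fun v : ℂ => cexp (-v) / (2 * v)) w :=
    ContinuousAt.div (by fun_prop) (by fun_prop) (by simp [hw0])
  have hbound : ContinuousAt (fun v : ℂ => 1 / (2 * ‖v‖ ^ 2)) w :=
    ContinuousAt.div (by fun_prop) (by fun_prop) (by simp [hw0])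
  have happroach : Tendsto (fun t : ℝ => w + t) (𝓝[>] 0) (𝓝 w) := by
    have hcont : Continuous fun t : ℝ => w + t := by fun_prop
    simpa using (hcont.tendsto 0).mono_left nhdsWithin_le_nhds
  refine le_of_tendsto_of_tendsto ((hintegral.continuousAt.sub
    ((hroot.div_const 2).sub hboundary)).norm.tendsto.comp happroach)
    (hbound.tendsto.comp happroach) ?_
  filter_upwards [self_mem_nhdsWithin] with t ht
  exact norm_integral_cexp_neg_mul_sq_sub_le_of_re_pos
    (by simpa using add_pos_of_nonneg_of_pos hw ht)

theorem norm_pi_div_cpow_half (w : ℂ) : ‖(π / w) ^ (1 / 2 : ℂ)‖ = √π / √‖w‖ := by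
  rw [show (1 / 2 : ℂ) = ((1 / 2 : ℝ) : ℂ) by push_cast; rfl, norm_cpow_real, norm_div, norm_real,
    Real.norm_of_nonneg Real.pi_pos.le, ← Real.sqrt_eq_rpow, Real.sqrt_div Real.pi_pos.le]

theorem norm_integral_zero_one_cexp_neg_mul_sq_le (hw : 0 ≤ w.re) (hw0 : w ≠ 0) :
    ‖∫ s in (0 : ℝ)..1, cexp (-w * s ^ 2)‖ ≤ 2 / √‖w‖ := by
  have hr : 0 < √‖w‖ := Real.sqrt_pos.2 (norm_pos_iff.2 hw0)
  have hsq : ‖w‖ = √‖w‖ ^ 2 := (Real.sq_sqrt (norm_nonneg w)).symm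
  have hexp : ‖cexp (-w)‖ ≤ 1 := by simpa using norm_cexp_neg_mul_sq_le_one hw 1
  rcases le_total (√‖w‖) 1 with hle | hge
  · calc ‖∫ s in (0 : ℝ)..1, cexp (-w * s ^ 2)‖ ≤ 1 * |1 - 0| :=
          intervalIntegral.norm_integral_le_of_norm_le_const fun s _ =>
            norm_cexp_neg_mul_sq_le_one hw s
      _ ≤ 2 / √‖w‖ := by
          rw [le_div_iff₀ hr]
          norm_num
          linarith
  · have hpi : √π ≤ 2 := Real.sqrt_le_iff.2 ⟨by norm_num, by linarith [Real.pi_lt_four]⟩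
    have hmain : ‖(π / w) ^ (1 / 2 : ℂ) / 2‖ ≤ 1 / √‖w‖ := by
      rw [norm_div, norm_pi_div_cpow_half, norm_ofNat, div_right_comm]
      gcongr
      linarith
    have hboundary : ‖cexp (-w) / (2 * w)‖ ≤ 1 / (2 * √‖w‖) := by
      rw [norm_div, norm_mul, norm_ofNat]
      gcongr
      nlinarith
    have herror : 1 / (2 * ‖w‖ ^ 2) ≤ 1 / (2 * √‖w‖) := by
      gcongr
      calc √‖w‖ ≤ √‖w‖ ^ 4 := le_self_pow₀ hge four_ne_zero
        _ = ‖w‖ ^ 2 := by rw [hsq, Real.sqrt_sq hr.le, ← pow_mul]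
    calc _ ≤ _ := norm_le_norm_add_norm_sub' _ _
      _ ≤ 1 / √‖w‖ + 1 / (2 * √‖w‖) + 1 / (2 * √‖w‖) := by
        gcongr
        · exact (norm_sub_le _ _).trans (add_le_add hmain hboundary)
        · exact (norm_integral_cexp_neg_mul_sq_sub_le hw hw0).trans herror
      _ = 2 / √‖w‖ := by field_simp; norm_num

theorem norm_integral_cexp_neg_mul_sq_le (hw : 0 ≤ w.re) (hw0 : w ≠ 0) {u : ℝ} (hu : 0 ≤ u) :
    ‖∫ s in (0 : ℝ)..u, cexp (-w * s ^ 2)‖ ≤ 2 / √‖w‖ := by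
  rcases hu.eq_or_lt with rfl | hu
  · simp only [intervalIntegral.integral_same, norm_zero]
    positivity
  have hscale : ∫ s in (0 : ℝ)..u, cexp (-w * s ^ 2) =
      u * ∫ s in (0 : ℝ)..1, cexp (-(w * (u ^ 2 : ℝ)) * s ^ 2) := by
    have h := intervalIntegral.smul_integral_comp_mul_left (a := 0) (b := 1)
      (fun s : ℝ => cexp (-w * s ^ 2)) u
    rw [mul_zero, mul_one, real_smul] at h
    rw [← h]
    congr! 4 with s
    push_cast
    ring
  have hbound := norm_integral_zero_one_cexp_neg_mul_sq_le (w := w * (u ^ 2 : ℝ))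
    (by rw [re_mul_ofReal]; positivity) (mul_ne_zero hw0 (ofReal_ne_zero.2 (by positivity)))
  rw [norm_mul, norm_real, Real.norm_of_nonneg (sq_nonneg u), Real.sqrt_mul (norm_nonneg w),
    Real.sqrt_sq hu.le] at hbound
  calc _ = u * ‖∫ s in (0 : ℝ)..1, cexp (-(w * (u ^ 2 : ℝ)) * s ^ 2)‖ := by
        rw [hscale, norm_mul, norm_real, Real.norm_of_nonneg hu.le]
    _ ≤ u * (2 / (√‖w‖ * u)) := by gcongr
    _ = 2 / √‖w‖ := by field_simp

end Gaussian

/-! ### Oscillatory integrals with phase `sin ^ 2` on a quarter period -/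

section SinSq

/-- The oscillating factor `exp (-w sin² φ)`. For purely imaginary `w` its phase is stationary
exactly at both ends of `[0, π / 2]`. -/
noncomputable def sinSqExp (w : ℂ) (φ : ℝ) : ℂ := cexp (-w * (Real.sin φ : ℂ) ^ 2)

@[fun_prop]
theorem continuous_sinSqExp (w : ℂ) : Continuous (sinSqExp w) := by
  unfold sinSqExp
  fun_prop

@[simp]
theorem sinSqExp_zero (w : ℂ) : sinSqExp w 0 = 1 := by simp [sinSqExp]

@[simp]
theorem sinSqExp_pi_div_two (w : ℂ) : sinSqExp w (π / 2) = cexp (-w) := by simp [sinSqExp]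

theorem sinSqExp_pi_div_two_sub (w : ℂ) (φ : ℝ) :
    sinSqExp w (π / 2 - φ) = cexp (-w) * sinSqExp (-w) φ := by
  have hcos : (Real.cos φ : ℂ) ^ 2 = 1 - (Real.sin φ : ℂ) ^ 2 := mod_cast Real.cos_sq' φ
  rw [sinSqExp, sinSqExp, Real.sin_pi_div_two_sub, hcos, ← Complex.exp_add]
  congr 1
  ring

theorem hasDerivAt_sinSqExp (w : ℂ) (φ : ℝ) :
    HasDerivAt (sinSqExp w) (-(2 * w) * (Real.sin φ * Real.cos φ * sinSqExp w φ)) φ := by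
  have hsin : HasDerivAt (fun φ : ℝ => (Real.sin φ : ℂ)) (Real.cos φ : ℝ) φ :=
    (Real.hasDerivAt_sin φ).ofReal_comp
  convert! ((hsin.pow 2).const_mul (-w)).cexp using 1
  simp only [sinSqExp, Nat.add_one_sub_one, pow_one, Nat.cast_ofNat, Pi.pow_apply]
  ring

theorem integral_cos_mul_sinSqExp (w : ℂ) (θ : ℝ) :
    ∫ φ in (0 : ℝ)..θ, Real.cos φ * sinSqExp w φ =
      ∫ s in (0 : ℝ)..Real.sin θ, cexp (-w * s ^ 2) := by
  have h := intervalIntegral.integral_deriv_smul_comp (a := 0) (b := θ)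
    (g := fun s : ℝ => cexp (-w * s ^ 2)) (fun φ _ => Real.hasDerivAt_sin φ)
    Real.continuous_cos.continuousOn (by fun_prop)
  simpa only [Real.sin_zero, real_smul, Function.comp_apply, ← sinSqExp.eq_1] using h

theorem cos_nonneg_of_mem_Icc_zero {φ : ℝ} (hφ : φ ∈ Icc 0 (π / 2)) : 0 ≤ Real.cos φ :=
  Real.cos_nonneg_of_mem_Icc ⟨by linarith [hφ.1, Real.pi_pos], hφ.2⟩

variable {f f' : ℝ → ℂ}

theorem norm_integral_mul_cos_mul_sinSqExp_le
    (hf : ∀ φ ∈ Icc 0 (π / 2), HasDerivAt f (f' φ) φ) (hf' : ContinuousOn f' (Icc 0 (π / 2)))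
    {w : ℂ} (hw : 0 ≤ w.re) (hw0 : w ≠ 0) :
    ‖∫ φ in (0 : ℝ)..π / 2, f φ * (Real.cos φ * sinSqExp w φ)‖ ≤
      (‖f (π / 2)‖ + ‖f 0‖ + ∫ φ in (0 : ℝ)..π / 2, ‖f' φ‖) * (2 / √‖w‖) := by
  have hcont : Continuous fun φ : ℝ => (Real.cos φ : ℂ) * sinSqExp w φ := by fun_prop
  refine norm_integral_mul_le_of_norm_antideriv_le (by positivity) hf hf'
    (V := fun θ => ∫ φ in (0 : ℝ)..θ, Real.cos φ * sinSqExp w φ)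
    (fun θ _ => hcont.integral_hasStrictDerivAt 0 θ |>.hasDerivAt) hcont.continuousOn
    fun θ hθ => ?_
  rw [integral_cos_mul_sinSqExp]
  exact norm_integral_cexp_neg_mul_sq_le hw hw0
    (Real.sin_nonneg_of_mem_Icc ⟨hθ.1, by linarith [hθ.2, Real.pi_pos]⟩)

theorem norm_integral_mul_sin_mul_sinSqExp_le
    (hf : ∀ φ ∈ Icc 0 (π / 2), HasDerivAt f (f' φ) φ) (hf' : ContinuousOn f' (Icc 0 (π / 2)))
    {w : ℂ} (hw : w.re = 0) (hw0 : w ≠ 0) :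
    ‖∫ φ in (0 : ℝ)..π / 2, f φ * (Real.sin φ * sinSqExp w φ)‖ ≤
      (‖f 0‖ + ‖f (π / 2)‖ + ∫ φ in (0 : ℝ)..π / 2, ‖f' φ‖) * (2 / √‖w‖) := by
  have hmaps : MapsTo (fun φ : ℝ => π / 2 - φ) (Icc 0 (π / 2)) (Icc 0 (π / 2)) := fun φ hφ =>
    ⟨by linarith [hφ.2], by linarith [hφ.1]⟩
  have hreflect : ∫ φ in (0 : ℝ)..π / 2, f φ * (Real.sin φ * sinSqExp w φ) =
      cexp (-w) * ∫ φ in (0 : ℝ)..π / 2, f (π / 2 - φ) * (Real.cos φ * sinSqExp (-w) φ) := by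
    have h := intervalIntegral.integral_comp_sub_left (a := 0) (b := π / 2)
      (fun φ => f φ * (Real.sin φ * sinSqExp w φ)) (π / 2)
    rw [sub_self, sub_zero] at h
    rw [← h, ← intervalIntegral.integral_const_mul]
    congr! 2
    rw [Real.sin_pi_div_two_sub, sinSqExp_pi_div_two_sub]
    ring
  have hderiv : ∀ φ ∈ Icc 0 (π / 2), HasDerivAt (fun φ => f (π / 2 - φ)) (-f' (π / 2 - φ)) φ :=
    fun φ hφ => (hf _ (hmaps hφ)).comp_const_sub (π / 2) φ
  have hvar : ∫ φ in (0 : ℝ)..π / 2, ‖-f' (π / 2 - φ)‖ = ∫ φ in (0 : ℝ)..π / 2, ‖f' φ‖ := by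
    simp only [norm_neg]
    simpa using intervalIntegral.integral_comp_sub_left (a := 0) (b := π / 2)
      (fun φ => ‖f' φ‖) (π / 2)
  have h := norm_integral_mul_cos_mul_sinSqExp_le hderiv
    (hf'.comp (by fun_prop) hmaps).neg (w := -w) (by simp [hw]) (neg_ne_zero.2 hw0)
  rw [hvar, sub_self, sub_zero, norm_neg] at h
  rwa [hreflect, norm_mul, norm_exp, neg_re, hw, neg_zero, Real.exp_zero, one_mul]

/-- Splitting `f = (f cos) cos + (f sin) sin` leaves one stationary point in each half. -/
theorem exists_norm_integral_mul_sinSqExp_le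
    (hf : ∀ φ ∈ Icc 0 (π / 2), HasDerivAt f (f' φ) φ) (hf' : ContinuousOn f' (Icc 0 (π / 2))) :
    ∃ C, ∀ w : ℂ, w.re = 0 → w ≠ 0 →
      ‖∫ φ in (0 : ℝ)..π / 2, f φ * sinSqExp w φ‖ ≤ C / √‖w‖ := by
  have hfc : ContinuousOn f (Icc 0 (π / 2)) := HasDerivAt.continuousOn hf
  have hfcos : ∀ φ ∈ Icc 0 (π / 2), HasDerivAt (fun φ => f φ * Real.cos φ)
      (f' φ * Real.cos φ + f φ * (-Real.sin φ : ℝ)) φ := fun φ hφ =>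
    (hf φ hφ).mul (Real.hasDerivAt_cos φ).ofReal_comp
  have hfsin : ∀ φ ∈ Icc 0 (π / 2), HasDerivAt (fun φ => f φ * Real.sin φ)
      (f' φ * Real.sin φ + f φ * Real.cos φ) φ := fun φ hφ =>
    (hf φ hφ).mul (Real.hasDerivAt_sin φ).ofReal_comp
  obtain ⟨A, hA⟩ : ∃ A, ∀ w : ℂ, w.re = 0 → w ≠ 0 →
      ‖∫ φ in (0 : ℝ)..π / 2, f φ * Real.cos φ * (Real.cos φ * sinSqExp w φ)‖ ≤ A * (2 / √‖w‖) :=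
    ⟨_, fun w hw => norm_integral_mul_cos_mul_sinSqExp_le hfcos (by fun_prop) hw.ge⟩
  obtain ⟨B, hB⟩ : ∃ B, ∀ w : ℂ, w.re = 0 → w ≠ 0 →
      ‖∫ φ in (0 : ℝ)..π / 2, f φ * Real.sin φ * (Real.sin φ * sinSqExp w φ)‖ ≤ B * (2 / √‖w‖) :=
    ⟨_, fun w hw => norm_integral_mul_sin_mul_sinSqExp_le hfsin (by fun_prop) hw⟩
  refine ⟨(A + B) * 2, fun w hw hw0 => ?_⟩
  have hsplit : ∫ φ in (0 : ℝ)..π / 2, f φ * sinSqExp w φ =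
      (∫ φ in (0 : ℝ)..π / 2, f φ * Real.cos φ * (Real.cos φ * sinSqExp w φ)) +
        ∫ φ in (0 : ℝ)..π / 2, f φ * Real.sin φ * (Real.sin φ * sinSqExp w φ) := by
    rw [← uIcc_of_le (by positivity)] at hfc
    rw [← intervalIntegral.integral_add (ContinuousOn.intervalIntegrable (by fun_prop))
      (ContinuousOn.intervalIntegrable (by fun_prop))]
    congr! 2 with φ
    have hone : (Real.sin φ : ℂ) ^ 2 + (Real.cos φ : ℂ) ^ 2 = 1 :=
      mod_cast Real.sin_sq_add_cos_sq φ
    linear_combination -f φ * sinSqExp w φ * hone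
  rw [hsplit]
  refine (norm_add_le _ _).trans ((add_le_add (hA w hw hw0) (hB w hw hw0)).trans_eq ?_)
  ring

theorem integral_mul_sin_mul_cos_mul_sinSqExp
    (hf : ∀ φ ∈ Icc 0 (π / 2), HasDerivAt f (f' φ) φ) (hf' : ContinuousOn f' (Icc 0 (π / 2)))
    {w : ℂ} (hw0 : w ≠ 0) :
    ∫ φ in (0 : ℝ)..π / 2, f φ * (Real.sin φ * Real.cos φ * sinSqExp w φ) =
      (f 0 - f (π / 2) * cexp (-w) + ∫ φ in (0 : ℝ)..π / 2, f' φ * sinSqExp w φ) / (2 * w) := by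
  rw [← uIcc_of_le (by positivity)] at hf hf'
  have hparts := intervalIntegral.integral_mul_deriv_eq_deriv_mul hf
    (fun φ _ => hasDerivAt_sinSqExp w φ) hf'.intervalIntegrable
    (Continuous.intervalIntegrable (by fun_prop) _ _)
  simp only [mul_left_comm (f _) (-(2 * w)), intervalIntegral.integral_const_mul, sinSqExp_zero,
    sinSqExp_pi_div_two, mul_one] at hparts
  rw [eq_div_iff (by simp [hw0])]
  linear_combination -hparts

theorem hasDerivAt_sin_div_one_add_cos {φ : ℝ} (hφ : 1 + Real.cos φ ≠ 0) :
    HasDerivAt (fun φ => Real.sin φ / (1 + Real.cos φ)) (1 / (1 + Real.cos φ)) φ := by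
  convert! (Real.hasDerivAt_sin φ).div ((Real.hasDerivAt_cos φ).const_add 1) hφ using 1
  field_simp
  linear_combination -Real.sin_sq_add_cos_sq φ

theorem hasDerivAt_one_div_one_add_cos {φ : ℝ} (hφ : 1 + Real.cos φ ≠ 0) :
    HasDerivAt (fun φ => 1 / (1 + Real.cos φ)) (Real.sin φ / (1 + Real.cos φ) ^ 2) φ := by
  convert! (hasDerivAt_const φ (1 : ℝ)).div ((Real.hasDerivAt_cos φ).const_add 1) hφ using 1
  simp

/-- Here `cos² = cos - tan (φ / 2) sin cos`, whose first term is a truncated Gaussian integral; the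
endpoint contributions of the two terms at `φ = π / 2` cancel. -/
theorem integral_cos_sq_mul_sinSqExp {w : ℂ} (hw0 : w ≠ 0) :
    ∫ φ in (0 : ℝ)..π / 2, (Real.cos φ : ℂ) ^ 2 * sinSqExp w φ =
      (∫ s in (0 : ℝ)..1, cexp (-w * s ^ 2)) + cexp (-w) / (2 * w) -
        (∫ φ in (0 : ℝ)..π / 2, (1 / (1 + Real.cos φ) : ℝ) * sinSqExp w φ) / (2 * w) := by
  have hne : ∀ φ ∈ Icc 0 (π / 2), 1 + Real.cos φ ≠ 0 := fun φ hφ => by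
    linarith [cos_nonneg_of_mem_Icc_zero hφ]
  have hderiv : ∀ φ ∈ Icc 0 (π / 2), HasDerivAt (fun φ => ((Real.sin φ / (1 + Real.cos φ) : ℝ) : ℂ))
      (1 / (1 + Real.cos φ) : ℝ) φ := fun φ hφ =>
    (hasDerivAt_sin_div_one_add_cos (hne φ hφ)).ofReal_comp
  have hcont : ContinuousOn (fun φ => ((1 / (1 + Real.cos φ) : ℝ) : ℂ)) (Icc 0 (π / 2)) :=
    continuous_ofReal.comp_continuousOn
      (ContinuousOn.div (by fun_prop) (by fun_prop) hne)
  have hsplit : ∫ φ in (0 : ℝ)..π / 2, (Real.cos φ : ℂ) ^ 2 * sinSqExp w φ =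
      (∫ φ in (0 : ℝ)..π / 2, Real.cos φ * sinSqExp w φ) -
        ∫ φ in (0 : ℝ)..π / 2, (Real.sin φ / (1 + Real.cos φ) : ℝ) *
          (Real.sin φ * Real.cos φ * sinSqExp w φ) := by
    have htan := HasDerivAt.continuousOn hderiv
    rw [← uIcc_of_le (by positivity)] at htan
    rw [← intervalIntegral.integral_sub (Continuous.intervalIntegrable (by fun_prop) _ _)
      (ContinuousOn.intervalIntegrable (by fun_prop))]
    refine intervalIntegral.integral_congr fun φ hφ => ?_
    rw [uIcc_of_le (by positivity)] at hφ
    have hcos : ((Real.cos φ ^ 2 : ℝ) : ℂ) = (Real.cos φ -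
        Real.sin φ / (1 + Real.cos φ) * (Real.sin φ * Real.cos φ) : ℝ) := by
      congr 1
      have := hne φ hφ
      field_simp
      linear_combination Real.cos φ * Real.sin_sq_add_cos_sq φ
    push_cast at hcos ⊢
    linear_combination sinSqExp w φ * hcos
  rw [hsplit, integral_mul_sin_mul_cos_mul_sinSqExp hderiv hcont hw0, integral_cos_mul_sinSqExp,
    Real.sin_pi_div_two]
  simp only [Real.sin_zero, Real.cos_pi_div_two, zero_div, add_zero, div_one, ofReal_zero,
    ofReal_one]
  ring

theorem exists_norm_integral_cos_sq_mul_sinSqExp_sub_le :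
    ∃ C, ∀ w : ℂ, w.re = 0 → 1 ≤ ‖w‖ →
      ‖(∫ φ in (0 : ℝ)..π / 2, (Real.cos φ : ℂ) ^ 2 * sinSqExp w φ) - (π / w) ^ (1 / 2 : ℂ) / 2‖ ≤
        C / (‖w‖ * √‖w‖) := by
  have hne : ∀ φ ∈ Icc 0 (π / 2), 1 + Real.cos φ ≠ 0 := fun φ hφ => by
    linarith [cos_nonneg_of_mem_Icc_zero hφ]
  obtain ⟨C, hC⟩ := exists_norm_integral_mul_sinSqExp_le
    (fun φ hφ => (hasDerivAt_one_div_one_add_cos (hne φ hφ)).ofReal_comp)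
    (continuous_ofReal.comp_continuousOn
      (ContinuousOn.div (by fun_prop) (by fun_prop) fun φ hφ => pow_ne_zero 2 (hne φ hφ)))
  refine ⟨1 / 2 + C / 2, fun w hw hw1 => ?_⟩
  have hwpos : 0 < ‖w‖ := one_pos.trans_le hw1
  have hsqrt : √‖w‖ ≤ ‖w‖ := Real.sqrt_le_iff.2 ⟨hwpos.le, le_self_pow₀ hw1 two_ne_zero⟩
  have hw0 : w ≠ 0 := norm_pos_iff.1 hwpos
  have hgauss := norm_integral_cexp_neg_mul_sq_sub_le hw.ge hw0
  rw [integral_cos_sq_mul_sinSqExp hw0, sub_right_comm, add_sub_assoc, ← neg_sub (_ / 2 : ℂ),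
    ← sub_eq_add_neg, add_div]
  refine (norm_sub_le _ _).trans (add_le_add (hgauss.trans ?_) ?_)
  · rw [div_div, sq]
    gcongr
  · rw [norm_div, norm_mul, norm_ofNat]
    calc _ ≤ C / √‖w‖ / (2 * ‖w‖) := by gcongr; exact hC w hw hw0
      _ = C / 2 / (‖w‖ * √‖w‖) := by field_simp

end SinSq

/-! ### Bessel functions of integer order -/

section Bessel

theorem norm_besselJ_term_le (m n : ℕ) {x R : ℝ} (hx : |x| ≤ R) :
    ‖(-1 : ℝ) ^ n * (x / 2) ^ (m + 2 * n) / (n.factorial * (m + n).factorial)‖ ≤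
      (R / 2) ^ m * (((R / 2) ^ 2) ^ n / n.factorial) := by
  have hfact : (1 : ℝ) ≤ (m + n).factorial := mod_cast (m + n).factorial_pos
  rw [norm_div, norm_mul, norm_mul, norm_pow, norm_neg, norm_one, one_pow, one_mul, norm_pow,
    norm_div, Real.norm_ofNat, Real.norm_eq_abs, Real.norm_natCast, Real.norm_natCast, ← pow_mul,
    ← mul_div_assoc, ← pow_add]
  have hR : 0 ≤ R := (abs_nonneg x).trans hx
  gcongr
  exact le_mul_of_one_le_right (Nat.cast_nonneg _) hfact

theorem summable_besselJ_term_bound (m : ℕ) (R : ℝ) :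
    Summable fun n : ℕ => (R / 2) ^ m * (((R / 2) ^ 2) ^ n / n.factorial) :=
  (Real.summable_pow_div_factorial _).mul_left _

theorem hasSum_besselJ (m : ℕ) (x : ℝ) :
    HasSum (fun n : ℕ => (-1 : ℝ) ^ n * (x / 2) ^ (m + 2 * n) / (n.factorial * (m + n).factorial))
      (besselJ m x) :=
  (Summable.of_norm_bounded (summable_besselJ_term_bound m |x|) fun n =>
    norm_besselJ_term_le m n le_rfl).hasSum

@[fun_prop]
theorem continuous_besselJ (m : ℕ) : Continuous (besselJ m) := by
  refine continuous_iff_continuousAt.2 fun x => ?_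
  have hball : ContinuousOn (besselJ m) (Metric.closedBall 0 (|x| + 1)) :=
    continuousOn_tsum (fun n => by fun_prop) (summable_besselJ_term_bound m (|x| + 1))
      fun n y hy => norm_besselJ_term_le m n (by simpa using hy)
  exact hball.continuousAt (Metric.closedBall_mem_nhds_of_mem (by simp))

theorem besselJ_add_two (m : ℕ) {x : ℝ} (hx : x ≠ 0) :
    besselJ (m + 2) x = 2 * (m + 1) / x * besselJ (m + 1) x - besselJ m x := by
  have h := ((hasSum_besselJ (m + 1) x).mul_left (2 * (m + 1) / x)).sub (hasSum_besselJ m x)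
  rw [← hasSum_nat_add_iff' 1] at h
  refine (hasSum_besselJ (m + 2) x).unique ?_
  convert! h using 1
  · funext n
    rw [show m + 1 + (n + 1) = m + n + 1 + 1 by ring, show m + (n + 1) = m + n + 1 by ring,
      show m + 2 + n = m + n + 1 + 1 by ring,
      show m + 1 + 2 * (n + 1) = m + 2 + 2 * n + 1 by ring,
      show m + 2 * (n + 1) = m + 2 + 2 * n by ring, pow_succ (x / 2) (m + 2 + 2 * n)]
    simp only [Nat.factorial_succ]
    push_cast
    field_simp
    ring
  · simp only [Finset.range_one, Finset.sum_singleton, Nat.factorial_succ, mul_zero, add_zero]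
    push_cast
    field_simp
    ring

theorem integral_cos_pow_even (n : ℕ) :
    ∫ x in (0 : ℝ)..π, Real.cos x ^ (2 * n) =
      π * (2 * n).factorial / (4 ^ n * n.factorial ^ 2) := by
  induction n with
  | zero => simp
  | succ n ih =>
    rw [mul_add_one, integral_cos_pow, ih]
    simp only [Nat.factorial_succ, Real.sin_pi, Real.sin_zero]
    push_cast
    field_simp
    ring

theorem integral_cos_pow_odd (n : ℕ) : ∫ x in (0 : ℝ)..π, Real.cos x ^ (2 * n + 1) = 0 := by
  induction n with
  | zero => simp
  | succ n ih =>
    rw [show 2 * (n + 1) + 1 = 2 * n + 1 + 2 by ring, integral_cos_pow, ih]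
    simp

theorem hasSum_integral_mul_pow_div_factorial {f g : ℝ → ℂ} (hf : Continuous f)
    (hg : Continuous g) (a b : ℝ) :
    HasSum (fun n : ℕ => ∫ x in a..b, f x * (g x ^ n / n.factorial))
      (∫ x in a..b, f x * cexp (g x)) := by
  have hexp (z : ℂ) : HasSum (fun n : ℕ => z ^ n / n.factorial) (cexp z) := by
    rw [exp_eq_exp_ℂ]
    exact NormedSpace.expSeries_div_hasSum_exp z
  have hnorm (x : ℝ) : HasSum (fun n : ℕ => ‖f x * (g x ^ n / n.factorial)‖)
      (‖f x‖ * Real.exp ‖g x‖) := by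
    simp only [norm_mul, norm_div, norm_pow, norm_natCast]
    rw [Real.exp_eq_exp_ℝ]
    exact (NormedSpace.expSeries_div_hasSum_exp ‖g x‖).mul_left ‖f x‖
  refine intervalIntegral.hasSum_integral_of_dominated_convergence
    (fun n x => ‖f x * (g x ^ n / n.factorial)‖)
    (fun n => Continuous.aestronglyMeasurable (by fun_prop))
    (fun n => Eventually.of_forall fun x _ => le_rfl)
    (Eventually.of_forall fun x _ => (hnorm x).summable) ?_
    (Eventually.of_forall fun x _ => (hexp (g x)).mul_left (f x))
  simp only [fun x => (hnorm x).tsum_eq]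
  exact Continuous.intervalIntegrable (by fun_prop) _ _

theorem integral_one_add_cos_mul_pow (c : ℂ) (n : ℕ) :
    ∫ x in (0 : ℝ)..π, (1 + (Real.cos x : ℂ)) * ((c * Real.cos x) ^ n / n.factorial) =
      c ^ n / n.factorial * ((∫ x in (0 : ℝ)..π, Real.cos x ^ n) +
        ∫ x in (0 : ℝ)..π, Real.cos x ^ (n + 1) : ℝ) := by
  rw [← intervalIntegral.integral_add (Continuous.intervalIntegrable (by fun_prop) _ _)
    (Continuous.intervalIntegrable (by fun_prop) _ _), ← intervalIntegral.integral_ofReal,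
    ← intervalIntegral.integral_const_mul]
  congr! 2
  push_cast
  ring

theorem besselJ_zero_add_I_mul_besselJ_one (z : ℝ) :
    (besselJ 0 z : ℂ) + I * besselJ 1 z =
      1 / π * ∫ x in (0 : ℝ)..π, (1 + (Real.cos x : ℂ)) * cexp (I * z * Real.cos x) := by
  have hpi : (π : ℂ) ≠ 0 := ofReal_ne_zero.2 Real.pi_ne_zero
  have hfact (n : ℕ) : (n.factorial : ℂ) ≠ 0 := Nat.cast_ne_zero.2 n.factorial_ne_zero
  have hIpow (n : ℕ) : (I * z) ^ (2 * n) = (-1) ^ n * (z : ℂ) ^ (2 * n) := by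
    rw [mul_pow, pow_mul I, I_sq]
  have hseries := hasSum_integral_mul_pow_div_factorial (f := fun x => 1 + (Real.cos x : ℂ))
    (g := fun x => I * z * Real.cos x) (by fun_prop) (by fun_prop) 0 π
  simp only [integral_one_add_cos_mul_pow] at hseries
  have hsum := hseries.unique (HasSum.even_add_odd (m := (π * besselJ 0 z : ℂ))
    (m' := π * I * besselJ 1 z) ?_ ?_)
  · rw [hsum]
    field_simp
  · convert! (hasSum_ofReal.2 (hasSum_besselJ 0 z)).mul_left (π : ℂ) using 1
    funext n
    rw [integral_cos_pow_even, integral_cos_pow_odd, hIpow, zero_add, zero_add, div_pow, pow_mul 2]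
    push_cast
    field_simp [hfact]
    norm_num
    ring
  · convert! (hasSum_ofReal.2 (hasSum_besselJ 1 z)).mul_left (π * I : ℂ) using 1
    funext n
    rw [show 2 * n + 1 + 1 = 2 * (n + 1) by ring, integral_cos_pow_even, integral_cos_pow_odd,
      pow_succ, hIpow, mul_add_one, add_comm 1, add_comm 1, div_pow, pow_succ 2, pow_mul 2]
    simp only [Nat.factorial_succ]
    push_cast
    have hodd : (2 * n + 1 : ℂ) ≠ 0 := mod_cast (2 * n).succ_ne_zero
    field_simp [hfact]
    norm_num
    ring

theorem besselJ_zero_add_I_mul_besselJ_one_eq_sinSqExp (z : ℝ) :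
    (besselJ 0 z : ℂ) + I * besselJ 1 z =
      4 / π * cexp (I * z) *
        ∫ φ in (0 : ℝ)..π / 2, (Real.cos φ : ℂ) ^ 2 * sinSqExp (2 * I * z) φ := by
  have hscale := intervalIntegral.smul_integral_comp_mul_left (a := 0) (b := π / 2)
    (fun x : ℝ => (1 + (Real.cos x : ℂ)) * cexp (I * z * Real.cos x)) 2
  rw [mul_zero, mul_div_cancel₀ π two_ne_zero, real_smul] at hscale
  have hhalf (φ : ℝ) : (1 + (Real.cos (2 * φ) : ℂ)) * cexp (I * z * Real.cos (2 * φ)) =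
      2 * cexp (I * z) * ((Real.cos φ : ℂ) ^ 2 * sinSqExp (2 * I * z) φ) := by
    have hcos : (Real.cos (2 * φ) : ℂ) = 1 - 2 * (Real.sin φ : ℂ) ^ 2 :=
      mod_cast Real.cos_two_mul' φ |>.trans (by rw [Real.cos_sq']; ring)
    have hsq : (Real.cos φ : ℂ) ^ 2 = 1 - (Real.sin φ : ℂ) ^ 2 := mod_cast Real.cos_sq' φ
    have hexp : cexp (I * z * (1 - 2 * (Real.sin φ : ℂ) ^ 2)) =
        cexp (I * z) * sinSqExp (2 * I * z) φ := by
      rw [sinSqExp, ← Complex.exp_add]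
      ring_nf
    rw [hcos, hexp, hsq]
    ring
  rw [besselJ_zero_add_I_mul_besselJ_one, ← hscale]
  simp only [hhalf, intervalIntegral.integral_const_mul]
  push_cast
  ring

/-- The leading term `√(2 / (π z)) exp (i (z - π / 4))` of the Hankel function `H₀⁽¹⁾ = J₀ + i Y₀`
at infinity, with `√2 exp (-i π / 4)` written as `1 - i`. -/
noncomputable def hankelLeading (z : ℝ) : ℂ := (1 - I) * cexp (I * z) / (√(π * z) : ℝ)

theorem pi_div_two_mul_I_mul_cpow_half {z : ℝ} (hz : 0 < z) :
    (π / (2 * I * z)) ^ (1 / 2 : ℂ) = (1 - I) / 2 * (√(π / z) : ℝ) := by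
  have hzc : (z : ℂ) ≠ 0 := ofReal_ne_zero.2 hz.ne'
  have hsq : (π / (2 * I * z) : ℂ) = ((1 - I) / 2 * (√(π / z) : ℝ)) ^ 2 := by
    rw [mul_pow, ← ofReal_pow, Real.sq_sqrt (by positivity)]
    push_cast
    field_simp
    linear_combination (2 - I) * I_sq
  rw [hsq, one_div, sq_cpow_two_inv]
  have hpos : 0 < √(π / z) := by positivity
  rw [re_mul_ofReal]
  exact mul_pos (by norm_num) hpos

theorem norm_hankelLeading_le {z : ℝ} (hz : 0 < z) : ‖hankelLeading z‖ ≤ z ^ (-(1 / 2) : ℝ) := by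
  have hnorm : ‖(1 - I : ℂ)‖ ≤ √π := by
    rw [norm_eq_sqrt_sq_add_sq]
    refine Real.sqrt_le_sqrt ?_
    norm_num
    linarith [Real.pi_gt_three]
  rw [hankelLeading, norm_div, norm_mul, mul_comm I, norm_exp_ofReal_mul_I, mul_one, norm_real,
    Real.norm_of_nonneg (Real.sqrt_nonneg _), Real.sqrt_mul Real.pi_pos.le, Real.rpow_neg hz.le,
    ← Real.sqrt_eq_rpow, ← div_div, ← one_div]
  gcongr
  exact div_le_one_of_le₀ hnorm (Real.sqrt_nonneg _)

theorem isBigO_re_hankelLeading (m : ℕ) :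
    (fun z => ((-I) ^ m * hankelLeading z).re) =O[𝓟 (Ioi 0)] fun z => z ^ (-(1 / 2) : ℝ) := by
  refine IsBigO.of_bound' (eventually_principal.2 fun z hz => ?_)
  calc _ ≤ ‖(-I) ^ m * hankelLeading z‖ := abs_re_le_norm _
    _ = ‖hankelLeading z‖ := by simp
    _ ≤ z ^ (-(1 / 2) : ℝ) := norm_hankelLeading_le hz
    _ ≤ _ := Real.le_norm_self _

theorem isBigO_rpow_rpow_Ici_one {p q : ℝ} (hpq : p ≤ q) :
    (fun z : ℝ => z ^ p) =O[𝓟 (Ici 1)] fun z => z ^ q := by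
  refine IsBigO.of_bound' (eventually_principal.2 fun z hz => ?_)
  rw [Real.norm_of_nonneg (Real.rpow_nonneg (zero_le_one.trans hz) p)]
  exact (Real.rpow_le_rpow_of_exponent_le hz hpq).trans (Real.le_norm_self _)

theorem isBigO_rpow_rpow_Ioc_zero_one {p q : ℝ} (hqp : q ≤ p) :
    (fun z : ℝ => z ^ p) =O[𝓟 (Ioc 0 1)] fun z => z ^ q := by
  refine IsBigO.of_bound' (eventually_principal.2 fun z hz => ?_)
  rw [Real.norm_of_nonneg (Real.rpow_nonneg hz.1.le p)]
  exact (Real.rpow_le_rpow_of_exponent_ge hz.1 hz.2 hqp).trans (Real.le_norm_self _)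

theorem rpow_neg_three_halves {z : ℝ} (hz : 0 < z) : z ^ (-(3 / 2) : ℝ) = 1 / (z * √z) := by
  rw [Real.rpow_neg hz.le, show (3 / 2 : ℝ) = 1 + 1 / 2 by norm_num, Real.rpow_add hz,
    Real.rpow_one, ← Real.sqrt_eq_rpow, one_div]

theorem isBigO_besselJ_zero_add_I_mul_besselJ_one_sub_hankelLeading :
    (fun z : ℝ => (besselJ 0 z : ℂ) + I * besselJ 1 z - hankelLeading z)
      =O[𝓟 (Ici 1)] fun z => z ^ (-(3 / 2) : ℝ) := by
  obtain ⟨C, hC⟩ := exists_norm_integral_cos_sq_mul_sinSqExp_sub_le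
  refine IsBigO.of_bound (4 / π * (C / (2 * √2))) (eventually_principal.2 fun z hz1 => ?_)
  have hz : 0 < z := one_pos.trans_le hz1
  have hnorm : ‖2 * I * (z : ℂ)‖ = 2 * z := by simp [abs_of_pos hz]
  have hleading : hankelLeading z =
      4 / π * cexp (I * z) * ((π / (2 * I * z)) ^ (1 / 2 : ℂ) / 2) := by
    have hsqrt : (√(π / z) : ℝ) = π / √(π * z) := by
      rw [Real.sqrt_div Real.pi_pos.le, Real.sqrt_mul Real.pi_pos.le]
      field_simp
      exact Real.sq_sqrt Real.pi_pos.le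
    have hpi : (π : ℂ) ≠ 0 := ofReal_ne_zero.2 Real.pi_ne_zero
    rw [hankelLeading, pi_div_two_mul_I_mul_cpow_half hz, hsqrt]
    push_cast
    field_simp
    norm_num
  have hbound := hC (2 * I * z) (by simp) (by rw [hnorm]; linarith [mem_Ici.1 hz1])
  rw [besselJ_zero_add_I_mul_besselJ_one_eq_sinSqExp, hleading, ← mul_sub, norm_mul, norm_mul,
    mul_comm I (z : ℂ), norm_exp_ofReal_mul_I, mul_one]
  calc _ ≤ 4 / π * (C / (2 * z * √(2 * z))) := by
        rw [norm_div, norm_real, norm_ofNat, Real.norm_of_nonneg Real.pi_pos.le]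
        gcongr
        rwa [hnorm] at hbound
    _ = _ := by
        rw [rpow_neg_three_halves hz, Real.norm_of_nonneg (by positivity),
          Real.sqrt_mul zero_le_two]
        field_simp

/-- Since `(-i)^(m+2) = -(-i)^m`, the leading terms satisfy the recurrence of `J` up to the term
`2 (m + 1) / z * J (m + 1)`, which is of the order of the error. -/
theorem isBigO_besselJ_sub_re_hankelLeading_Ici (m : ℕ) :
    (fun z => besselJ m z - ((-I) ^ m * hankelLeading z).re)
      =O[𝓟 (Ici 1)] fun z => z ^ (-(3 / 2) : ℝ) := by
  have hbase := isBigO_besselJ_zero_add_I_mul_besselJ_one_sub_hankelLeading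
  induction m using Nat.twoStepInduction with
  | zero =>
    refine IsBigO.trans (isBigO_of_le _ fun z => ?_) hbase
    simpa using abs_re_le_norm ((besselJ 0 z : ℂ) + I * besselJ 1 z - hankelLeading z)
  | one =>
    refine IsBigO.trans (isBigO_of_le _ fun z => ?_) hbase
    simpa using abs_im_le_norm ((besselJ 0 z : ℂ) + I * besselJ 1 z - hankelLeading z)
  | more m ih ih' =>
    have hJ : besselJ (m + 1) =O[𝓟 (Ici 1)] fun z => z ^ (-(1 / 2) : ℝ) := by
      simpa using (ih'.trans (isBigO_rpow_rpow_Ici_one (by norm_num))).add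
        ((isBigO_re_hankelLeading (m + 1)).mono (principal_mono.2 (Ici_subset_Ioi.2 one_pos)))
    have hcorrection : (fun z => 2 * (m + 1) * (z⁻¹ * besselJ (m + 1) z))
        =O[𝓟 (Ici 1)] fun z => z ^ (-(3 / 2) : ℝ) := by
      refine (((isBigO_refl (fun z : ℝ => z⁻¹) _).mul hJ).const_mul_left _).congr' EventuallyEq.rfl
        (eventually_principal.2 fun z hz => ?_)
      dsimp only
      rw [← Real.rpow_neg_one, ← Real.rpow_add (one_pos.trans_le hz)]
      norm_num
    refine (hcorrection.sub ih).congr' (eventually_principal.2 fun z hz => ?_) EventuallyEq.rfl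
    have hperiod : (-I) ^ (m + 2) = -(-I) ^ m := by rw [pow_add, neg_sq, I_sq, mul_neg_one]
    dsimp only
    rw [besselJ_add_two m (one_pos.trans_le hz).ne', hperiod, neg_mul, neg_re]
    ring

theorem isBigO_besselJ_Ioc_zero_one (m : ℕ) :
    besselJ m =O[𝓟 (Ioc 0 1)] fun z => z ^ (0 : ℝ) := by
  obtain ⟨B, hB⟩ := (isCompact_Icc (a := (0 : ℝ)) (b := 1)).exists_bound_of_continuousOn
    (continuous_besselJ m).continuousOn
  refine IsBigO.of_bound B (eventually_principal.2 fun z hz => ?_)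
  simpa using hB z (Ioc_subset_Icc_self hz)

theorem isBigO_besselJ_sub_re_hankelLeading (m : ℕ) :
    (fun z => besselJ m z - ((-I) ^ m * hankelLeading z).re)
      =O[𝓟 (Ioi 0)] fun z => z ^ (-(3 / 2) : ℝ) := by
  have hleading := (isBigO_re_hankelLeading m).mono
    (principal_mono.2 fun z (hz : z ∈ Ioc 0 1) => hz.1)
  have hnear : (fun z => besselJ m z - ((-I) ^ m * hankelLeading z).re)
      =O[𝓟 (Ioc 0 1)] fun z => z ^ (-(3 / 2) : ℝ) :=
    ((isBigO_besselJ_Ioc_zero_one m).trans (isBigO_rpow_rpow_Ioc_zero_one (by norm_num))).sub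
      (hleading.trans (isBigO_rpow_rpow_Ioc_zero_one (by norm_num)))
  rw [← Ioc_union_Ici_eq_Ioi one_pos, ← sup_principal]
  exact hnear.sup (isBigO_besselJ_sub_re_hankelLeading_Ici m)

end Bessel

/-! ### The diagonal integral -/

section DiagonalIntegral

theorem cexp_mul_re_hankelLeading (m : ℕ) (z : ℝ) :
    cexp (I * z) * ((((-I) ^ m * hankelLeading z).re : ℝ) : ℂ) =
      (I ^ m * (1 + I) + (-I) ^ m * (1 - I) * cexp ((2 * z : ℝ) * I)) / (2 * √(π * z) : ℝ) := by
  have hdouble : cexp ((2 * z : ℝ) * I) = cexp (I * z) * cexp (I * z) := by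
    rw [← Complex.exp_add]
    push_cast
    ring_nf
  have hconj : (starRingEnd ℂ) (cexp (I * z)) = (cexp (I * z))⁻¹ := by
    rw [← exp_conj, ← Complex.exp_neg]
    simp
  rw [hdouble, re_eq_add_conj, hankelLeading]
  simp only [map_mul, map_div₀, map_pow, map_neg, map_sub, map_one, conj_I, conj_ofReal, hconj,
    neg_neg, sub_neg_eq_add]
  have hexp : cexp (I * z) ≠ 0 := Complex.exp_ne_zero _
  push_cast
  field_simp
  ring

variable {U : ℝ → ℝ} {α β : ℝ}

theorem continuousOn_rpow_const_Icc (hα : 0 < α) (p : ℝ) :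
    ContinuousOn (fun y : ℝ => y ^ p) (Icc α β) :=
  continuousOn_id.rpow_const fun _ hy => Or.inl (hα.trans_le hy.1).ne'

theorem isBigO_integral_mul_rpow_mul_cexp_sqrt (hα : 0 < α) (hαβ : α ≤ β) (hU : ContDiff ℝ 1 U)
    (p : ℝ) :
    (fun l : ℝ => ∫ y in α..β, ((U y * y ^ p : ℝ) : ℂ) * cexp ((l * √y : ℝ) * I))
      =O[𝓟 (Ioi 0)] fun l => l⁻¹ := by
  have hpos {y : ℝ} (hy : y ∈ Icc α β) : 0 < y := hα.trans_le hy.1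
  set g : ℝ → ℝ := fun y => U y * (2 * y ^ (p + 1 / 2)) with hg
  set g' : ℝ → ℝ := fun y =>
    deriv U y * (2 * y ^ (p + 1 / 2)) + U y * (2 * ((p + 1 / 2) * y ^ (p + 1 / 2 - 1)))
  have hderiv : ∀ y ∈ Icc α β, HasDerivAt (fun y => (g y : ℂ)) (g' y) y := fun y hy =>
    ((hU.differentiable one_ne_zero y).hasDerivAt.mul
      ((Real.hasDerivAt_rpow_const (Or.inl (hpos hy).ne')).const_mul 2)).ofReal_comp
  have hcont : ContinuousOn g' (Icc α β) := by
    have := hU.continuous_deriv le_rfl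
    have := hU.continuous
    have := continuousOn_rpow_const_Icc (β := β) hα (p + 1 / 2)
    have := continuousOn_rpow_const_Icc (β := β) hα (p + 1 / 2 - 1)
    fun_prop
  have hcont_inv : ContinuousOn (fun y => 1 / (2 * √y)) (Icc α β) :=
    continuousOn_const.div (by fun_prop) fun y hy => by have := hpos hy; positivity
  refine IsBigO.of_bound (‖(g β : ℂ)‖ + ‖(g α : ℂ)‖ + ∫ y in α..β, ‖(g' y : ℂ)‖)
    (eventually_principal.2 fun l (hl : 0 < l) => ?_)
  have hbyparts := norm_integral_mul_deriv_mul_cexp_le hαβ hl hderiv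
    (continuous_ofReal.comp_continuousOn hcont)
    (fun y hy => Real.hasDerivAt_sqrt (hpos hy).ne') hcont_inv
  rw [Real.norm_of_nonneg (inv_nonneg.2 hl.le)]
  convert hbyparts using 2
  refine intervalIntegral.integral_congr fun y hy => ?_
  have hy0 : 0 < y := hpos (uIcc_of_le hαβ ▸ hy)
  have hsqrt : (√y : ℂ) ≠ 0 := ofReal_ne_zero.2 (Real.sqrt_pos.2 hy0).ne'
  have hrpow : y ^ (p + 1 / 2) = y ^ p * √y := by rw [Real.rpow_add hy0, Real.sqrt_eq_rpow]
  simp only [hg, hrpow]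
  push_cast
  field_simp

theorem isBigO_integral_mul_comp_mul_sqrt (hα : 0 < α) (hαβ : α ≤ β) (hU : Continuous U) {p : ℝ}
    {F : ℝ → ℂ} (hF : F =O[𝓟 (Ioi 0)] fun z => z ^ p) :
    (fun l : ℝ => ∫ y in α..β, (U y : ℂ) * F (l * √y)) =O[𝓟 (Ioi 0)] fun l => l ^ p := by
  obtain ⟨C, hC⟩ := hF.bound
  rw [eventually_principal] at hC
  refine IsBigO.of_bound (∫ y in α..β, |U y| * (C * √y ^ p)) (eventually_principal.2 fun l hl => ?_)
  rw [← intervalIntegral.integral_mul_const]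
  refine intervalIntegral.norm_integral_le_of_norm_le hαβ (ae_of_all _ fun y hy => ?_) ?_
  · have hsqrt : 0 < √y := Real.sqrt_pos.2 (hα.trans hy.1)
    have hz : 0 < l * √y := mul_pos hl hsqrt
    calc ‖(U y : ℂ) * F (l * √y)‖ = |U y| * ‖F (l * √y)‖ := by simp
      _ ≤ |U y| * (C * ‖(l * √y) ^ p‖) := by gcongr; exact hC _ hz
      _ = |U y| * (C * √y ^ p) * ‖l ^ p‖ := by
        rw [Real.mul_rpow (le_of_lt hl) hsqrt.le, norm_mul,
          Real.norm_of_nonneg (Real.rpow_nonneg hsqrt.le p)]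
        ring
  · refine ContinuousOn.intervalIntegrable ?_
    rw [uIcc_of_le hαβ]
    have : ContinuousOn (fun y => √y ^ p) (Icc α β) := ContinuousOn.rpow_const (by fun_prop)
      fun y hy => Or.inl (Real.sqrt_pos.2 (hα.trans_le hy.1)).ne'
    fun_prop

theorem sqrt_pi_mul_mul_sqrt {l y : ℝ} (hl : 0 ≤ l) (hy : 0 ≤ y) :
    √(π * (l * √y)) = √(π * l) * y ^ (1 / 4 : ℝ) := by
  rw [← mul_assoc, Real.sqrt_mul (by positivity), Real.sqrt_eq_rpow √y, Real.sqrt_eq_rpow y,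
    ← Real.rpow_mul hy]
  norm_num

theorem intervalIntegrable_mul_cexp_mul_re_hankelLeading (m : ℕ) (hα : 0 < α) (hαβ : α ≤ β)
    (hU : Continuous U) {l : ℝ} (hl : 0 < l) :
    IntervalIntegrable (fun y => (U y : ℂ) *
      (cexp (I * (l * √y : ℝ)) * ((((-I) ^ m * hankelLeading (l * √y)).re : ℝ) : ℂ)))
      volume α β := by
  have hleading : ContinuousOn (fun y => hankelLeading (l * √y)) [[α, β]] := by
    rw [uIcc_of_le hαβ]
    refine ContinuousOn.div (by fun_prop) (by fun_prop) fun y hy => ofReal_ne_zero.2 ?_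
    have hy0 := hα.trans_le hy.1
    positivity
  exact ContinuousOn.intervalIntegrable (by fun_prop)

theorem integral_mul_cexp_mul_re_hankelLeading (m : ℕ) (hα : 0 < α) (hαβ : α ≤ β)
    (hU : Continuous U) {l : ℝ} (hl : 0 ≤ l) :
    ∫ y in α..β, (U y : ℂ) *
        (cexp (I * (l * √y : ℝ)) * ((((-I) ^ m * hankelLeading (l * √y)).re : ℝ) : ℂ)) =
      I ^ m * (1 + I) / (2 * √(π * l) : ℝ) * (∫ y in α..β, ((U y * y ^ (-(1 / 4) : ℝ) : ℝ) : ℂ)) +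
      (-I) ^ m * (1 - I) / (2 * √(π * l) : ℝ) *
        ∫ y in α..β, ((U y * y ^ (-(1 / 4) : ℝ) : ℝ) : ℂ) * cexp ((2 * l * √y : ℝ) * I) := by
  have hweight : ContinuousOn (fun y => ((U y * y ^ (-(1 / 4) : ℝ) : ℝ) : ℂ)) [[α, β]] := by
    rw [uIcc_of_le hαβ]
    exact continuous_ofReal.comp_continuousOn
      (hU.continuousOn.mul (continuousOn_rpow_const_Icc hα _))
  have hosc : ContinuousOn (fun y => ((U y * y ^ (-(1 / 4) : ℝ) : ℝ) : ℂ) *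
      cexp ((2 * l * √y : ℝ) * I)) [[α, β]] := hweight.mul (by fun_prop)
  rw [← intervalIntegral.integral_const_mul, ← intervalIntegral.integral_const_mul,
    ← intervalIntegral.integral_add (hweight.intervalIntegrable.const_mul _)
      (hosc.intervalIntegrable.const_mul _)]
  refine intervalIntegral.integral_congr fun y hy => ?_
  have hy0 : 0 ≤ y := (hα.trans_le (uIcc_of_le hαβ ▸ hy).1).le
  simp only [cexp_mul_re_hankelLeading, sqrt_pi_mul_mul_sqrt hl hy0, Real.rpow_neg hy0,
    ← mul_assoc (2 : ℝ) l]
  push_cast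
  ring

theorem isBigO_coeff_mul_integral_rpow_mul_cexp_two_mul_sqrt (m : ℕ) (hα : 0 < α) (hαβ : α ≤ β)
    (hU : ContDiff ℝ 1 U) :
    (fun l : ℝ => (-I) ^ m * (1 - I) / (2 * √(π * l) : ℝ) *
        ∫ y in α..β, ((U y * y ^ (-(1 / 4) : ℝ) : ℝ) : ℂ) * cexp ((2 * l * √y : ℝ) * I))
      =O[𝓟 (Ioi 0)] fun l => l ^ (-(3 / 2) : ℝ) := by
  have hcoeff : (fun l : ℝ => (-I) ^ m * (1 - I) / (2 * √(π * l) : ℝ))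
      =O[𝓟 (Ioi 0)] fun l => l ^ (-(1 / 2) : ℝ) := by
    refine IsBigO.of_bound (1 / 2) (eventually_principal.2 fun l (hl : 0 < l) => ?_)
    calc ‖(-I) ^ m * (1 - I) / (2 * √(π * l) : ℝ)‖ = 1 / 2 * ‖hankelLeading l‖ := by
          simp only [hankelLeading, norm_div, norm_mul, norm_pow, norm_neg, norm_I, one_pow,
            one_mul, mul_comm I, norm_exp_ofReal_mul_I, norm_real, Real.norm_ofNat]
          ring
      _ ≤ 1 / 2 * l ^ (-(1 / 2) : ℝ) := by gcongr; exact norm_hankelLeading_le hl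
      _ ≤ 1 / 2 * ‖l ^ (-(1 / 2) : ℝ)‖ := by gcongr; exact Real.le_norm_self _
  have hosc := (isBigO_integral_mul_rpow_mul_cexp_sqrt hα hαβ hU (-(1 / 4))).comp_tendsto
    (k := fun l => 2 * l) (tendsto_principal_principal.2 fun l (hl : 0 < l) => mul_pos two_pos hl)
  refine (hcoeff.mul hosc).trans
    (IsBigO.of_bound (1 / 2) (eventually_principal.2 fun l (hl : 0 < l) => le_of_eq ?_))
  rw [rpow_neg_three_halves hl, Real.rpow_neg hl.le, ← Real.sqrt_eq_rpow, Function.comp_apply,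
    ← mul_inv, norm_inv, one_div (l * √l), norm_inv, mul_left_comm, norm_mul, mul_inv, mul_comm √l]
  norm_num

theorem isBigO_integral_mul_cexp_mul_besselJ_sub (m : ℕ) (hα : 0 < α) (hαβ : α ≤ β)
    (hU : ContDiff ℝ 1 U) :
    (fun l : ℝ => (∫ y in α..β, (U y : ℂ) * (cexp (I * (l * √y : ℝ)) * besselJ m (l * √y))) -
        I ^ m * (1 + I) / (2 * √(π * l) : ℝ) * ∫ y in α..β, ((U y * y ^ (-(1 / 4) : ℝ) : ℝ) : ℂ))
      =O[𝓟 (Ioi 0)] fun l => l ^ (-(3 / 2) : ℝ) := by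
  have herror : (fun z : ℝ => cexp (I * z) *
      ((besselJ m z - ((-I) ^ m * hankelLeading z).re : ℝ) : ℂ))
        =O[𝓟 (Ioi 0)] fun z => z ^ (-(3 / 2) : ℝ) :=
    ((isBigO_besselJ_sub_re_hankelLeading m).norm_left.congr_left fun z => by
      rw [norm_mul, mul_comm I, norm_exp_ofReal_mul_I, one_mul, norm_real]).of_norm_left
  refine ((isBigO_integral_mul_comp_mul_sqrt hα hαβ hU.continuous herror).add
    (isBigO_coeff_mul_integral_rpow_mul_cexp_two_mul_sqrt m hα hαβ hU)).congr' ?_ EventuallyEq.rfl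
  refine eventually_principal.2 fun l (hl : 0 < l) => ?_
  have hU' := hU.continuous
  have hbessel : IntervalIntegrable
      (fun y => (U y : ℂ) * (cexp (I * (l * √y : ℝ)) * besselJ m (l * √y))) volume α β :=
    Continuous.intervalIntegrable (by fun_prop) _ _
  have hsplit := integral_mul_cexp_mul_re_hankelLeading m hα hαβ hU' hl.le
  have herror_integral := intervalIntegral.integral_sub hbessel
    (intervalIntegrable_mul_cexp_mul_re_hankelLeading m hα hαβ hU' hl)
  simp only [← mul_sub, ← ofReal_sub] at herror_integral
  beta_reduce
  rw [herror_integral, hsplit]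
  ring

end DiagonalIntegral

section Reduction

variable {U : ℝ → ℝ} {α β : ℝ}

theorem setIntegral_Ioi_zero_eq_intervalIntegral {E : Type*} [NormedAddCommGroup E]
    [NormedSpace ℝ E] {f : ℝ → E} (hα : 0 < α) (hαβ : α ≤ β)
    (hf : Function.support f ⊆ Icc α β) : ∫ y in Ioi 0, f y = ∫ y in α..β, f y := by
  rw [intervalIntegral.integral_of_le hαβ, ← integral_Icc_eq_integral_Ioc]
  exact setIntegral_eq_of_subset_of_forall_sdiff_eq_zero measurableSet_Ioi
    (fun y hy => hα.trans_le hy.1) fun y hy => Function.notMem_support.1 fun h => hy.2 (hf h)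

theorem mellinU_eq_intervalIntegral (hα : 0 < α) (hαβ : α ≤ β)
    (hsupp : Function.support U ⊆ Icc α β) (s : ℝ) :
    mellinU U s = ∫ y in α..β, U y * y ^ (s - 1) :=
  setIntegral_Ioi_zero_eq_intervalIntegral hα hαβ
    ((Function.support_mul_subset_left _ _).trans hsupp)

theorem Ik_succ_diagonal_eq_intervalIntegral (m : ℕ) (hα : 0 < α) (hαβ : α ≤ β)
    (hsupp : Function.support U ⊆ Icc α β) {a X : ℝ} (ha : 0 ≤ a) (hX : 0 < X) :
    Ik U (m + 1) a a X = X * ∫ y in α..β, (U y : ℂ) *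
      (cexp (I * (4 * π * √(a ^ 2 * X) * √y : ℝ)) * besselJ m (4 * π * √(a ^ 2 * X) * √y)) := by
  have hscale := integral_comp_mul_left_Ioi (fun x : ℝ => (U (x / X) : ℂ) * e (2 * a * √x) *
    (besselJ m (4 * π * a * √x) : ℂ)) 0 hX
  have hsupp' : Function.support (fun y => (U y : ℂ)) ⊆ Icc α β := by
    simpa [Function.support] using hsupp
  rw [← setIntegral_Ioi_zero_eq_intervalIntegral hα hαβ
    ((Function.support_mul_subset_left _ _).trans hsupp'), Ik, Nat.add_sub_cancel,
    ← inv_mul_eq_iff_eq_mul₀ (ofReal_ne_zero.2 hX.ne'), ← ofReal_inv, ← real_smul]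
  rw [mul_zero] at hscale
  rw [← hscale]
  refine setIntegral_congr_fun measurableSet_Ioi fun y _ => ?_
  have hsqrt : 4 * π * √(a ^ 2 * X) * √y = 4 * π * a * √(X * y) := by
    rw [Real.sqrt_mul (sq_nonneg a), Real.sqrt_sq ha, Real.sqrt_mul hX.le]
    ring
  have he : e (2 * a * √(X * y)) = cexp (I * (4 * π * a * √(X * y) : ℝ)) := by
    rw [e]
    push_cast
    ring_nf
  rw [mul_div_cancel_left₀ _ hX.ne', hsqrt, he, mul_assoc]

theorem exists_norm_integral_mul_cexp_mul_besselJ_sub_mellinU_le (m : ℕ) (hα : 0 < α)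
    (hαβ : α ≤ β) (hU : ContDiff ℝ 1 U) (hsupp : Function.support U ⊆ Icc α β) :
    ∃ C : ℝ, 0 < C ∧ ∀ R : ℝ, 0 < R →
      ‖(∫ y in α..β, (U y : ℂ) *
          (cexp (I * (4 * π * √R * √y : ℝ)) * besselJ m (4 * π * √R * √y))) -
        (1 + I) * I ^ m * mellinU U (3 / 4) / (4 * π * (R ^ (1 / 4 : ℝ) : ℝ))‖
      ≤ C / R ^ (3 / 4 : ℝ) := by
  obtain ⟨C, hC0, hC⟩ := (isBigO_integral_mul_cexp_mul_besselJ_sub m hα hαβ hU).exists_pos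
  refine ⟨C * (4 * π) ^ (-(3 / 2) : ℝ), by positivity, fun R hR => ?_⟩
  have hsqrt : 2 * √(π * (4 * π * √R)) = 4 * π * R ^ (1 / 4 : ℝ) := by
    rw [sqrt_pi_mul_mul_sqrt (by positivity) hR.le, show π * (4 * π) = (2 * π) ^ 2 by ring,
      Real.sqrt_sq (by positivity)]
    ring
  have hpow : (4 * π * √R) ^ (-(3 / 2) : ℝ) = (4 * π) ^ (-(3 / 2) : ℝ) / R ^ (3 / 4 : ℝ) := by
    rw [Real.mul_rpow (by positivity) (by positivity), Real.sqrt_eq_rpow, ← Real.rpow_mul hR.le,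
      div_eq_mul_inv _ (R ^ _), ← Real.rpow_neg hR.le]
    norm_num
  have hbound := eventually_principal.1 hC.bound (4 * π * √R) (mem_Ioi.2 (by positivity))
  rw [intervalIntegral.integral_ofReal, hsqrt, Real.norm_of_nonneg (by positivity), hpow,
    ← mul_div_assoc] at hbound
  rw [mellinU_eq_intervalIntegral hα hαβ hsupp, show (3 / 4 - 1 : ℝ) = -(1 / 4) by norm_num]
  convert hbound using 3
  push_cast
  ring

end Reduction

theorem stmt5_general {U : ℝ → ℝ} {α β : ℝ} (m : ℕ) (hα : 0 < α) (hαβ : α ≤ β)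
    (hU : ContDiff ℝ 1 U) (hsupp : Function.support U ⊆ Icc α β) :
    ∃ C : ℝ, 0 < C ∧ ∀ a X : ℝ, 0 < a → 0 < X →
      ‖Ik U (m + 1) a a X - (1 + I) * I ^ m * (mellinU U (3 / 4) : ℂ) * (X : ℂ) /
          (4 * (π : ℂ) * (((a ^ 2 * X) ^ ((1 : ℝ) / 4) : ℝ) : ℂ))‖
        ≤ C * X / (a ^ 2 * X) ^ ((3 : ℝ) / 4) := by
  obtain ⟨C, hC0, hC⟩ :=
    exists_norm_integral_mul_cexp_mul_besselJ_sub_mellinU_le m hα hαβ hU hsupp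
  refine ⟨C, hC0, fun a X ha hX => ?_⟩
  rw [Ik_succ_diagonal_eq_intervalIntegral m hα hαβ hsupp ha.le hX, mul_comm _ (X : ℂ),
    mul_div_assoc (X : ℂ), ← mul_sub, norm_mul, norm_real, Real.norm_of_nonneg hX.le, mul_comm C,
    mul_div_assoc X]
  exact mul_le_mul_of_nonneg_left (hC (a ^ 2 * X) (by positivity)) hX.le

end

/-- Asymptotic for the diagonal Bessel integral: for `k ≥ 1` and a fixed smooth
`U` supported in `[1,2]`, one has
`I_k(a,a;X) = (1+i) i^{k−1} Ũ(3/4) X / (4π (a²X)^{1/4}) + O(X/(a²X)^{3/4})`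
uniformly in `a > 0`, `X > 1` with `a²X > 1`. -/
theorem stmt5 (k : ℕ) (hk : 1 ≤ k) (U : ℝ → ℝ) (hU : ContDiff ℝ (⊤ : ℕ∞) U)
    (hsupp : Function.support U ⊆ Set.Icc 1 2) :
    ∃ C : ℝ, 0 < C ∧
      ∀ a X : ℝ, 0 < a → 1 < X → 1 < a ^ 2 * X →
        ‖Ik U k a a X -
            (1 + Complex.I) * Complex.I ^ (k - 1) * (mellinU U (3 / 4) : ℂ) * (X : ℂ) /
              (4 * (Real.pi : ℂ) * (((a ^ 2 * X) ^ ((1 : ℝ) / 4) : ℝ) : ℂ))‖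
          ≤ C * X / (a ^ 2 * X) ^ ((3 : ℝ) / 4) := by
  obtain ⟨C, hC, hbound⟩ := stmt5_general (k - 1) one_pos one_le_two (hU.of_le (by simp)) hsupp
  rw [Nat.sub_add_cancel hk] at hbound
  exact ⟨C, hC, fun a X ha hX _ => hbound a X ha (one_pos.trans hX)⟩
end
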